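/- arXiv:1809.07966 — 2 statements merged into one kernel-verified Lean document; each statement's English description precedes it below -/
import Mathlib

section
/- Consider the simple Curie–Weiss model at inverse temperature β=1, i.e., the general Curie–Weiss model CW(ρ) with ρ = ½δ₁ + ½δ₋₁ (δ the Dirac point mass). Let W = n^{1/4}·m(X), and let Y be a random variable with density f_Y(y) = (√2/(3^{1/4}·Γ(1/4)))·e^{−y⁴/12}. Then there is a constant C>0 such that |P(W ≥ z)/P(Y ≥ z) − 1| ≤ C·n^{−1/2}·(1+z⁶) uniformly for z ∈ (0, n^{1/12}). -/
open MeasureTheory Real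

/-- The Gibbs measure of the general Curie–Weiss model `CW(ρ)` at inverse
temperature `β = 1`. -/
noncomputable def cwMeasure (ρ : Measure ℝ) [IsProbabilityMeasure ρ] (n : ℕ) :
    Measure (Fin n → ℝ) :=
  (Measure.pi fun _ : Fin n => ρ).withDensity fun x =>
    ENNReal.ofReal (Real.exp ((∑ i, x i) ^ 2 / (2 * n)) /
      ∫ y : Fin n → ℝ, Real.exp ((∑ i, y i) ^ 2 / (2 * n))
        ∂(Measure.pi fun _ : Fin n => ρ))

/-- The Rademacher measure `ρ = ½δ₁ + ½δ₋₁`. -/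
noncomputable def simpleRho : Measure ℝ :=
  ((1 : ENNReal) / 2) • Measure.dirac (1 : ℝ) + ((1 : ENNReal) / 2) • Measure.dirac (-1 : ℝ)

instance : IsProbabilityMeasure simpleRho := by
  constructor
  simp [simpleRho]
  exact ENNReal.inv_two_add_inv_two

/-- Tail probability `P(Y ≥ z)` of the random variable `Y` with density
`f_Y(y) = (√2/(3^{1/4} Γ(1/4))) e^{−y⁴/12}`. -/
noncomputable def tailW412 (z : ℝ) : ℝ :=
  ∫ y in Set.Ici z,
    Real.sqrt 2 / ((3 : ℝ) ^ ((1 : ℝ) / 4) * Real.Gamma (1 / 4)) * Real.exp (-(y ^ 4) / 12)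


/-!
Given `k` spins `+1`, the Gibbs weight is `n.choose k * exp (s ^ 2 / (2 * n))` with `s = 2 * k - n`.
Flipping one more spin up changes its logarithm by `2 * t / n - log ((1 + x) / (1 - x))`, where
`t = s + 1` and `x = t / (n + 1)`. At the critical temperature the linear terms cancel, and summing
the cubic ones gives the log-weight `-w ^ 4 / 12`, up to an error `O((1 + w ^ 6) / √n)`, at
`w = s / n ^ (3 / 4)`. The tail sums of these weights are therefore Riemann sums for
`T z = ∫ y in Ioi z, exp (-y ^ 4 / 12)`. Integration by parts bounds the tail integral of
`(1 + y ^ 6) * exp (-y ^ 4 / 12)` by a multiple of `(1 + z ^ 6) * T z`, which makes the accumulated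
error relative to `T z`.
-/

namespace CurieWeiss

section RealInequalities

theorem abs_exp_sub_one_le_exp_mul_abs {x b : ℝ} (hb : 0 ≤ b) (hx : x ≤ b) :
    |exp x - 1| ≤ exp b * |x| := by
  rcases le_total 0 x with h0 | h0
  · have hsub : exp x - 1 ≤ exp x * x := by
      have : exp x * (1 - x) ≤ exp x * exp (-x) := by
        gcongr
        exact one_sub_le_exp_neg x
      rw [← exp_add, add_neg_cancel, exp_zero] at this
      linarith
    rw [abs_of_nonneg (sub_nonneg.2 (one_le_exp h0)), abs_of_nonneg h0]
    exact hsub.trans (by gcongr)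
  · rw [abs_of_nonpos (sub_nonpos.2 (exp_le_one_iff.2 h0)), abs_of_nonpos h0]
    nlinarith [add_one_le_exp x, one_le_exp hb]

theorem pow_sub_pow_le {a b : ℝ} (ha : 0 ≤ a) (hab : a ≤ b) (n : ℕ) :
    b ^ n - a ^ n ≤ (b - a) * n * b ^ (n - 1) := by
  have h := (le_abs_self _).trans (abs_pow_sub_pow_le b a n)
  rwa [abs_of_nonneg (sub_nonneg.2 hab), abs_of_nonneg (ha.trans hab), abs_of_nonneg ha,
    max_eq_left hab] at h

theorem pow_le_one_add_pow {x : ℝ} (hx : 0 ≤ x) {m n : ℕ} (hmn : m ≤ n) : x ^ m ≤ 1 + x ^ n := by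
  rcases le_total x 1 with h | h
  · linarith [pow_le_one₀ hx h (n := m), pow_nonneg hx n]
  · linarith [pow_le_pow_right₀ h hmn]

theorem one_add_pow_le (n : ℕ) {x : ℝ} (hx : 0 ≤ x) : (1 + x) ^ n ≤ 2 ^ n * (1 + x ^ n) := by
  rcases le_total x 1 with h | h
  · calc (1 + x) ^ n ≤ 2 ^ n := by gcongr; linarith
      _ ≤ 2 ^ n * (1 + x ^ n) := le_mul_of_one_le_right (by positivity) (by simp [pow_nonneg hx n])
  · calc (1 + x) ^ n ≤ (2 * x) ^ n := by gcongr; linarith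
      _ = 2 ^ n * x ^ n := mul_pow ..
      _ ≤ 2 ^ n * (1 + x ^ n) := by gcongr; linarith

theorem le_log_one_add_div_one_sub {x : ℝ} (h0 : 0 ≤ x) (h1 : x < 1) :
    2 * x + 2 / 3 * x ^ 3 ≤ log ((1 + x) / (1 - x)) := by
  have h := sum_range_le_log_div h0 h1 2
  norm_num [Finset.sum_range_succ] at h
  linarith

theorem log_one_add_div_one_sub_le {x : ℝ} (h0 : 0 ≤ x) (h1 : x ≤ 1 / 2) :
    log ((1 + x) / (1 - x)) ≤ 2 * x + 2 / 3 * x ^ 3 + 8 / 3 * x ^ 5 := by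
  have h := log_div_le_sum_range_add h0 (by linarith) 2
  have hgeom : x ^ 5 / (1 - x ^ 2) ≤ 4 / 3 * x ^ 5 := by
    calc x ^ 5 / (1 - x ^ 2) ≤ x ^ 5 / (3 / 4) := by gcongr; nlinarith
      _ = 4 / 3 * x ^ 5 := by ring
  norm_num [Finset.sum_range_succ] at h
  linarith

theorem abs_div_div_div_sub_one_le {u v U V a b c : ℝ} (hU : 0 < U) (hV : 0 < V) (hc : 0 < c)
    (hcv : c ≤ v) (hu : |u - U| ≤ a * U) (hv : |v - V| ≤ b) :
    |u / v / (U / V) - 1| ≤ (V * a + b) / c := by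
  have hv0 : 0 < v := hc.trans_le hcv
  have hnum : |V * (u - U) + U * (V - v)| ≤ (V * a + b) * U :=
    calc |V * (u - U) + U * (V - v)| ≤ |V * (u - U)| + |U * (V - v)| := abs_add_le _ _
      _ = V * |u - U| + U * |v - V| := by
          rw [abs_mul, abs_mul, abs_of_pos hV, abs_of_pos hU, abs_sub_comm V]
      _ ≤ V * (a * U) + U * b := by gcongr
      _ = (V * a + b) * U := by ring
  have hVab : 0 ≤ V * a + b := nonneg_of_mul_nonneg_left ((abs_nonneg _).trans hnum) hU
  calc |u / v / (U / V) - 1| = |V * (u - U) + U * (V - v)| / (v * U) := by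
        have : u / v / (U / V) - 1 = (V * (u - U) + U * (V - v)) / (v * U) := by
          field_simp
          ring
        rw [this, abs_div, abs_of_pos (mul_pos hv0 hU)]
    _ ≤ (V * a + b) * U / (v * U) := by gcongr
    _ = (V * a + b) / v := mul_div_mul_right _ _ hU.ne'
    _ ≤ (V * a + b) / c := by gcongr

end RealInequalities

section RiemannSum

theorem abs_sum_mul_sub_integral_le {w : ℕ → ℝ} {i j : ℕ} (hij : i ≤ j) (hw : Monotone w)
    {c : ℕ → ℝ} {f g : ℝ → ℝ} (hf : Continuous f) (hg : Continuous g)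
    (h : ∀ k ∈ Finset.Ico i j, ∀ y ∈ Set.Icc (w k) (w (k + 1)), |c k - f y| ≤ g y) :
    |∑ k ∈ Finset.Ico i j, (w (k + 1) - w k) * c k - ∫ y in (w i)..(w j), f y| ≤
      ∫ y in (w i)..(w j), g y := by
  rw [← intervalIntegral.sum_integral_adjacent_intervals_Ico hij
      fun k _ => hf.intervalIntegrable _ _,
    ← intervalIntegral.sum_integral_adjacent_intervals_Ico hij
      fun k _ => hg.intervalIntegrable _ _, ← Finset.sum_sub_distrib]
  refine (Finset.abs_sum_le_sum_abs _ _).trans (Finset.sum_le_sum fun k hk => ?_)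
  have hwk : w k ≤ w (k + 1) := hw k.le_succ
  calc |(w (k + 1) - w k) * c k - ∫ y in (w k)..(w (k + 1)), f y|
      = |∫ y in (w k)..(w (k + 1)), (c k - f y)| := by
        rw [intervalIntegral.integral_sub (by simp) (hf.intervalIntegrable _ _),
          intervalIntegral.integral_const, smul_eq_mul]
    _ ≤ ∫ y in (w k)..(w (k + 1)), |c k - f y| := intervalIntegral.abs_integral_le_integral_abs hwk
    _ ≤ ∫ y in (w k)..(w (k + 1)), g y :=
        intervalIntegral.integral_mono_on hwk
          ((continuous_const.sub hf).abs.intervalIntegrable _ _) (hg.intervalIntegrable _ _)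
          (h k hk)

end RiemannSum

section QuarticDensity

/-- The density of `Y`, up to its normalising constant. -/
noncomputable def quarticDensity (y : ℝ) : ℝ := exp (-(y ^ 4) / 12)

/-- The unnormalised tail of `Y`, so that `P(Y ≥ z) = quarticTail z / (2 * quarticTail 0)`. -/
noncomputable def quarticTail (z : ℝ) : ℝ := ∫ y in Set.Ioi z, quarticDensity y

/-- The tail integral of the weight `1 + y ^ 6`, which collects the local errors made in replacing
the law of the magnetization by the quartic density. -/
noncomputable def sexticTail (z : ℝ) : ℝ := ∫ y in Set.Ioi z, (1 + y ^ 6) * quarticDensity y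

theorem quarticDensity_pos (y : ℝ) : 0 < quarticDensity y := exp_pos _

@[fun_prop]
theorem continuous_quarticDensity : Continuous quarticDensity := by
  unfold quarticDensity
  fun_prop

theorem quarticDensity_antitoneOn : AntitoneOn quarticDensity (Set.Ici 0) := by
  intro a ha b _ hab
  have ha : 0 ≤ a := ha
  unfold quarticDensity
  gcongr

theorem hasDerivAt_quarticDensity (y : ℝ) :
    HasDerivAt quarticDensity (-(y ^ 3) / 3 * quarticDensity y) y := by
  refine ((hasDerivAt_pow 4 y).fun_neg.div_const 12).exp.congr_deriv ?_
  simp only [quarticDensity, Nat.cast_ofNat, Nat.add_one_sub_one]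
  ring

theorem integrableOn_pow_mul_quarticDensity (k : ℕ) {z : ℝ} (hz : 0 ≤ z) :
    IntegrableOn (fun y => y ^ k * quarticDensity y) (Set.Ioi z) := by
  have h := integrableOn_rpow_mul_exp_neg_mul_rpow (p := 4) (s := k) (b := 1 / 12)
    (neg_one_lt_zero.trans_le k.cast_nonneg) (by norm_num) (by norm_num)
  refine (h.mono_set (Set.Ioi_subset_Ioi hz)).congr_fun (fun y _ => ?_) measurableSet_Ioi
  simp only [quarticDensity, rpow_natCast, rpow_ofNat]
  ring_nf

theorem integrableOn_quarticDensity {z : ℝ} (hz : 0 ≤ z) :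
    IntegrableOn quarticDensity (Set.Ioi z) := by
  simpa using integrableOn_pow_mul_quarticDensity 0 hz

theorem integrableOn_one_add_pow_mul_quarticDensity (k : ℕ) {z : ℝ} (hz : 0 ≤ z) :
    IntegrableOn (fun y => (1 + y ^ k) * quarticDensity y) (Set.Ioi z) := by
  simp only [add_mul, one_mul]
  exact (integrableOn_quarticDensity hz).add (integrableOn_pow_mul_quarticDensity k hz)

theorem quarticTail_eq_intervalIntegral_add {a b : ℝ} (ha : 0 ≤ a) (hb : 0 ≤ b) :
    quarticTail a = (∫ y in a..b, quarticDensity y) + quarticTail b :=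
  (intervalIntegral.integral_interval_add_Ioi (integrableOn_quarticDensity ha)
    (integrableOn_quarticDensity hb)).symm

theorem quarticTail_nonneg (z : ℝ) : 0 ≤ quarticTail z :=
  integral_nonneg fun y => (quarticDensity_pos y).le

theorem mul_quarticDensity_le_intervalIntegral {a b : ℝ} (ha : 0 ≤ a) (hab : a ≤ b) :
    (b - a) * quarticDensity b ≤ ∫ y in a..b, quarticDensity y := by
  have h := intervalIntegral.integral_mono_on (μ := volume) (f := fun _ => quarticDensity b) hab
    intervalIntegrable_const (continuous_quarticDensity.intervalIntegrable a b) fun y hy =>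
      quarticDensity_antitoneOn (ha.trans hy.1) (ha.trans hab) hy.2
  simpa using h

theorem intervalIntegral_quarticDensity_le {a b : ℝ} (ha : 0 ≤ a) (hab : a ≤ b) :
    ∫ y in a..b, quarticDensity y ≤ (b - a) * quarticDensity a := by
  have h := intervalIntegral.integral_mono_on (μ := volume) (g := fun _ => quarticDensity a) hab
    (continuous_quarticDensity.intervalIntegrable a b) intervalIntegrable_const fun y hy =>
      quarticDensity_antitoneOn ha (ha.trans hy.1) hy.1
  simpa using h

-- The density loses at most a constant factor on `[z, z + (1 + z) ^ (-3)]`.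
theorem quarticDensity_le_mul_quarticTail {z : ℝ} (hz : 0 ≤ z) :
    quarticDensity z ≤ exp (1 / 3) * (1 + z) ^ 3 * quarticTail z := by
  set d := 1 / (1 + z) ^ 3 with hd
  have hd0 : 0 < d := by positivity
  have hd1 : d ≤ 1 := by
    rw [hd, div_le_one (by positivity)]
    exact one_le_pow₀ (by linarith)
  have htail : d * quarticDensity (z + d) ≤ quarticTail z := by
    have hint := mul_quarticDensity_le_intervalIntegral hz (b := z + d) (by linarith)
    rw [add_sub_cancel_left] at hint
    linarith [quarticTail_eq_intervalIntegral_add hz (add_nonneg hz hd0.le),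
      quarticTail_nonneg (z + d)]
  have hdensity : quarticDensity z ≤ exp (1 / 3) * quarticDensity (z + d) := by
    have hpow : (z + d) ^ 4 - z ^ 4 ≤ 4 :=
      calc (z + d) ^ 4 - z ^ 4 ≤ (z + d - z) * (4 : ℕ) * (z + d) ^ 3 :=
            pow_sub_pow_le hz (by linarith) 4
        _ ≤ (z + d - z) * (4 : ℕ) * (1 + z) ^ 3 := by
            rw [add_sub_cancel_left, add_comm 1 z]
            gcongr
        _ = 4 := by
            rw [hd]
            field_simp
            norm_num
    rw [quarticDensity, quarticDensity, ← exp_add, exp_le_exp]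
    linarith
  calc quarticDensity z ≤ exp (1 / 3) * ((1 + z) ^ 3 * (d * quarticDensity (z + d))) := by
        rwa [← mul_assoc ((1 + z) ^ 3), hd, mul_one_div_cancel (by positivity), one_mul]
    _ ≤ exp (1 / 3) * ((1 + z) ^ 3 * quarticTail z) := by gcongr
    _ = exp (1 / 3) * (1 + z) ^ 3 * quarticTail z := by ring

theorem quarticTail_pos {z : ℝ} (hz : 0 ≤ z) : 0 < quarticTail z :=
  pos_of_mul_pos_right ((quarticDensity_pos z).trans_le (quarticDensity_le_mul_quarticTail hz))
    (by positivity)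

theorem integrableOn_pow_sub_pow_mul_quarticDensity (k : ℕ) {z : ℝ} (hz : 0 ≤ z) :
    IntegrableOn (fun y => (y ^ (k + 4) - 3 * (k + 1) * y ^ k) * quarticDensity y)
      (Set.Ioi z) := by
  simp only [sub_mul, mul_assoc _ (_ ^ k)]
  exact (integrableOn_pow_mul_quarticDensity (k + 4) hz).sub
    ((integrableOn_pow_mul_quarticDensity k hz).const_mul (3 * (k + 1)))

theorem integral_pow_sub_pow_mul_quarticDensity (k : ℕ) {z : ℝ} (hz : 0 ≤ z) :
    ∫ y in Set.Ioi z, (y ^ (k + 4) - 3 * (k + 1) * y ^ k) * quarticDensity y =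
      3 * z ^ (k + 1) * quarticDensity z := by
  have hderiv (y : ℝ) : HasDerivAt (fun y => -3 * (y ^ (k + 1) * quarticDensity y))
      ((y ^ (k + 4) - 3 * (k + 1) * y ^ k) * quarticDensity y) y := by
    refine (((hasDerivAt_pow (k + 1) y).fun_mul (hasDerivAt_quarticDensity y)).const_mul
      (-3)).congr_deriv ?_
    push_cast [Nat.add_sub_cancel]
    ring
  have hint := integrableOn_pow_sub_pow_mul_quarticDensity k hz
  have hlim := tendsto_zero_of_hasDerivAt_of_integrableOn_Ioi (fun y _ => hderiv y) hint
    ((integrableOn_pow_mul_quarticDensity (k + 1) hz).const_mul (-3))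
  rw [integral_Ioi_of_hasDerivAt_of_tendsto' (fun y _ => hderiv y) hint hlim]
  ring

theorem pow_three_mul_quarticDensity_le {z : ℝ} (hz : 0 ≤ z) :
    z ^ 3 * quarticDensity z ≤ 16 * exp (1 / 3) * ((1 + z ^ 6) * quarticTail z) := by
  have hpow : z ^ 3 * (1 + z) ^ 3 ≤ 16 * (1 + z ^ 6) :=
    calc z ^ 3 * (1 + z) ^ 3 ≤ z ^ 3 * (2 ^ 3 * (1 + z ^ 3)) := by
          gcongr
          exact one_add_pow_le 3 hz
      _ ≤ 16 * (1 + z ^ 6) := by linarith [pow_le_one_add_pow hz (m := 3) (n := 6) (by norm_num)]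
  calc z ^ 3 * quarticDensity z ≤ z ^ 3 * (exp (1 / 3) * (1 + z) ^ 3 * quarticTail z) := by
        gcongr
        exact quarticDensity_le_mul_quarticTail hz
    _ = exp (1 / 3) * quarticTail z * (z ^ 3 * (1 + z) ^ 3) := by ring
    _ ≤ exp (1 / 3) * quarticTail z * (16 * (1 + z ^ 6)) := by
        gcongr
        exact mul_nonneg (exp_pos _).le (quarticTail_nonneg z)
    _ = 16 * exp (1 / 3) * ((1 + z ^ 6) * quarticTail z) := by ring

theorem exists_sexticTail_le : ∃ C : ℝ, 0 < C ∧ ∀ z : ℝ, 0 ≤ z →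
    sexticTail z ≤ C * ((1 + z ^ 6) * quarticTail z) := by
  refine ⟨55 + 96 * exp (1 / 3), by positivity, fun z hz => ?_⟩
  have hint := integrableOn_pow_sub_pow_mul_quarticDensity 2 hz
  have hint' := integrableOn_quarticDensity hz
  calc sexticTail z
      ≤ ∫ y in Set.Ioi z, (2 * ((y ^ (2 + 4) - 3 * ((2 : ℕ) + 1) * y ^ 2) * quarticDensity y)
          + 55 * quarticDensity y) := by
        refine setIntegral_mono_on (integrableOn_one_add_pow_mul_quarticDensity 6 hz)
          ((hint.const_mul 2).add (hint'.const_mul 55)) measurableSet_Ioi fun y _ => ?_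
        have hfactor : 0 ≤ (y ^ 2 + 6) * (y ^ 2 - 3) ^ 2 := by positivity
        have hpoly : 1 + y ^ 6 ≤ 2 * (y ^ 6 - 9 * y ^ 2) + 55 := by nlinarith
        have := mul_le_mul_of_nonneg_right hpoly (quarticDensity_pos y).le
        norm_num
        linarith
    _ = 2 * (3 * z ^ 3 * quarticDensity z) + 55 * quarticTail z := by
        rw [integral_add (hint.const_mul 2) (hint'.const_mul 55), integral_const_mul,
          integral_const_mul, integral_pow_sub_pow_mul_quarticDensity 2 hz, quarticTail]
    _ ≤ (55 + 96 * exp (1 / 3)) * ((1 + z ^ 6) * quarticTail z) := by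
        have : 0 ≤ z ^ 6 * quarticTail z := mul_nonneg (by positivity) (quarticTail_nonneg z)
        linarith [pow_three_mul_quarticDensity_le hz]

theorem sexticTail_antitoneOn : AntitoneOn sexticTail (Set.Ici 0) := fun _ ha _ _ hab =>
  setIntegral_mono_set (integrableOn_one_add_pow_mul_quarticDensity 6 ha)
    (.of_forall fun y => mul_nonneg (by positivity) (quarticDensity_pos y).le)
    (Set.Ioi_subset_Ioi hab).eventuallyLE

theorem intervalIntegral_one_add_pow_mul_quarticDensity_le {a b : ℝ} (ha : 0 ≤ a) (hab : a ≤ b) :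
    ∫ y in a..b, (1 + y ^ 6) * quarticDensity y ≤ sexticTail a := by
  rw [intervalIntegral.integral_of_le hab]
  exact setIntegral_mono_set (integrableOn_one_add_pow_mul_quarticDensity 6 ha)
    (.of_forall fun y => mul_nonneg (by positivity) (quarticDensity_pos y).le)
    Set.Ioc_subset_Ioi_self.eventuallyLE

theorem sq_mul_quarticTail_le_sexticTail {r z : ℝ} (hr : 0 ≤ r) (hrz : r ≤ z) :
    r ^ 2 * quarticTail z ≤ sexticTail z := by
  rw [quarticTail, ← integral_const_mul]
  refine setIntegral_mono_on ((integrableOn_quarticDensity (hr.trans hrz)).const_mul _)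
    (integrableOn_one_add_pow_mul_quarticDensity 6 (hr.trans hrz)) measurableSet_Ioi
    fun y hy => mul_le_mul_of_nonneg_right ?_ (quarticDensity_pos y).le
  have hry : r ≤ y := hrz.trans (le_of_lt hy)
  calc r ^ 2 ≤ y ^ 2 := by gcongr
    _ ≤ 1 + y ^ 6 := pow_le_one_add_pow (hr.trans hry) (by norm_num)

theorem quarticTail_zero : quarticTail 0 = (12 : ℝ) ^ ((1 : ℝ) / 4) * Gamma (1 / 4) / 4 := by
  have h := integral_exp_neg_mul_rpow (p := 4) (b := 1 / 12) (by norm_num) (by norm_num)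
  have hexp (x : ℝ) : exp (-(1 / 12) * x ^ (4 : ℝ)) = quarticDensity x := by
    rw [quarticDensity, rpow_ofNat]
    ring_nf
  simp only [hexp] at h
  rw [quarticTail, h, Gamma_add_one (by norm_num), one_div 12, inv_rpow (by norm_num),
    ← rpow_neg (by norm_num)]
  norm_num
  ring

theorem tailW412_eq (z : ℝ) : tailW412 z = quarticTail z / (2 * quarticTail 0) := by
  have h12 : (12 : ℝ) ^ ((1 : ℝ) / 4) = √2 * 3 ^ ((1 : ℝ) / 4) := by
    rw [show (12 : ℝ) = 2 ^ (2 : ℝ) * 3 by norm_num, mul_rpow (by positivity) (by norm_num),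
      ← rpow_mul (by norm_num), sqrt_eq_rpow]
    norm_num
  have hnorm : √2 / ((3 : ℝ) ^ ((1 : ℝ) / 4) * Gamma (1 / 4)) = 1 / (2 * quarticTail 0) := by
    rw [quarticTail_zero, h12, div_eq_div_iff (by positivity) (by positivity)]
    linear_combination (3 : ℝ) ^ ((1 : ℝ) / 4) * Gamma (1 / 4) / 2 *
      mul_self_sqrt (zero_le_two (α := ℝ))
  rw [tailW412, integral_Ici_eq_integral_Ioi, integral_const_mul, hnorm, one_div_mul_eq_div]
  rfl

end QuarticDensity

section Increments

/-- The increase of the logarithm of `plusWeight N` when one more spin is flipped up, as a function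
of the average `t` of the total spins before and after the flip. -/
noncomputable def logWeightIncrement (N t : ℝ) : ℝ :=
  2 * t / N - log ((1 + t / (N + 1)) / (1 - t / (N + 1)))

variable {N t : ℝ}

theorem logWeightIncrement_le (hN : 1 ≤ N) (ht : 0 ≤ t) (htN : t ≤ N) :
    logWeightIncrement N t ≤ (-(t + 1) ^ 4 / (12 * N ^ 3) + 2 * (t + 1) ^ 2 / N ^ 2) -
      (-(t - 1) ^ 4 / (12 * N ^ 3) + 2 * (t - 1) ^ 2 / N ^ 2) := by
  have hN0 : 0 < N := by linarith
  have hlog := le_log_one_add_div_one_sub (x := t / (N + 1)) (by positivity)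
    ((div_lt_one (by positivity)).2 (by linarith))
  have hx : t / (N + 1) ≤ t / N := by gcongr; linarith
  have hone : t / N ≤ 1 := (div_le_one hN0).2 htN
  have hlinear : t / N - t / (N + 1) ≤ t / N ^ 2 := by
    rw [show t / N - t / (N + 1) = t / (N * (N + 1)) by field_simp; ring]
    gcongr
    nlinarith
  have hcubic : (t / N) ^ 3 - (t / (N + 1)) ^ 3 ≤ 3 * (t / N ^ 2) :=
    calc (t / N) ^ 3 - (t / (N + 1)) ^ 3
        ≤ (t / N - t / (N + 1)) * (3 : ℕ) * (t / N) ^ 2 :=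
          pow_sub_pow_le (by positivity) hx 3
      _ ≤ t / N ^ 2 * (3 : ℕ) * 1 ^ 2 := by gcongr
      _ = 3 * (t / N ^ 2) := by norm_num; ring
  have hremainder : t / N ^ 3 ≤ t / N ^ 2 := by gcongr; norm_num
  have : 0 ≤ t / N ^ 2 := by positivity
  calc logWeightIncrement N t
      ≤ 2 * (t / N - t / (N + 1)) - 2 / 3 * (t / (N + 1)) ^ 3 := by
        rw [logWeightIncrement, mul_div_assoc]
        linarith
    _ ≤ -(2 / 3) * (t / N) ^ 3 - 2 / 3 * (t / N ^ 3) + 8 * (t / N ^ 2) := by linarith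
    _ = _ := by field_simp; ring

theorem le_logWeightIncrement (hN : 1 ≤ N) (ht : 0 ≤ t) (htN : 2 * t ≤ N) :
    (-(t + 1) ^ 4 / (12 * N ^ 3) - (t + 1) ^ 6 / N ^ 5) -
      (-(t - 1) ^ 4 / (12 * N ^ 3) - (t - 1) ^ 6 / N ^ 5) ≤ logWeightIncrement N t := by
  have : 0 < N := by linarith
  have hlog := log_one_add_div_one_sub_le (x := t / (N + 1)) (by positivity)
    ((div_le_div_iff₀ (by positivity) two_pos).2 (by linarith))
  have hx : t / (N + 1) ≤ t / N := by gcongr; linarith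
  have hcubic : (t / (N + 1)) ^ 3 ≤ (t / N) ^ 3 := by gcongr
  have hquintic : (t / (N + 1)) ^ 5 ≤ (t / N) ^ 5 := by gcongr
  have hremainder : 0 ≤ 2 / 3 * (t / N ^ 3) + (40 * t ^ 3 + 12 * t) / N ^ 5 := by positivity
  have : 0 ≤ (t / N) ^ 5 := by positivity
  calc (-(t + 1) ^ 4 / (12 * N ^ 3) - (t + 1) ^ 6 / N ^ 5) -
        (-(t - 1) ^ 4 / (12 * N ^ 3) - (t - 1) ^ 6 / N ^ 5)
      = -(2 / 3) * (t / N) ^ 3 - 12 * (t / N) ^ 5 -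
          (2 / 3 * (t / N ^ 3) + (40 * t ^ 3 + 12 * t) / N ^ 5) := by field_simp; ring
    _ ≤ logWeightIncrement N t := by
        rw [logWeightIncrement, mul_div_assoc]
        linarith

end Increments

section PlusWeight

/-- The sum of `n` spins `±1` of which `k` are `+1`. -/
def totalSpin (n k : ℕ) : ℝ := 2 * k - n

/-- The Gibbs weight, not normalised, of the configurations of `n` spins with `k` spins `+1`. -/
noncomputable def plusWeight (n k : ℕ) : ℝ :=
  n.choose k * exp (totalSpin n k ^ 2 / (2 * n))

/-- The least number of spins `+1` for which the total spin is nonnegative. -/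
def centralCount (n : ℕ) : ℕ := (n + 1) / 2

/-- The Gibbs weight relative to that of the most balanced configurations. -/
noncomputable def relWeight (n k : ℕ) : ℝ := plusWeight n k / plusWeight n (centralCount n)

/-- The value of `W` at total spin `totalSpin n k`, when `r = n ^ (1 / 4)`. -/
noncomputable def scaledSpin (r : ℝ) (n k : ℕ) : ℝ := totalSpin n k / r ^ 3

variable {n k : ℕ}

theorem totalSpin_succ (n k : ℕ) : totalSpin n (k + 1) = totalSpin n k + 2 := by
  simp only [totalSpin, Nat.cast_succ]
  ring

theorem totalSpin_sub (hk : k ≤ n) : totalSpin n (n - k) = -totalSpin n k := by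
  simp only [totalSpin, Nat.cast_sub hk]
  ring

theorem totalSpin_nonneg_iff : 0 ≤ totalSpin n k ↔ n ≤ 2 * k := by
  rw [totalSpin, sub_nonneg]
  exact_mod_cast Iff.rfl

theorem totalSpin_le (hk : k ≤ n) : totalSpin n k ≤ n := by
  have : (k : ℝ) ≤ n := by exact_mod_cast hk
  rw [totalSpin]
  linarith

theorem centralCount_le_iff : centralCount n ≤ k ↔ n ≤ 2 * k := by
  unfold centralCount
  omega

theorem centralCount_le_self (n : ℕ) : centralCount n ≤ n := by
  rw [centralCount_le_iff]
  omega

theorem totalSpin_nonneg (hk : centralCount n ≤ k) : 0 ≤ totalSpin n k :=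
  totalSpin_nonneg_iff.2 (centralCount_le_iff.1 hk)

theorem totalSpin_centralCount_le_one (n : ℕ) : totalSpin n (centralCount n) ≤ 1 := by
  have h : 2 * centralCount n ≤ n + 1 := by
    unfold centralCount
    omega
  have h : 2 * (centralCount n : ℝ) ≤ n + 1 := by exact_mod_cast h
  rw [totalSpin]
  linarith

theorem plusWeight_pos (hk : k ≤ n) : 0 < plusWeight n k :=
  mul_pos (by exact_mod_cast Nat.choose_pos hk) (exp_pos _)

theorem plusWeight_symm (hk : k ≤ n) : plusWeight n (n - k) = plusWeight n k := by
  rw [plusWeight, plusWeight, totalSpin_sub hk, Nat.choose_symm hk, neg_sq]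

theorem plusWeight_succ (hk : k < n) :
    plusWeight n (k + 1) =
      plusWeight n k * exp (logWeightIncrement n (totalSpin n k + 1)) := by
  have hn : (0 : ℝ) < n := by exact_mod_cast k.zero_le.trans_lt hk
  have hkn : (k : ℝ) < n := by exact_mod_cast hk
  have hchoose : (n.choose (k + 1) : ℝ) * (k + 1) = n.choose k * (n - k) := by
    rw [← Nat.cast_sub hk.le]
    exact_mod_cast Nat.choose_succ_right_eq n k
  have hratio : (1 + (totalSpin n k + 1) / (n + 1)) / (1 - (totalSpin n k + 1) / (n + 1)) =
      (k + 1) / (n - k) := by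
    rw [totalSpin, one_add_div (by positivity), one_sub_div (by positivity),
      div_div_div_cancel_right₀ (by positivity),
      show (n : ℝ) + 1 + (2 * k - n + 1) = 2 * (k + 1) by ring,
      show (n : ℝ) + 1 - (2 * k - n + 1) = 2 * (n - k) by ring, mul_div_mul_left _ _ two_ne_zero]
  have hexp : totalSpin n (k + 1) ^ 2 / (2 * n) =
      totalSpin n k ^ 2 / (2 * n) + 2 * (totalSpin n k + 1) / n := by
    rw [totalSpin_succ]
    field_simp
    ring
  rw [plusWeight, plusWeight, logWeightIncrement, hratio, exp_sub,
    exp_log (div_pos (by positivity) (sub_pos.2 hkn)), hexp, exp_add,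
    eq_div_of_mul_eq (by positivity) hchoose]
  have : (n : ℝ) - k ≠ 0 := (sub_pos.2 hkn).ne'
  field_simp

theorem relWeight_pos (hk : k ≤ n) : 0 < relWeight n k :=
  div_pos (plusWeight_pos hk) (plusWeight_pos (centralCount_le_self n))

theorem relWeight_centralCount (n : ℕ) : relWeight n (centralCount n) = 1 :=
  div_self (plusWeight_pos (centralCount_le_self n)).ne'

theorem log_relWeight_succ (hk : k < n) :
    log (relWeight n (k + 1)) =
      log (relWeight n k) + logWeightIncrement n (totalSpin n k + 1) := by
  rw [relWeight, plusWeight_succ hk, mul_div_right_comm, ← relWeight,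
    log_mul (relWeight_pos hk.le).ne' (exp_ne_zero _), log_exp]

theorem log_relWeight_le (hn : 1 ≤ n) (hk : centralCount n ≤ k) (hkn : k ≤ n) :
    log (relWeight n k) ≤ -totalSpin n k ^ 4 / (12 * n ^ 3) + 2 * totalSpin n k ^ 2 / n ^ 2 := by
  have hN : (1 : ℝ) ≤ n := by exact_mod_cast hn
  induction k, hk using Nat.le_induction with
  | base =>
    set s := totalSpin n (centralCount n)
    have hs : s ^ 2 ≤ 1 :=
      pow_le_one₀ (totalSpin_nonneg le_rfl) (totalSpin_centralCount_le_one n)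
    have hfactor : -s ^ 4 / (12 * (n : ℝ) ^ 3) + 2 * s ^ 2 / n ^ 2 =
        s ^ 2 * (24 * n - s ^ 2) / (12 * n ^ 3) := by
      field_simp
      ring
    rw [relWeight_centralCount, log_one, hfactor]
    exact div_nonneg (mul_nonneg (sq_nonneg s) (by linarith)) (by positivity)
  | succ k hk ih =>
    have hspin := totalSpin_nonneg hk
    have hmax := totalSpin_le hkn
    rw [totalSpin_succ] at hmax
    have hstep := logWeightIncrement_le (t := totalSpin n k + 1) hN (by linarith) (by linarith)
    rw [add_sub_cancel_right, add_assoc, one_add_one_eq_two] at hstep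
    rw [log_relWeight_succ hkn, totalSpin_succ]
    linarith [ih (Nat.le_of_succ_le hkn)]

theorem le_log_relWeight (hn : 1 ≤ n) (hk : centralCount n ≤ k) (hkn : 2 * totalSpin n k ≤ n) :
    -totalSpin n k ^ 4 / (12 * n ^ 3) - totalSpin n k ^ 6 / n ^ 5 ≤ log (relWeight n k) := by
  have hN : (1 : ℝ) ≤ n := by exact_mod_cast hn
  induction k, hk using Nat.le_induction with
  | base =>
    rw [relWeight_centralCount, log_one, neg_div]
    have : 0 ≤ totalSpin n (centralCount n) ^ 4 / (12 * (n : ℝ) ^ 3) := by positivity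
    have : 0 ≤ totalSpin n (centralCount n) ^ 6 / (n : ℝ) ^ 5 := by
      have := totalSpin_nonneg (le_refl (centralCount n))
      positivity
    linarith
  | succ k hk ih =>
    have hspin := totalSpin_nonneg hk
    rw [totalSpin_succ] at hkn ⊢
    have hlt : k < n := by
      rw [totalSpin] at hkn
      have : (k : ℝ) < n := by linarith
      exact_mod_cast this
    have hstep := le_logWeightIncrement (t := totalSpin n k + 1) hN (by linarith) (by linarith)
    rw [add_sub_cancel_right, add_assoc, one_add_one_eq_two] at hstep
    rw [log_relWeight_succ hlt]
    linarith [ih (by linarith)]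

end PlusWeight

section LocalError

variable {r w y D : ℝ}

theorem add_pow_four_div_le (hr : 1 ≤ r) (hw : 0 ≤ w) (hwy : w ≤ y) (hyw : y ≤ w + 2 / r ^ 3)
    (hD : D ≤ -w ^ 4 / 12 + 2 * (w / r) ^ 2) :
    D + y ^ 4 / 12 ≤ 2 / 3 * (y / r) ^ 3 + 2 * (y / r) ^ 2 := by
  have hy : 0 ≤ y := hw.trans hwy
  have hquartic : y ^ 4 - w ^ 4 ≤ 8 * (y / r) ^ 3 :=
    calc y ^ 4 - w ^ 4 ≤ (y - w) * (4 : ℕ) * y ^ 3 := pow_sub_pow_le hw hwy 4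
      _ ≤ 2 / r ^ 3 * (4 : ℕ) * y ^ 3 := by gcongr; linarith
      _ = 8 * (y / r) ^ 3 := by norm_num; ring
  have : (w / r) ^ 2 ≤ (y / r) ^ 2 := by gcongr
  linarith

theorem div_sq_le_one_add_pow_div (hy : 0 ≤ y) : (y / r) ^ 2 ≤ (1 + y ^ 6) / r ^ 2 := by
  rw [div_pow]
  gcongr
  exact pow_le_one_add_pow hy (by norm_num)

theorem div_pow_three_le_one_add_pow_div (hr : 1 ≤ r) (hy : 0 ≤ y) :
    (y / r) ^ 3 ≤ (1 + y ^ 6) / r ^ 2 := by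
  rw [div_pow]
  gcongr
  · exact pow_le_one_add_pow hy (by norm_num)
  · norm_num

theorem abs_add_pow_four_div_le (hr : 1 ≤ r) (hw : 0 ≤ w) (hwy : w ≤ y) (hyw : y ≤ w + 2 / r ^ 3)
    (hD : D ≤ -w ^ 4 / 12 + 2 * (w / r) ^ 2) (hD' : -w ^ 4 / 12 - w ^ 6 / r ^ 2 ≤ D) :
    |D + y ^ 4 / 12| ≤ 3 * ((1 + y ^ 6) / r ^ 2) := by
  have hy : 0 ≤ y := hw.trans hwy
  have hbound : 0 ≤ (1 + y ^ 6) / r ^ 2 := by positivity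
  rw [abs_le]
  constructor
  · have : w ^ 4 ≤ y ^ 4 := by gcongr
    have : w ^ 6 / r ^ 2 ≤ (1 + y ^ 6) / r ^ 2 := by
      gcongr
      linarith [pow_le_pow_left₀ hw hwy 6]
    linarith
  · linarith [add_pow_four_div_le hr hw hwy hyw hD, div_sq_le_one_add_pow_div (r := r) hy,
      div_pow_three_le_one_add_pow_div hr hy]

theorem add_pow_four_div_le_const (hr : 1 ≤ r) (hw : 0 ≤ w) (hwr : w ≤ r) (hwy : w ≤ y)
    (hyw : y ≤ w + 2 / r ^ 3) (hD : D ≤ -w ^ 4 / 12 + 2 * (w / r) ^ 2) :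
    D + y ^ 4 / 12 ≤ 36 := by
  have hy : 0 ≤ y / r := div_nonneg (hw.trans hwy) (by linarith)
  have hyr : y / r ≤ 3 := by
    rw [div_le_iff₀ (by linarith)]
    linarith [div_le_self zero_le_two (one_le_pow₀ hr (n := 3))]
  have : (y / r) ^ 3 ≤ 3 ^ 3 := by gcongr
  have : (y / r) ^ 2 ≤ 3 ^ 2 := by gcongr
  linarith [add_pow_four_div_le hr hw hwy hyw hD]

-- Far from the origin, `r ≤ 2 * w`, the claimed bound exceeds a constant.
theorem abs_exp_add_pow_four_div_sub_one_le (hr : 1 ≤ r) (hw : 0 ≤ w) (hwr : w ≤ r) (hwy : w ≤ y)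
    (hyw : y ≤ w + 2 / r ^ 3) (hD : D ≤ -w ^ 4 / 12 + 2 * (w / r) ^ 2)
    (hD' : 2 * w ≤ r → -w ^ 4 / 12 - w ^ 6 / r ^ 2 ≤ D) :
    |exp (D + y ^ 4 / 12) - 1| ≤ 64 * exp 36 / r ^ 2 * (1 + y ^ 6) := by
  have hconst := add_pow_four_div_le_const hr hw hwr hwy hyw hD
  have : 0 ≤ y ^ 6 := by positivity
  rcases le_or_gt (2 * w) r with hcentral | hfar
  · have habs := abs_add_pow_four_div_le hr hw hwy hyw hD (hD' hcentral)
    calc |exp (D + y ^ 4 / 12) - 1| ≤ exp 36 * |D + y ^ 4 / 12| :=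
          abs_exp_sub_one_le_exp_mul_abs (by norm_num) hconst
      _ ≤ exp 36 * (64 * ((1 + y ^ 6) / r ^ 2)) := by
          have : 0 ≤ (1 + y ^ 6) / r ^ 2 := by positivity
          gcongr
          linarith
      _ = 64 * exp 36 / r ^ 2 * (1 + y ^ 6) := by ring
  · have hr2 : r ^ 2 ≤ 64 * (1 + y ^ 6) :=
      calc r ^ 2 ≤ r ^ 6 := pow_le_pow_right₀ hr (by norm_num)
        _ = 64 * (r / 2) ^ 6 := by ring
        _ ≤ 64 * y ^ 6 := by gcongr; linarith
        _ ≤ 64 * (1 + y ^ 6) := by linarith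
    have hexp : exp (D + y ^ 4 / 12) ≤ exp 36 := exp_le_exp.2 hconst
    have hone : (1 : ℝ) ≤ exp 36 := one_le_exp (by norm_num)
    calc |exp (D + y ^ 4 / 12) - 1| ≤ exp 36 := by
          rw [abs_le]
          constructor <;> linarith [exp_pos (D + y ^ 4 / 12)]
      _ = exp 36 / r ^ 2 * r ^ 2 := by field_simp
      _ ≤ exp 36 / r ^ 2 * (64 * (1 + y ^ 6)) := by gcongr
      _ = 64 * exp 36 / r ^ 2 * (1 + y ^ 6) := by ring

variable {n k : ℕ}

theorem scaledSpin_le (hr : 0 < r) (hrn : r ^ 4 = n) (hkn : k ≤ n) : scaledSpin r n k ≤ r := by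
  rw [scaledSpin, div_le_iff₀ (by positivity), ← pow_succ', hrn]
  exact totalSpin_le hkn

theorem one_le_of_pow_four_eq (hr : 1 ≤ r) (hrn : r ^ 4 = n) : 1 ≤ n := by
  have : (1 : ℝ) ≤ n := hrn ▸ one_le_pow₀ hr
  exact_mod_cast this

theorem log_relWeight_le_scaledSpin (hr : 1 ≤ r) (hrn : r ^ 4 = n) (hk : centralCount n ≤ k)
    (hkn : k ≤ n) :
    log (relWeight n k) ≤ -scaledSpin r n k ^ 4 / 12 + 2 * (scaledSpin r n k / r) ^ 2 := by
  have : 0 < r := by linarith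
  refine (log_relWeight_le (one_le_of_pow_four_eq hr hrn) hk hkn).trans_eq ?_
  rw [← hrn, scaledSpin]
  field_simp

theorem scaledSpin_le_log_relWeight (hr : 1 ≤ r) (hrn : r ^ 4 = n) (hk : centralCount n ≤ k)
    (hkr : 2 * scaledSpin r n k ≤ r) :
    -scaledSpin r n k ^ 4 / 12 - scaledSpin r n k ^ 6 / r ^ 2 ≤ log (relWeight n k) := by
  have hr0 : 0 < r := by linarith
  have hkn : 2 * totalSpin n k ≤ n := by
    rwa [scaledSpin, mul_div_assoc', div_le_iff₀ (by positivity), ← pow_succ', hrn] at hkr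
  refine Eq.trans_le ?_ (le_log_relWeight (one_le_of_pow_four_eq hr hrn) hk hkn)
  rw [← hrn, scaledSpin]
  field_simp

theorem abs_relWeight_sub_quarticDensity_le (hr : 1 ≤ r) (hrn : r ^ 4 = n)
    (hk : centralCount n ≤ k) (hkn : k ≤ n)
    (hy : y ∈ Set.Icc (scaledSpin r n k) (scaledSpin r n k + 2 / r ^ 3)) :
    |relWeight n k - quarticDensity y| ≤
      64 * exp 36 / r ^ 2 * ((1 + y ^ 6) * quarticDensity y) := by
  have hr0 : 0 < r := by linarith
  have hw : 0 ≤ scaledSpin r n k := div_nonneg (totalSpin_nonneg hk) (by positivity)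
  have hfactor : relWeight n k - quarticDensity y =
      (exp (log (relWeight n k) + y ^ 4 / 12) - 1) * quarticDensity y := by
    rw [sub_mul, one_mul, quarticDensity, ← exp_add, neg_div, add_neg_cancel_right,
      exp_log (relWeight_pos hkn)]
  rw [hfactor, abs_mul, abs_of_pos (quarticDensity_pos y), ← mul_assoc]
  refine mul_le_mul_of_nonneg_right ?_ (quarticDensity_pos y).le
  exact abs_exp_add_pow_four_div_sub_one_le hr hw (scaledSpin_le hr0 hrn hkn) hy.1 hy.2
    (log_relWeight_le_scaledSpin hr hrn hk hkn) (scaledSpin_le_log_relWeight hr hrn hk)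

end LocalError

section RiemannSums

/-- The Riemann sum for `quarticTail z` formed with the relative weights in place of the quartic
density; consecutive nodes `scaledSpin r n k` are `2 / r ^ 3` apart. -/
noncomputable def tailRiemannSum (r : ℝ) (n : ℕ) (z : ℝ) : ℝ :=
  2 / r ^ 3 * ∑ k ∈ Finset.range (n + 1) with z ≤ scaledSpin r n k, relWeight n k

/-- The Riemann sum of `tailRiemannSum`, taken over all nodes. -/
noncomputable def totalRiemannSum (r : ℝ) (n : ℕ) : ℝ :=
  2 / r ^ 3 * ∑ k ∈ Finset.range (n + 1), relWeight n k

/-- The least number of spins `+1` for which `W` is at least `z ≥ 0`. -/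
noncomputable def tailCount (r : ℝ) (n : ℕ) (z : ℝ) : ℕ := ⌈(z * r ^ 3 + n) / 2⌉₊

variable {r z : ℝ} {n k : ℕ}

theorem scaledSpin_succ (r : ℝ) (n k : ℕ) :
    scaledSpin r n (k + 1) = scaledSpin r n k + 2 / r ^ 3 := by
  rw [scaledSpin, totalSpin_succ, add_div, scaledSpin]

theorem scaledSpin_monotone (hr : 0 ≤ r) (n : ℕ) : Monotone (scaledSpin r n) := by
  refine monotone_nat_of_le_succ fun k => ?_
  rw [scaledSpin_succ, le_add_iff_nonneg_right]
  positivity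

theorem scaledSpin_self (hr : 0 < r) (hrn : r ^ 4 = n) : scaledSpin r n n = r := by
  rw [scaledSpin, totalSpin, ← hrn]
  field_simp
  norm_num

theorem tailCount_le_iff (hr : 0 < r) : tailCount r n z ≤ k ↔ z ≤ scaledSpin r n k := by
  rw [tailCount, Nat.ceil_le, scaledSpin, totalSpin, div_le_iff₀ two_pos,
    le_div_iff₀ (by positivity), le_sub_iff_add_le, mul_comm 2]

theorem tailCount_zero (hr : 0 < r) (n : ℕ) : tailCount r n 0 = centralCount n :=
  eq_of_forall_ge_iff fun k => by
    rw [tailCount_le_iff hr, scaledSpin, le_div_iff₀ (by positivity), zero_mul,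
      totalSpin_nonneg_iff, centralCount_le_iff]

theorem centralCount_le_tailCount (hr : 0 < r) (hz : 0 ≤ z) :
    centralCount n ≤ tailCount r n z := by
  rw [← tailCount_zero hr, tailCount_le_iff hr]
  exact hz.trans ((tailCount_le_iff hr).1 le_rfl)

theorem scaledSpin_tailCount_le (hr : 0 < r) (hz : 0 ≤ z) :
    scaledSpin r n (tailCount r n z) ≤ z + 2 / r ^ 3 := by
  have hceil : (tailCount r n z : ℝ) < (z * r ^ 3 + n) / 2 + 1 :=
    Nat.ceil_lt_add_one (by positivity)
  rw [scaledSpin, totalSpin, div_le_iff₀ (by positivity), add_mul,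
    div_mul_cancel₀ _ (by positivity)]
  linarith

theorem tailRiemannSum_eq_sum_Ico (hr : 0 < r) :
    tailRiemannSum r n z =
      2 / r ^ 3 * ∑ k ∈ Finset.Ico (tailCount r n z) (n + 1), relWeight n k := by
  rw [tailRiemannSum]
  congr 2
  ext k
  simp only [Finset.mem_filter, Finset.mem_range, Finset.mem_Ico, tailCount_le_iff hr, and_comm]

theorem abs_tailRiemannSum_sub_integral_le (hr : 1 ≤ r) (hrn : r ^ 4 = n) (hz : 0 ≤ z)
    (hzr : z ≤ r) :
    |tailRiemannSum r n z -
      ∫ y in (scaledSpin r n (tailCount r n z))..(scaledSpin r n (n + 1)), quarticDensity y| ≤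
      64 * exp 36 / r ^ 2 * sexticTail z := by
  have hr0 : 0 < r := by linarith
  have hcount : tailCount r n z ≤ n + 1 :=
    ((tailCount_le_iff hr0).2 (hzr.trans_eq (scaledSpin_self hr0 hrn).symm)).trans n.le_succ
  have hmono := scaledSpin_monotone hr0.le n
  have hstart : z ≤ scaledSpin r n (tailCount r n z) := (tailCount_le_iff hr0).1 le_rfl
  have hsum : tailRiemannSum r n z = ∑ k ∈ Finset.Ico (tailCount r n z) (n + 1),
      (scaledSpin r n (k + 1) - scaledSpin r n k) * relWeight n k := by
    simp only [tailRiemannSum_eq_sum_Ico hr0, Finset.mul_sum, scaledSpin_succ,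
      add_sub_cancel_left]
  rw [hsum]
  calc |(∑ k ∈ Finset.Ico (tailCount r n z) (n + 1),
          (scaledSpin r n (k + 1) - scaledSpin r n k) * relWeight n k) -
        ∫ y in (scaledSpin r n (tailCount r n z))..(scaledSpin r n (n + 1)), quarticDensity y|
      ≤ ∫ y in (scaledSpin r n (tailCount r n z))..(scaledSpin r n (n + 1)),
          64 * exp 36 / r ^ 2 * ((1 + y ^ 6) * quarticDensity y) := by
        refine abs_sum_mul_sub_integral_le hcount hmono (by fun_prop) (by fun_prop)
          fun k hk y hy => ?_
        rw [Finset.mem_Ico] at hk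
        rw [scaledSpin_succ] at hy
        exact abs_relWeight_sub_quarticDensity_le hr hrn
          ((centralCount_le_tailCount hr0 hz).trans hk.1) (Nat.lt_succ_iff.1 hk.2) hy
    _ ≤ 64 * exp 36 / r ^ 2 * sexticTail z := by
        rw [intervalIntegral.integral_const_mul]
        gcongr
        exact (intervalIntegral_one_add_pow_mul_quarticDensity_le (hz.trans hstart)
          (hmono hcount)).trans (sexticTail_antitoneOn hz (hz.trans hstart) hstart)

theorem intervalIntegral_quarticDensity_le_of_le_add {A : ℝ} (hr : 1 ≤ r) (hz : 0 ≤ z)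
    (hzA : z ≤ A) (hA : A ≤ z + 2 / r ^ 3) :
    ∫ y in z..A, quarticDensity y ≤
      32 * exp (1 / 3) / r ^ 2 * ((1 + z ^ 6) * quarticTail z) := by
  have : 0 < r := by linarith
  have hcube : (1 + z) ^ 3 ≤ 16 * (1 + z ^ 6) := by
    linarith [one_add_pow_le 3 hz, pow_le_one_add_pow hz (m := 3) (n := 6) (by norm_num),
      pow_nonneg hz 6]
  calc ∫ y in z..A, quarticDensity y ≤ (A - z) * quarticDensity z :=
        intervalIntegral_quarticDensity_le hz hzA
    _ ≤ 2 / r ^ 2 * (exp (1 / 3) * (16 * (1 + z ^ 6)) * quarticTail z) := by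
        have hmesh : A - z ≤ 2 / r ^ 2 :=
          (sub_le_iff_le_add'.2 hA).trans (by gcongr; norm_num)
        have hdensity : quarticDensity z ≤ exp (1 / 3) * (16 * (1 + z ^ 6)) * quarticTail z :=
          (quarticDensity_le_mul_quarticTail hz).trans (by gcongr; exact quarticTail_nonneg z)
        exact mul_le_mul hmesh hdensity (quarticDensity_pos z).le (by positivity)
    _ = 32 * exp (1 / 3) / r ^ 2 * ((1 + z ^ 6) * quarticTail z) := by ring

theorem abs_tailRiemannSum_sub_quarticTail_le_of_le (hr : 1 ≤ r) (hrn : r ^ 4 = n) (hz : 0 ≤ z)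
    (hzr : z ≤ r) :
    |tailRiemannSum r n z - quarticTail z| ≤ (64 * exp 36 + 1) / r ^ 2 * sexticTail z +
      32 * exp (1 / 3) / r ^ 2 * ((1 + z ^ 6) * quarticTail z) := by
  have hr0 : 0 < r := by linarith
  have hsum := abs_tailRiemannSum_sub_integral_le hr hrn hz hzr
  set A := scaledSpin r n (tailCount r n z)
  set B := scaledSpin r n (n + 1)
  have hzA : z ≤ A := (tailCount_le_iff hr0).1 le_rfl
  have hrB : r ≤ B :=
    (scaledSpin_self hr0 hrn).symm.trans_le (scaledSpin_monotone hr0.le n n.le_succ)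
  have hzB : z ≤ B := hzr.trans hrB
  have hsplit : quarticTail z =
      (∫ y in z..A, quarticDensity y) + (∫ y in A..B, quarticDensity y) + quarticTail B := by
    rw [quarticTail_eq_intervalIntegral_add hz (hz.trans hzA),
      quarticTail_eq_intervalIntegral_add (hz.trans hzA) (hz.trans hzB), add_assoc]
  have hstart := intervalIntegral_quarticDensity_le_of_le_add hr hz hzA
    (scaledSpin_tailCount_le hr0 hz)
  have hstart_nonneg : 0 ≤ ∫ y in z..A, quarticDensity y :=
    intervalIntegral.integral_nonneg hzA fun y _ => (quarticDensity_pos y).le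
  have hend : quarticTail B ≤ sexticTail z / r ^ 2 := by
    rw [le_div_iff₀' (by positivity)]
    exact (sq_mul_quarticTail_le_sexticTail hr0.le hrB).trans
      (sexticTail_antitoneOn hz (hz.trans hzB) hzB)
  have hend_nonneg := quarticTail_nonneg B
  rw [add_div, add_mul, one_div_mul_eq_div]
  rw [abs_le] at hsum ⊢
  constructor <;> linarith [hsum.1, hsum.2]

theorem abs_tailRiemannSum_sub_quarticTail_le_of_lt (hr : 0 < r) (hrn : r ^ 4 = n) (hrz : r < z) :
    |tailRiemannSum r n z - quarticTail z| ≤ sexticTail z / r ^ 2 := by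
  have hcount : n < tailCount r n z := by
    rwa [← not_le, tailCount_le_iff hr, scaledSpin_self hr hrn, not_le]
  rw [tailRiemannSum_eq_sum_Ico hr, Finset.Ico_eq_empty (by omega), Finset.sum_empty, mul_zero,
    zero_sub, abs_neg, abs_of_nonneg (quarticTail_nonneg z), le_div_iff₀' (by positivity)]
  exact sq_mul_quarticTail_le_sexticTail hr.le hrz.le

theorem exists_abs_tailRiemannSum_sub_quarticTail_le :
    ∃ C : ℝ, 0 < C ∧ ∀ (n : ℕ) (r z : ℝ), 1 ≤ r → r ^ 4 = n → 0 ≤ z →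
      |tailRiemannSum r n z - quarticTail z| ≤ C / r ^ 2 * (1 + z ^ 6) * quarticTail z := by
  obtain ⟨M, hM, hmoment⟩ := exists_sexticTail_le
  refine ⟨(64 * exp 36 + 1) * M + 32 * exp (1 / 3), by positivity, fun n r z hr hrn hz => ?_⟩
  have htail := quarticTail_nonneg z
  have hsextic : 0 ≤ sexticTail z :=
    le_trans (by positivity) (sq_mul_quarticTail_le_sexticTail le_rfl hz)
  calc |tailRiemannSum r n z - quarticTail z|
      ≤ (64 * exp 36 + 1) / r ^ 2 * sexticTail z +
          32 * exp (1 / 3) / r ^ 2 * ((1 + z ^ 6) * quarticTail z) := by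
        rcases le_or_gt z r with hzr | hrz
        · exact abs_tailRiemannSum_sub_quarticTail_le_of_le hr hrn hz hzr
        · refine (abs_tailRiemannSum_sub_quarticTail_le_of_lt (by linarith) hrn hrz).trans ?_
          rw [add_div, add_mul, one_div_mul_eq_div, add_comm (_ * _) (_ / _), add_assoc,
            le_add_iff_nonneg_right]
          positivity
    _ ≤ (64 * exp 36 + 1) / r ^ 2 * (M * ((1 + z ^ 6) * quarticTail z)) +
          32 * exp (1 / 3) / r ^ 2 * ((1 + z ^ 6) * quarticTail z) := by
        gcongr
        exact hmoment z hz
    _ = _ := by ring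

theorem relWeight_symm (hk : k ≤ n) : relWeight n (n - k) = relWeight n k := by
  rw [relWeight, relWeight, plusWeight_symm hk]

theorem sum_Ico_zero_centralCount (n : ℕ) :
    ∑ k ∈ Finset.Ico 0 (centralCount n), relWeight n k =
      ∑ k ∈ Finset.Ico (n + 1 - centralCount n) (n + 1), relWeight n k := by
  have hle : centralCount n ≤ n + 1 := (centralCount_le_self n).trans n.le_succ
  refine Eq.trans ?_ (Finset.sum_Ico_reflect (relWeight n) 0 hle)
  refine Finset.sum_congr rfl fun k hk => (relWeight_symm ?_).symm
  exact ((Finset.mem_Ico.1 hk).2.trans_le (centralCount_le_self n)).le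

-- Reflection maps the negative total spins onto the positive ones, so that only the total spin `0`
-- is counted twice in the two half sums.
theorem abs_sum_relWeight_sub_le (n : ℕ) :
    |∑ k ∈ Finset.range (n + 1), relWeight n k -
      2 * ∑ k ∈ Finset.Ico (centralCount n) (n + 1), relWeight n k| ≤ 1 := by
  have hlt : centralCount n < n + 1 := Nat.lt_succ_of_le (centralCount_le_self n)
  rw [Finset.range_eq_Ico, ← Finset.sum_Ico_consecutive _ (Nat.zero_le _) hlt.le,
    sum_Ico_zero_centralCount]
  rcases Nat.even_or_odd' n with ⟨m, hm | hm⟩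
  · have hreflect : n + 1 - centralCount n = centralCount n + 1 := by
      unfold centralCount
      omega
    rw [Finset.sum_eq_sum_Ico_succ_bot hlt, relWeight_centralCount, hreflect, abs_le]
    constructor <;> linarith
  · have hreflect : n + 1 - centralCount n = centralCount n := by
      unfold centralCount
      omega
    rw [hreflect, ← two_mul, sub_self, abs_zero]
    exact zero_le_one

theorem abs_totalRiemannSum_sub_le (hr : 0 < r) (n : ℕ) :
    |totalRiemannSum r n - 2 * tailRiemannSum r n 0| ≤ 2 / r ^ 3 := by
  rw [totalRiemannSum, tailRiemannSum_eq_sum_Ico hr, tailCount_zero hr, mul_left_comm, ← mul_sub,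
    abs_mul, abs_of_nonneg (by positivity)]
  exact mul_le_of_le_one_right (by positivity) (abs_sum_relWeight_sub_le n)

theorem le_totalRiemannSum (hr : 0 ≤ r) (n : ℕ) : 2 / r ^ 3 ≤ totalRiemannSum r n := by
  refine le_mul_of_one_le_right (by positivity) ?_
  rw [← relWeight_centralCount n]
  exact Finset.single_le_sum
    (fun k hk => (relWeight_pos (Nat.lt_succ_iff.1 (Finset.mem_range.1 hk))).le)
    (Finset.mem_range.2 (Nat.lt_succ_of_le (centralCount_le_self n)))

theorem exists_abs_totalRiemannSum_sub_quarticTail_le :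
    ∃ C : ℝ, 0 < C ∧ ∀ (n : ℕ) (r : ℝ), 1 ≤ r → r ^ 4 = n →
      |totalRiemannSum r n - 2 * quarticTail 0| ≤ C / r ^ 2 := by
  obtain ⟨C, hC, htail⟩ := exists_abs_tailRiemannSum_sub_quarticTail_le
  have hpos := quarticTail_pos le_rfl
  refine ⟨2 + 2 * (C * quarticTail 0), by positivity, fun n r hr hrn => ?_⟩
  have hr0 : 0 < r := by linarith
  have hmesh : 2 / r ^ 3 ≤ 2 / r ^ 2 := by gcongr; norm_num
  have hhalf := htail n r 0 hr hrn le_rfl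
  have hsymm := abs_totalRiemannSum_sub_le hr0 n
  rw [zero_pow (by norm_num), add_zero, mul_one, div_mul_eq_mul_div] at hhalf
  rw [add_div, mul_div_assoc]
  rw [abs_le] at hhalf hsymm ⊢
  constructor <;> linarith [hhalf.1, hhalf.2, hsymm.1, hsymm.2]

theorem exists_le_totalRiemannSum :
    ∃ c : ℝ, 0 < c ∧ ∀ (n : ℕ) (r : ℝ), 1 ≤ r → r ^ 4 = n → c ≤ totalRiemannSum r n := by
  obtain ⟨C, hC, htotal⟩ := exists_abs_totalRiemannSum_sub_quarticTail_le
  have hpos := quarticTail_pos le_rfl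
  set R := C / quarticTail 0 + 1
  refine ⟨min (quarticTail 0) (2 / R ^ 3), by positivity, fun n r hr hrn => ?_⟩
  rcases le_total R r with hRr | hrR
  · have herror : C / r ^ 2 ≤ quarticTail 0 := by
      rw [div_le_comm₀ (by positivity) hpos]
      calc C / quarticTail 0 ≤ r := by linarith
        _ ≤ r ^ 2 := le_self_pow₀ hr two_ne_zero
    exact (min_le_left _ _).trans (by linarith [(abs_le.1 (htotal n r hr hrn)).1])
  · refine (min_le_right _ _).trans (le_trans ?_ (le_totalRiemannSum (by linarith) n))
    gcongr

theorem exists_abs_tailRiemannSum_div_sub_one_le :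
    ∃ C : ℝ, 0 < C ∧ ∀ (n : ℕ) (r z : ℝ), 1 ≤ r → r ^ 4 = n → 0 ≤ z →
      |tailRiemannSum r n z / totalRiemannSum r n / tailW412 z - 1| ≤ C / r ^ 2 * (1 + z ^ 6) := by
  obtain ⟨C, hC, htail⟩ := exists_abs_tailRiemannSum_sub_quarticTail_le
  obtain ⟨D, hD, htotal⟩ := exists_abs_totalRiemannSum_sub_quarticTail_le
  obtain ⟨c, hc, hlower⟩ := exists_le_totalRiemannSum
  have hpos := quarticTail_pos le_rfl
  refine ⟨(2 * quarticTail 0 * C + D) / c, by positivity, fun n r z hr hrn hz => ?_⟩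
  have hD' : D / r ^ 2 ≤ D / r ^ 2 * (1 + z ^ 6) :=
    le_mul_of_one_le_right (by positivity) (le_add_of_nonneg_right (by positivity))
  rw [tailW412_eq]
  calc _ ≤ (2 * quarticTail 0 * (C / r ^ 2 * (1 + z ^ 6)) + D / r ^ 2 * (1 + z ^ 6)) / c :=
        abs_div_div_div_sub_one_le (quarticTail_pos hz) (by positivity) hc (hlower n r hr hrn)
          (htail n r z hr hrn hz) ((htotal n r hr hrn).trans hD')
    _ = (2 * quarticTail 0 * C + D) / c / r ^ 2 * (1 + z ^ 6) := by ring

end RiemannSums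

section SpinSum

theorem lintegral_pi_sum {M : Type*} [AddCommMonoid M] [MeasurableSpace M] [MeasurableAdd₂ M]
    {ρ : Measure M} [SigmaFinite ρ] {p q : ENNReal} {a b : M}
    (hρ : ρ = p • Measure.dirac a + q • Measure.dirac b) (n : ℕ) {f : M → ENNReal}
    (hf : Measurable f) :
    ∫⁻ x : Fin n → M, f (∑ i, x i) ∂Measure.pi (fun _ => ρ) =
      ∑ k ∈ Finset.range (n + 1),
        n.choose k * (p ^ k * q ^ (n - k) * f (k • a + (n - k) • b)) := by
  induction n generalizing f with
  | zero => simp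
  | succ n ih =>
    have hsplit : ∫⁻ x : Fin (n + 1) → M, f (∑ i, x i) ∂Measure.pi (fun _ => ρ) =
        ∫⁻ s, ∫⁻ x : Fin n → M, f (s + ∑ i, x i) ∂Measure.pi (fun _ => ρ) ∂ρ := by
      rw [← lintegral_prod (fun y : M × (Fin n → M) => f (y.1 + ∑ i, y.2 i)) (by fun_prop),
        ← (measurePreserving_piFinSuccAbove (fun _ : Fin (n + 1) => ρ) 0).lintegral_comp
          (by fun_prop)]
      exact lintegral_congr fun x => congrArg f (Fin.sum_univ_succ x)
    have hcond (s : M) : ∫⁻ x : Fin n → M, f (s + ∑ i, x i) ∂Measure.pi (fun _ => ρ) =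
        ∑ k ∈ Finset.range (n + 1),
          n.choose k * (p ^ k * q ^ (n - k) * f (s + (k • a + (n - k) • b))) :=
      ih (by fun_prop : Measurable fun t => f (s + t))
    rw [hsplit, lintegral_congr hcond]
    conv_lhs => rw [hρ]
    rw [lintegral_add_measure, lintegral_smul_measure, lintegral_smul_measure,
      lintegral_dirac' _ (by fun_prop), lintegral_dirac' _ (by fun_prop),
      Finset.sum_choose_succ_mul (fun k l => p ^ k * q ^ l * f (k • a + l • b)) n, add_comm,
      smul_eq_mul, smul_eq_mul, Finset.mul_sum, Finset.mul_sum]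
    congr 1
    · refine Finset.sum_congr rfl fun k hk => ?_
      rw [Nat.succ_sub (Nat.lt_succ_iff.1 (Finset.mem_range.1 hk)), succ_nsmul' b, pow_succ',
        add_left_comm b]
      ring
    · refine Finset.sum_congr rfl fun k _ => ?_
      rw [succ_nsmul', pow_succ', add_assoc]
      ring

theorem lintegral_sum_simpleRho (n : ℕ) {f : ℝ → ENNReal} (hf : Measurable f) :
    ∫⁻ x : Fin n → ℝ, f (∑ i, x i) ∂Measure.pi (fun _ => simpleRho) =
      (1 / 2) ^ n * ∑ k ∈ Finset.range (n + 1), n.choose k * f (totalSpin n k) := by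
  rw [lintegral_pi_sum (ρ := simpleRho) rfl n hf, Finset.mul_sum]
  refine Finset.sum_congr rfl fun k hk => ?_
  have hkn : k ≤ n := Nat.lt_succ_iff.1 (Finset.mem_range.1 hk)
  have hspin : k • (1 : ℝ) + (n - k) • (-1 : ℝ) = totalSpin n k := by
    rw [nsmul_eq_mul, nsmul_eq_mul, Nat.cast_sub hkn, totalSpin]
    ring
  rw [hspin, ← pow_add, Nat.add_sub_cancel' hkn, mul_left_comm]

theorem integral_sum_simpleRho (n : ℕ) {f : ℝ → ℝ} (hf : Measurable f) (hf0 : ∀ s, 0 ≤ f s) :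
    ∫ x : Fin n → ℝ, f (∑ i, x i) ∂Measure.pi (fun _ => simpleRho) =
      (1 / 2) ^ n * ∑ k ∈ Finset.range (n + 1), n.choose k * f (totalSpin n k) := by
  rw [integral_eq_lintegral_of_nonneg_ae (.of_forall fun x => hf0 _)
      (Measurable.aestronglyMeasurable (by fun_prop)),
    lintegral_sum_simpleRho n (f := fun s => ENNReal.ofReal (f s)) (by fun_prop),
    ENNReal.toReal_mul, ENNReal.toReal_sum fun k _ => by finiteness]
  simp only [ENNReal.toReal_mul, ENNReal.toReal_ofReal (hf0 _), ENNReal.toReal_natCast,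
    ENNReal.toReal_pow, one_div, ENNReal.toReal_inv, ENNReal.toReal_ofNat]

theorem integral_exp_sum_sq_simpleRho (n : ℕ) :
    ∫ x : Fin n → ℝ, exp ((∑ i, x i) ^ 2 / (2 * n)) ∂Measure.pi (fun _ => simpleRho) =
      (1 / 2) ^ n * ∑ k ∈ Finset.range (n + 1), plusWeight n k :=
  integral_sum_simpleRho n (f := fun s => exp (s ^ 2 / (2 * n))) (by fun_prop)
    fun s => (exp_pos _).le

open Classical in
theorem cwMeasure_simpleRho_sum_mem (n : ℕ) {A : Set ℝ} (hA : MeasurableSet A) :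
    (cwMeasure simpleRho n {x | ∑ i, x i ∈ A}).toReal =
      (∑ k ∈ Finset.range (n + 1) with totalSpin n k ∈ A, plusWeight n k) /
        ∑ k ∈ Finset.range (n + 1), plusWeight n k := by
  have hA' : MeasurableSet {x : Fin n → ℝ | ∑ i, x i ∈ A} :=
    (by fun_prop : Measurable fun x : Fin n → ℝ => ∑ i, x i) hA
  set S := ∑ k ∈ Finset.range (n + 1), plusWeight n k
  have hS : 0 ≤ S := Finset.sum_nonneg fun k hk =>
    (plusWeight_pos (Nat.lt_succ_iff.1 (Finset.mem_range.1 hk))).le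
  let density (s : ℝ) : ℝ := exp (s ^ 2 / (2 * n)) / ((1 / 2) ^ n * S)
  have hdensity (s : ℝ) : 0 ≤ density s := by positivity
  have hmeas : Measurable density := by fun_prop
  calc (cwMeasure simpleRho n {x | ∑ i, x i ∈ A}).toReal
      = (∫⁻ x in {x : Fin n → ℝ | ∑ i, x i ∈ A}, ENNReal.ofReal (density (∑ i, x i))
          ∂Measure.pi (fun _ => simpleRho)).toReal := by
        rw [cwMeasure, withDensity_apply _ hA', integral_exp_sum_sq_simpleRho]
    _ = ∫ x in {x : Fin n → ℝ | ∑ i, x i ∈ A}, density (∑ i, x i)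
          ∂Measure.pi (fun _ => simpleRho) :=
        (integral_eq_lintegral_of_nonneg_ae (.of_forall fun x => hdensity _)
          (Measurable.aestronglyMeasurable (by fun_prop))).symm
    _ = ∫ x : Fin n → ℝ, A.indicator density (∑ i, x i) ∂Measure.pi (fun _ => simpleRho) := by
        rw [← integral_indicator hA']
        rfl
    _ = (1 / 2) ^ n *
          ∑ k ∈ Finset.range (n + 1), n.choose k * A.indicator density (totalSpin n k) :=
        integral_sum_simpleRho n (hmeas.indicator hA)
          fun s => Set.indicator_nonneg (fun s _ => hdensity s) s
    _ = (∑ k ∈ Finset.range (n + 1) with totalSpin n k ∈ A, plusWeight n k) / S := by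
        rw [Finset.mul_sum, Finset.sum_filter, Finset.sum_div]
        refine Finset.sum_congr rfl fun k _ => ?_
        rw [Set.indicator_apply]
        split_ifs
        · simp only [density, plusWeight]
          field_simp
        · simp

theorem cwMeasure_simpleRho_eq_tailRiemannSum_div {r : ℝ} {n : ℕ} (hr : 0 < r) (hrn : r ^ 4 = n)
    (z : ℝ) :
    (cwMeasure simpleRho n {x | z ≤ r * ((∑ i, x i) / n)}).toReal =
      tailRiemannSum r n z / totalRiemannSum r n := by
  have hset : {x : Fin n → ℝ | z ≤ r * ((∑ i, x i) / n)} =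
      {x | ∑ i, x i ∈ {s : ℝ | z ≤ s / r ^ 3}} := by
    ext x
    rw [Set.mem_ofPred_eq, ← hrn, mul_div_assoc', pow_succ', mul_div_mul_left _ _ hr.ne']
    rfl
  have hcentral := plusWeight_pos (centralCount_le_self n)
  rw [hset, cwMeasure_simpleRho_sum_mem n (measurableSet_le (by fun_prop) (by fun_prop)),
    tailRiemannSum, totalRiemannSum, mul_div_mul_left _ _ (by positivity)]
  simp only [relWeight, ← Finset.sum_div]
  rw [div_div_div_cancel_right₀ hcentral.ne']
  simp only [Set.mem_ofPred_eq, scaledSpin]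
  congr

end SpinSum

end CurieWeiss

theorem stmt_4_general :
    ∃ C : ℝ, 0 < C ∧ ∀ n : ℕ, 1 ≤ n → ∀ z : ℝ, 0 ≤ z →
      |(cwMeasure simpleRho n
            {x | z ≤ (n : ℝ) ^ ((1 : ℝ) / 4) * ((∑ i, x i) / n)}).toReal
          / tailW412 z - 1|
        ≤ C * (n : ℝ) ^ (-(1 : ℝ) / 2) * (1 + z ^ 6) := by
  obtain ⟨C, hC, hbound⟩ := CurieWeiss.exists_abs_tailRiemannSum_div_sub_one_le
  refine ⟨C, hC, fun n hn z hz => ?_⟩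
  have hr : 1 ≤ (n : ℝ) ^ ((1 : ℝ) / 4) := one_le_rpow (by exact_mod_cast hn) (by norm_num)
  have hrn : ((n : ℝ) ^ ((1 : ℝ) / 4)) ^ 4 = n := by
    rw [← rpow_mul_natCast n.cast_nonneg]
    norm_num
  have hr2 : (n : ℝ) ^ (-(1 : ℝ) / 2) = (((n : ℝ) ^ ((1 : ℝ) / 4)) ^ 2)⁻¹ := by
    rw [← rpow_mul_natCast n.cast_nonneg, ← rpow_neg n.cast_nonneg]
    norm_num
  rw [CurieWeiss.cwMeasure_simpleRho_eq_tailRiemannSum_div (by linarith) hrn, hr2,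
    ← div_eq_mul_inv]
  exact hbound n _ z hr hrn hz

theorem stmt_4 :
    ∃ C : ℝ, 0 < C ∧ ∀ n : ℕ, 1 ≤ n → ∀ z : ℝ, 0 < z → z < (n : ℝ) ^ ((1 : ℝ) / 12) →
      |(cwMeasure simpleRho n
            {x | z ≤ (n : ℝ) ^ ((1 : ℝ) / 4) * ((∑ i, x i) / n)}).toReal
          / tailW412 z - 1|
        ≤ C * (n : ℝ) ^ (-(1 : ℝ) / 2) * (1 + z ^ 6) := by
  obtain ⟨C, hC, hbound⟩ := stmt_4_general
  exact ⟨C, hC, fun n hn z hz _ => hbound n hn z hz.le⟩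
end

section
/- Consider the general Curie–Weiss model CW(ρ) at inverse temperature β=1, where ρ is a symmetric probability measure on ℝ with ∫x²dρ(x)=1, ρ([−L,L])=1 for some finite L, the function h(s)=s²/2 − log∫e^{sx}dρ(x) has s=0 as the unique root of h'(s)=0, and there is k≥2 with h^{(i)}(0)=0 for 0≤i≤2k−1 and h^{(2k)}(0)>0. Let W = n^{1/(2k)}·m(X) and let Y have density p(y) = c₁·exp(−h^{(2k)}(0)·y^{2k}/(2k)!). Then there is a constant C>0 depending only on ρ such that sup_{z∈ℝ} |P(W ≤ z) − P(Y ≤ z)| ≤ C·n^{−1/k}. -/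
open MeasureTheory Real

/-- `h(s) = s²/2 − log ∫ e^{sx} dρ(x)`. -/
noncomputable def hfun (ρ : Measure ℝ) (s : ℝ) : ℝ :=
  s ^ 2 / 2 - Real.log (∫ x, Real.exp (s * x) ∂ρ)

/-!
By the Hubbard–Stratonovich transformation the Gibbs measure is a mixture: a field `s` is drawn
with density proportional to `e^{-n h(s)}`, and given `s` the spins are independent of law `ρ`
tilted by `s`. A Stein inequality for sums of independent variables, tested on a truncated linear
function and integrated over the field, replaces the magnetization by the field at relative cost
of order `n^{-1/k}`. At the scale `n^{-1/(2k)}` of the field, Taylor's theorem turns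
`n h(n^{-1/(2k)} y)` into a multiple of `y^{2k}`, with an error of the same order because the
derivative of order `2k + 1` vanishes by symmetry.
-/

namespace CurieWeiss

open ProbabilityTheory Set Filter Topology

section SteinInequality

/-- The concave truncation `t ↦ (t - c) ∧ 0`, the test function of Stein's method: its
supergradient is the indicator of `t ≤ c`, so it turns covariances into distribution functions. -/
def ramp (c t : ℝ) : ℝ := min (t - c) 0

/-- `Φ` is a supergradient of the (concave) function `G` at every point. -/
def IsSupergradient (G Φ : ℝ → ℝ) : Prop := ∀ x y, G x ≤ G y + Φ y * (x - y)

/-- The upper one-sided second moment `E[((x - Y)⁺)²]` of `ν` seen from `x`. -/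
noncomputable def upperSq (ν : Measure ℝ) (x : ℝ) : ℝ := ∫ y, max (x - y) 0 ^ 2 ∂ν

/-- The lower one-sided second moment `E[((Y - x)⁺)²]` of `ν` seen from `x`. -/
noncomputable def lowerSq (ν : Measure ℝ) (x : ℝ) : ℝ := ∫ y, max (y - x) 0 ^ 2 ∂ν

@[fun_prop]
lemma continuous_ramp (c : ℝ) : Continuous (ramp c) := by unfold ramp; fun_prop

lemma abs_ramp_le_abs_sub (c t : ℝ) : |ramp c t| ≤ |t - c| := by
  rcases le_total (t - c) 0 with h | h <;> simp [ramp, h]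

lemma abs_ramp_le (c t : ℝ) : |ramp c t| ≤ |t| + |c| :=
  (abs_ramp_le_abs_sub c t).trans (abs_sub t c)

lemma ramp_mul_mul {a : ℝ} (ha : 0 ≤ a) (c t : ℝ) : ramp (a * c) (a * t) = a * ramp c t := by
  rw [ramp, ramp, ← mul_sub, mul_min_of_nonneg _ _ ha, mul_zero]

lemma isSupergradient_ramp (c : ℝ) : IsSupergradient (ramp c) ((Iic c).indicator 1) := by
  intro t u
  unfold ramp
  by_cases hu : u ≤ c
  · simp [hu]
  · simp [hu, (not_le.mp hu).le]

variable {ν : Measure ℝ} [IsProbabilityMeasure ν] {G Φ : ℝ → ℝ}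

lemma integral_sub_mean_mul (hν : MemLp id 2 ν) (hG : MemLp G 2 ν) :
    ∫ x, (x - ∫ y, y ∂ν) * G x ∂ν
      = ∫ z, max (z.1 - z.2) 0 * (G z.1 - G z.2) ∂(ν.prod ν) := by
  have fst_mem : MemLp (fun z : ℝ × ℝ => z.1) 2 (ν.prod ν) := hν.comp_fst ν
  have snd_mem : MemLp (fun z : ℝ × ℝ => z.2) 2 (ν.prod ν) := hν.comp_snd ν
  have G_fst_mem : MemLp (fun z : ℝ × ℝ => G z.1) 2 (ν.prod ν) := hG.comp_fst ν
  have G_snd_mem : MemLp (fun z : ℝ × ℝ => G z.2) 2 (ν.prod ν) := hG.comp_snd ν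
  have posPart_mem : MemLp (fun z : ℝ × ℝ => max (z.1 - z.2) 0) 2 (ν.prod ν) :=
    (fst_mem.sub snd_mem).pos_part
  have int_fst : Integrable (fun z : ℝ × ℝ => max (z.1 - z.2) 0 * G z.1) (ν.prod ν) :=
    posPart_mem.integrable_mul G_fst_mem
  have int_snd : Integrable (fun z : ℝ × ℝ => max (z.1 - z.2) 0 * G z.2) (ν.prod ν) :=
    posPart_mem.integrable_mul G_snd_mem
  have int_swap : Integrable (fun z : ℝ × ℝ => max (z.2 - z.1) 0 * G z.1) (ν.prod ν) :=
    int_snd.swap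
  have int_sub : Integrable (fun z : ℝ × ℝ => (z.1 - z.2) * G z.1) (ν.prod ν) :=
    (fst_mem.sub snd_mem).integrable_mul G_fst_mem
  have hswap : ∫ z, max (z.2 - z.1) 0 * G z.1 ∂(ν.prod ν)
      = ∫ z, max (z.1 - z.2) 0 * G z.2 ∂(ν.prod ν) :=
    integral_prod_swap fun z : ℝ × ℝ => max (z.1 - z.2) 0 * G z.2
  calc ∫ x, (x - ∫ y, y ∂ν) * G x ∂ν
      = ∫ z, (z.1 - z.2) * G z.1 ∂(ν.prod ν) := by
        rw [integral_prod _ int_sub]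
        congr with x
        have int_id : Integrable (fun y : ℝ => y) ν := hν.integrable one_le_two
        simp only [integral_mul_const]
        rw [integral_sub (integrable_const x) int_id]
        simp
    _ = ∫ z, (max (z.1 - z.2) 0 * G z.1 - max (z.2 - z.1) 0 * G z.1) ∂(ν.prod ν) := by
        congr with z
        rw [← sub_mul, ← neg_sub z.1 z.2, max_zero_sub_max_neg_zero_eq_self]
    _ = ∫ z, max (z.1 - z.2) 0 * (G z.1 - G z.2) ∂(ν.prod ν) := by
        simp only [mul_sub]
        rw [integral_sub int_fst int_swap, integral_sub int_fst int_snd, hswap]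

lemma integrable_posPart_sq (hν : MemLp id 2 ν) :
    Integrable (fun z : ℝ × ℝ => max (z.1 - z.2) 0 ^ 2) (ν.prod ν) :=
  ((hν.comp_fst ν).sub (hν.comp_snd ν)).pos_part.integrable_sq

lemma integrable_posPart_sq_mul (hν : MemLp id 2 ν) {φ : ℝ × ℝ → ℝ} (hφ : Measurable φ)
    (hφ_le : ∀ z, |φ z| ≤ 1) :
    Integrable (fun z : ℝ × ℝ => max (z.1 - z.2) 0 ^ 2 * φ z) (ν.prod ν) :=
  (integrable_posPart_sq hν).mul_bdd (c := 1) hφ.aestronglyMeasurable (ae_of_all _ hφ_le)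

lemma integral_upperSq_mul (hν : MemLp id 2 ν) (hΦ : Measurable Φ) (hΦ_le : ∀ x, |Φ x| ≤ 1) :
    ∫ x, upperSq ν x * Φ x ∂ν = ∫ z, max (z.1 - z.2) 0 ^ 2 * Φ z.1 ∂(ν.prod ν) := by
  rw [integral_prod _
    (integrable_posPart_sq_mul (φ := fun z => Φ z.1) hν (by fun_prop) fun z => hΦ_le z.1)]
  simp only [upperSq, integral_mul_const]

lemma integral_lowerSq_mul (hν : MemLp id 2 ν) (hΦ : Measurable Φ) (hΦ_le : ∀ x, |Φ x| ≤ 1) :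
    ∫ x, lowerSq ν x * Φ x ∂ν = ∫ z, max (z.1 - z.2) 0 ^ 2 * Φ z.2 ∂(ν.prod ν) := by
  rw [integral_prod_symm _
    (integrable_posPart_sq_mul (φ := fun z => Φ z.2) hν (by fun_prop) fun z => hΦ_le z.2)]
  simp only [lowerSq, integral_mul_const]

lemma integral_posPart_sq (hν : MemLp id 2 ν) :
    ∫ z : ℝ × ℝ, max (z.1 - z.2) 0 ^ 2 ∂(ν.prod ν) = Var[id; ν] := by
  have hcov := integral_sub_mean_mul hν (hν.sub (memLp_const (∫ y, y ∂ν)))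
  rw [variance_eq_integral measurable_id.aemeasurable]
  simp only [id_eq, Pi.sub_apply, sub_sub_sub_cancel_right, ← sq] at hcov ⊢
  rw [hcov]
  congr with z
  rcases le_total (z.1 - z.2) 0 with h | h <;> simp [h, sq]

lemma integral_upperSq (hν : MemLp id 2 ν) : ∫ x, upperSq ν x ∂ν = Var[id; ν] := by
  simpa [integral_posPart_sq hν] using
    integral_upperSq_mul (Φ := fun _ => 1) hν measurable_const (by simp)

lemma integral_lowerSq (hν : MemLp id 2 ν) : ∫ x, lowerSq ν x ∂ν = Var[id; ν] := by
  simpa [integral_posPart_sq hν] using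
    integral_lowerSq_mul (Φ := fun _ => 1) hν measurable_const (by simp)

/-- Both bounds come from `(x - y)⁺ * (G x - G y)`, which concavity puts between
`((x - y)⁺)² * Φ x` and `((x - y)⁺)² * Φ y`. -/
lemma IsSupergradient.integral_sub_mean_mul_mem_Icc (h : IsSupergradient G Φ)
    (hν : MemLp id 2 ν) (hG : MemLp G 2 ν) (hΦ : Measurable Φ) (hΦ_le : ∀ x, |Φ x| ≤ 1) :
    ∫ x, (x - ∫ y, y ∂ν) * G x ∂ν
      ∈ Icc (∫ x, upperSq ν x * Φ x ∂ν) (∫ x, lowerSq ν x * Φ x ∂ν) := by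
  have hlower : ∀ z : ℝ × ℝ,
      max (z.1 - z.2) 0 ^ 2 * Φ z.1 ≤ max (z.1 - z.2) 0 * (G z.1 - G z.2) := fun z => by
    rcases le_total (z.1 - z.2) 0 with hz | hz
    · simp [hz]
    · rw [max_eq_left hz, sq, mul_assoc]
      exact mul_le_mul_of_nonneg_left (by linarith [h z.2 z.1]) hz
  have hupper : ∀ z : ℝ × ℝ,
      max (z.1 - z.2) 0 * (G z.1 - G z.2) ≤ max (z.1 - z.2) 0 ^ 2 * Φ z.2 := fun z => by
    rcases le_total (z.1 - z.2) 0 with hz | hz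
    · simp [hz]
    · rw [max_eq_left hz, sq, mul_assoc]
      exact mul_le_mul_of_nonneg_left (by linarith [h z.1 z.2]) hz
  have int_mid : Integrable (fun z : ℝ × ℝ => max (z.1 - z.2) 0 * (G z.1 - G z.2)) (ν.prod ν) :=
    MemLp.integrable_mul (((hν.comp_fst ν).sub (hν.comp_snd ν)).pos_part)
      ((hG.comp_fst ν).sub (hG.comp_snd ν))
  rw [integral_sub_mean_mul hν hG, integral_upperSq_mul hν hΦ hΦ_le,
    integral_lowerSq_mul hν hΦ hΦ_le]
  exact ⟨integral_mono (integrable_posPart_sq_mul hν (hΦ.comp measurable_fst) fun z => hΦ_le z.1)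
      int_mid hlower,
    integral_mono int_mid
      (integrable_posPart_sq_mul hν (hΦ.comp measurable_snd) fun z => hΦ_le z.2) hupper⟩

lemma integrable_upperSq (hν : MemLp id 2 ν) : Integrable (upperSq ν) ν :=
  (integrable_posPart_sq hν).integral_prod_left

lemma integrable_lowerSq (hν : MemLp id 2 ν) : Integrable (lowerSq ν) ν :=
  (integrable_posPart_sq hν).swap.integral_prod_left

@[fun_prop]
lemma measurable_indicator_Iic (c : ℝ) : Measurable ((Iic c).indicator (1 : ℝ → ℝ)) :=
  measurable_one.indicator measurableSet_Iic

lemma abs_indicator_Iic_le_one (c t : ℝ) : |(Iic c).indicator (1 : ℝ → ℝ) t| ≤ 1 :=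
  (norm_indicator_le_norm_self (1 : ℝ → ℝ) t).trans (by simp)

lemma memLp_ramp_comp {Ω : Type*} [MeasurableSpace Ω] {P : Measure Ω} [IsProbabilityMeasure P]
    {T : Ω → ℝ} (hT : MemLp T 2 P) (c : ℝ) : MemLp (fun ω => ramp c (T ω)) 2 P :=
  (hT.norm.add (memLp_const |c|)).mono'
    ((continuous_ramp c).comp_aestronglyMeasurable hT.aestronglyMeasurable)
    (ae_of_all _ fun ω => abs_ramp_le c (T ω))

lemma integral_sub_mean_mul_ramp_prod_mem_Icc (hν : MemLp id 2 ν) {τ : Measure ℝ}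
    [IsProbabilityMeasure τ] (hτ : MemLp id 2 τ) (c : ℝ) :
    ∫ z : ℝ × ℝ, (z.1 - ∫ y, y ∂ν) * ramp c (z.1 + z.2) ∂(ν.prod τ)
      ∈ Icc (∫ z : ℝ × ℝ, upperSq ν z.1 * (Iic c).indicator 1 (z.1 + z.2) ∂(ν.prod τ))
        (∫ z : ℝ × ℝ, lowerSq ν z.1 * (Iic c).indicator 1 (z.1 + z.2) ∂(ν.prod τ)) := by
  have ramp_add : ∀ x t, ramp c (x + t) = ramp (c - t) x := fun x t => by
    simp only [ramp]; ring_nf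
  have indicator_add : ∀ x t,
      (Iic c).indicator (1 : ℝ → ℝ) (x + t) = (Iic (c - t)).indicator 1 x := fun x t => by
    simp [indicator_apply, le_sub_iff_add_le]
  have int_mul_indicator : ∀ {f : ℝ → ℝ}, Integrable f ν →
      Integrable (fun z : ℝ × ℝ => f z.1 * (Iic c).indicator 1 (z.1 + z.2)) (ν.prod τ) :=
    fun hf => (hf.comp_fst τ).mul_bdd (c := 1)
      ((measurable_indicator_Iic c).comp (by fun_prop)).aestronglyMeasurable
      (ae_of_all _ fun z => abs_indicator_Iic_le_one c (z.1 + z.2))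
  have int_ramp : Integrable
      (fun z : ℝ × ℝ => (z.1 - ∫ y, y ∂ν) * ramp c (z.1 + z.2)) (ν.prod τ) :=
    MemLp.integrable_mul (((hν.comp_fst τ).sub (memLp_const _)))
      (memLp_ramp_comp ((hν.comp_fst τ).add (hτ.comp_snd ν)) c)
  have int_upper := int_mul_indicator (integrable_upperSq hν)
  have int_lower := int_mul_indicator (integrable_lowerSq hν)
  rw [integral_prod_symm _ int_ramp, integral_prod_symm _ int_upper,
    integral_prod_symm _ int_lower]
  have stein_section : ∀ t, ∫ x, (x - ∫ y, y ∂ν) * ramp c (x + t) ∂ν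
      ∈ Icc (∫ x, upperSq ν x * (Iic c).indicator 1 (x + t) ∂ν)
        (∫ x, lowerSq ν x * (Iic c).indicator 1 (x + t) ∂ν) := fun t => by
    simp only [ramp_add, indicator_add]
    exact (isSupergradient_ramp (c - t)).integral_sub_mean_mul_mem_Icc hν (memLp_ramp_comp hν _)
      (measurable_indicator_Iic _) (abs_indicator_Iic_le_one _)
  exact ⟨integral_mono int_upper.integral_prod_right int_ramp.integral_prod_right
      fun t => (stein_section t).1,
    integral_mono int_ramp.integral_prod_right int_lower.integral_prod_right
      fun t => (stein_section t).2⟩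

variable {n : ℕ}

lemma map_eval_prodMk_sum_erase (i : Fin n) :
    (Measure.pi fun _ : Fin n => ν).map (fun x => (x i, ∑ j ∈ Finset.univ.erase i, x j))
      = ν.prod ((Measure.pi fun _ : Fin n => ν).map
          fun x => ∑ j ∈ Finset.univ.erase i, x j) := by
  have hindep : IndepFun (fun x : Fin n → ℝ => x i) (fun x => ∑ j ∈ Finset.univ.erase i, x j)
      (Measure.pi fun _ : Fin n => ν) := by
    have := (iIndepFun_pi (μ := fun _ : Fin n => ν) (X := fun _ => id)
      fun _ => aemeasurable_id).indepFun_finsetSum_of_notMem (fun j => measurable_pi_apply j)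
        (Finset.notMem_erase i Finset.univ)
    simpa only [id_eq, Finset.sum_fn] using this.symm
  rw [hindep.map_prod_eq_prod_map_map (measurable_pi_apply i).aemeasurable (by fun_prop),
    (measurePreserving_eval (fun _ : Fin n => ν) i).map_eq]

lemma memLp_eval (hν : MemLp id 2 ν) (i : Fin n) :
    MemLp (fun x : Fin n → ℝ => x i) 2 (Measure.pi fun _ => ν) :=
  hν.comp_measurePreserving (measurePreserving_eval (fun _ : Fin n => ν) i)

lemma measurable_upperSq : Measurable (upperSq ν) :=
  (Measurable.stronglyMeasurable (f := fun z : ℝ × ℝ => max (z.1 - z.2) 0 ^ 2)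
    (by fun_prop)).integral_prod_right.measurable

lemma measurable_lowerSq : Measurable (lowerSq ν) :=
  (Measurable.stronglyMeasurable (f := fun z : ℝ × ℝ => max (z.2 - z.1) 0 ^ 2)
    (by fun_prop)).integral_prod_right.measurable

lemma integral_sub_mean_mul_ramp_sum_mem_Icc (hν : MemLp id 2 ν) (c : ℝ) (i : Fin n) :
    ∫ x, (x i - ∫ y, y ∂ν) * ramp c (∑ j, x j) ∂(Measure.pi fun _ : Fin n => ν)
      ∈ Icc
        (∫ x, upperSq ν (x i) * (Iic c).indicator 1 (∑ j, x j) ∂(Measure.pi fun _ : Fin n => ν))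
        (∫ x, lowerSq ν (x i) * (Iic c).indicator 1 (∑ j, x j)
          ∂(Measure.pi fun _ : Fin n => ν)) := by
  set P := Measure.pi fun _ : Fin n => ν
  set rest : (Fin n → ℝ) → ℝ := fun x => ∑ j ∈ Finset.univ.erase i, x j
  have hrest_meas : Measurable rest := by fun_prop
  have : IsProbabilityMeasure (P.map rest) :=
    Measure.isProbabilityMeasure_map hrest_meas.aemeasurable
  have hrest_mem : MemLp id 2 (P.map rest) := by
    rw [memLp_map_measure_iff (by fun_prop) hrest_meas.aemeasurable]
    exact memLp_finsetSum (Finset.univ.erase i) fun j _ => memLp_eval hν j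
  have integral_split : ∀ {a b : ℝ → ℝ}, Measurable a → Measurable b →
      ∫ z : ℝ × ℝ, a z.1 * b (z.1 + z.2) ∂(ν.prod (P.map rest))
        = ∫ x, a (x i) * b (∑ j, x j) ∂P := fun ha hb => by
    rw [← map_eval_prodMk_sum_erase, integral_map (by fun_prop)
      (Measurable.aestronglyMeasurable (by fun_prop))]
    simp only [Finset.add_sum_erase _ _ (Finset.mem_univ i), P]
  have := integral_sub_mean_mul_ramp_prod_mem_Icc hν hrest_mem c
  rwa [integral_split (a := fun x => x - ∫ y, y ∂ν) (by fun_prop) (by fun_prop),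
    integral_split measurable_upperSq (measurable_indicator_Iic c),
    integral_split measurable_lowerSq (measurable_indicator_Iic c)] at this

lemma integral_abs_sub_mean_le {Ω : Type*} [MeasurableSpace Ω] {P : Measure Ω}
    [IsProbabilityMeasure P] {Z : Ω → ℝ} (hZ : MemLp Z 2 P) :
    ∫ ω, |Z ω - ∫ ω', Z ω' ∂P| ∂P ≤ √Var[Z; P] := by
  have hdev : MemLp (fun ω => |Z ω - ∫ ω', Z ω' ∂P|) 2 P := (hZ.sub (memLp_const _)).abs
  refine Real.le_sqrt_of_sq_le ?_
  have hnonneg := variance_nonneg (fun ω => |Z ω - ∫ ω', Z ω' ∂P|) P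
  rw [variance_eq_sub hdev] at hnonneg
  rw [variance_eq_integral hZ.aemeasurable]
  simpa using hnonneg

lemma abs_integral_mul_sub_le_sqrt_variance {Ω : Type*} [MeasurableSpace Ω] {P : Measure Ω}
    [IsProbabilityMeasure P] {Z ψ : Ω → ℝ} (hZ : MemLp Z 2 P) (hψ : AEStronglyMeasurable ψ P)
    (hψ_le : ∀ ω, |ψ ω| ≤ 1) :
    |∫ ω, Z ω * ψ ω ∂P - (∫ ω, Z ω ∂P) * ∫ ω, ψ ω ∂P| ≤ √Var[Z; P] := by
  have int_Z : Integrable Z P := hZ.integrable one_le_two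
  have int_ψ : Integrable ψ P := Integrable.of_bound hψ 1 (ae_of_all _ hψ_le)
  have hcenter : ∫ ω, Z ω * ψ ω ∂P - (∫ ω, Z ω ∂P) * ∫ ω, ψ ω ∂P
      = ∫ ω, (Z ω - ∫ ω', Z ω' ∂P) * ψ ω ∂P := by
    simp only [sub_mul]
    rw [integral_sub (int_Z.mul_bdd hψ (ae_of_all _ hψ_le)) (int_ψ.const_mul _),
      integral_const_mul]
  rw [hcenter]
  have int_abs : Integrable (fun ω => |Z ω - ∫ ω', Z ω' ∂P|) P :=
    (int_Z.sub (integrable_const _)).abs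
  have hbound : ∀ ω, ‖(Z ω - ∫ ω', Z ω' ∂P) * ψ ω‖ ≤ |Z ω - ∫ ω', Z ω' ∂P| := fun ω => by
    rw [norm_mul]
    exact mul_le_of_le_one_right (norm_nonneg _) (hψ_le ω)
  exact (norm_integral_le_of_norm_le int_abs (ae_of_all _ hbound)).trans
    (integral_abs_sub_mean_le hZ)

lemma abs_sum_integral_mul_sub_le {f : ℝ → ℝ} (hf : MemLp f 2 ν) {ψ : (Fin n → ℝ) → ℝ}
    (hψ : Measurable ψ) (hψ_le : ∀ x, |ψ x| ≤ 1) :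
    |∑ i, ∫ x, f (x i) * ψ x ∂(Measure.pi fun _ : Fin n => ν)
      - n * (∫ x, f x ∂ν) * ∫ x, ψ x ∂(Measure.pi fun _ : Fin n => ν)| ≤ √(n * Var[f; ν]) := by
  set P := Measure.pi fun _ : Fin n => ν
  have hf_eval : ∀ i : Fin n, MemLp (fun x : Fin n → ℝ => f (x i)) 2 P := fun i =>
    hf.comp_measurePreserving (measurePreserving_eval (fun _ : Fin n => ν) i)
  have hmean : ∫ x, ∑ i, f (x i) ∂P = n * ∫ x, f x ∂ν := by
    rw [integral_finsetSum _ fun i _ => (hf_eval i).integrable one_le_two]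
    simp [P, integral_comp_eval (μ := fun _ : Fin n => ν) hf.aestronglyMeasurable]
  have hvar : Var[fun x => ∑ i, f (x i); P] = n * Var[f; ν] := by
    have := variance_sum_pi (μ := fun _ : Fin n => ν) (X := fun _ => f) fun _ => hf
    simpa [Finset.sum_fn, P] using this
  have := abs_integral_mul_sub_le_sqrt_variance (memLp_finsetSum Finset.univ fun i _ => hf_eval i)
    hψ.aestronglyMeasurable hψ_le
  simp only [Finset.sum_mul] at this
  rwa [integral_finsetSum _ fun i _ => ((hf_eval i).integrable one_le_two).mul_bdd
    hψ.aestronglyMeasurable (ae_of_all _ hψ_le), hmean, hvar] at this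

variable {L : ℝ}

lemma memLp_id_of_abs_le (hν : ∀ᵐ x ∂ν, |x| ≤ L) (p : ENNReal) : MemLp id p ν :=
  MemLp.of_bound aestronglyMeasurable_id L hν

lemma posPart_sq_mem_Icc {x y : ℝ} (hx : |x| ≤ L) (hy : |y| ≤ L) :
    max (x - y) 0 ^ 2 ∈ Icc 0 (4 * L ^ 2) := by
  rw [abs_le] at hx hy
  have hmax : max (x - y) 0 ≤ 2 * L := max_le (by linarith) (by linarith)
  exact ⟨by positivity, by nlinarith [le_max_right (x - y) 0]⟩

lemma ae_integral_mem_Icc {f : ℝ × ℝ → ℝ} {a b : ℝ} (hf : Measurable f)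
    (h : ∀ᵐ x ∂ν, ∀ᵐ y ∂ν, f (x, y) ∈ Icc a b) : ∀ᵐ x ∂ν, ∫ y, f (x, y) ∂ν ∈ Icc a b := by
  filter_upwards [h] with x hx
  exact (convex_Icc a b).integral_mem isClosed_Icc hx
    (memLp_of_bounded hx (hf.comp (by fun_prop)).aestronglyMeasurable 1 |>.integrable le_rfl)

lemma ae_upperSq_mem_Icc (hν : ∀ᵐ x ∂ν, |x| ≤ L) : ∀ᵐ x ∂ν, upperSq ν x ∈ Icc 0 (4 * L ^ 2) :=
  ae_integral_mem_Icc (f := fun z => max (z.1 - z.2) 0 ^ 2) (by fun_prop) <| by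
    filter_upwards [hν] with x hx
    filter_upwards [hν] with y hy using posPart_sq_mem_Icc hx hy

lemma ae_lowerSq_mem_Icc (hν : ∀ᵐ x ∂ν, |x| ≤ L) : ∀ᵐ x ∂ν, lowerSq ν x ∈ Icc 0 (4 * L ^ 2) :=
  ae_integral_mem_Icc (f := fun z => max (z.2 - z.1) 0 ^ 2) (by fun_prop) <| by
    filter_upwards [hν] with x hx
    filter_upwards [hν] with y hy using posPart_sq_mem_Icc hy hx

lemma sqrt_mul_variance_le {f : ℝ → ℝ} (hf : AEMeasurable f ν)
    (hf_mem : ∀ᵐ x ∂ν, f x ∈ Icc 0 (4 * L ^ 2)) : √(n * Var[f; ν]) ≤ 2 * L ^ 2 * √n := by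
  have hvar : Var[f; ν] ≤ (2 * L ^ 2) ^ 2 :=
    (variance_le_sq_of_bounded hf_mem hf).trans_eq (by ring)
  calc √(n * Var[f; ν]) ≤ √(n * (2 * L ^ 2) ^ 2) := by gcongr
    _ = 2 * L ^ 2 * √n := by
      rw [Real.sqrt_mul n.cast_nonneg, Real.sqrt_sq (by positivity), mul_comm]

/-- The law of the sum of `n` independent variables of law `ν`. -/
noncomputable def sumLaw (ν : Measure ℝ) (n : ℕ) : Measure ℝ :=
  (Measure.pi fun _ : Fin n => ν).map fun x => ∑ i, x i

instance isProbabilityMeasure_sumLaw : IsProbabilityMeasure (sumLaw ν n) :=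
  Measure.isProbabilityMeasure_map (by fun_prop)

omit [IsProbabilityMeasure ν] in
lemma integral_sumLaw {f : ℝ → ℝ} (hf : Measurable f) :
    ∫ t, f t ∂(sumLaw ν n) = ∫ x, f (∑ i, x i) ∂(Measure.pi fun _ : Fin n => ν) :=
  integral_map (by fun_prop) hf.aestronglyMeasurable

lemma integral_sub_mean_mul_ramp_sumLaw (hν : MemLp id 2 ν) (c : ℝ) :
    ∫ t, (t - n * ∫ y, y ∂ν) * ramp c t ∂(sumLaw ν n)
      = ∑ i, ∫ x, (x i - ∫ y, y ∂ν) * ramp c (∑ j, x j) ∂(Measure.pi fun _ : Fin n => ν) := by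
  rw [integral_sumLaw (by fun_prop), ← integral_finsetSum]
  · simp [← Finset.sum_mul]
  · intro i _
    exact ((memLp_eval hν i).sub (memLp_const _)).integrable_mul
      (memLp_ramp_comp (memLp_finsetSum _ fun j _ => memLp_eval hν j) c)

theorem abs_stein_sumLaw_le (hν : ∀ᵐ x ∂ν, |x| ≤ L) (c : ℝ) :
    |∫ t, (t - n * ∫ y, y ∂ν) * ramp c t ∂(sumLaw ν n)
      - n * Var[id; ν] * (sumLaw ν n).real (Iic c)| ≤ 2 * L ^ 2 * √n := by
  have hν2 : MemLp id 2 ν := memLp_id_of_abs_le hν 2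
  have hprob : (sumLaw ν n).real (Iic c)
      = ∫ x, (Iic c).indicator 1 (∑ j, x j) ∂(Measure.pi fun _ : Fin n => ν) := by
    rw [← integral_sumLaw (measurable_indicator_Iic c), integral_indicator_one measurableSet_Iic]
  have hψ : Measurable fun x : Fin n → ℝ => (Iic c).indicator (1 : ℝ → ℝ) (∑ j, x j) :=
    (measurable_indicator_Iic c).comp (by fun_prop)
  have hψ_le := fun x : Fin n → ℝ => abs_indicator_Iic_le_one c (∑ j, x j)
  have hupper := (abs_sum_integral_mul_sub_le
    (memLp_of_bounded (ae_upperSq_mem_Icc hν) measurable_upperSq.aestronglyMeasurable 2)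
    hψ hψ_le).trans (sqrt_mul_variance_le measurable_upperSq.aemeasurable (ae_upperSq_mem_Icc hν))
  have hlower := (abs_sum_integral_mul_sub_le
    (memLp_of_bounded (ae_lowerSq_mem_Icc hν) measurable_lowerSq.aestronglyMeasurable 2)
    hψ hψ_le).trans (sqrt_mul_variance_le measurable_lowerSq.aemeasurable (ae_lowerSq_mem_Icc hν))
  rw [integral_upperSq hν2] at hupper
  rw [integral_lowerSq hν2] at hlower
  have hstein := fun i : Fin n => integral_sub_mean_mul_ramp_sum_mem_Icc hν2 c i
  have hsum_upper := Finset.sum_le_sum fun i (_ : i ∈ Finset.univ) => (hstein i).1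
  have hsum_lower := Finset.sum_le_sum fun i (_ : i ∈ Finset.univ) => (hstein i).2
  rw [integral_sub_mean_mul_ramp_sumLaw hν2, hprob]
  rw [abs_le] at *
  constructor <;> linarith

end SteinInequality

section Tilting

variable {ρ : Measure ℝ} [IsProbabilityMeasure ρ] {L : ℝ} {n : ℕ}

lemma pi_tilted {ι : Type*} [Fintype ι] {Ω : ι → Type*} [∀ i, MeasurableSpace (Ω i)]
    (μ : ∀ i, Measure (Ω i)) [∀ i, SigmaFinite (μ i)] (f : ∀ i, Ω i → ℝ) :
    Measure.pi (fun i => (μ i).tilted (f i))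
      = (Measure.pi μ).tilted fun x => ∑ i, f i (x i) := by
  refine Measure.pi_eq fun t ht => ?_
  rw [tilted_apply_eq_ofReal_integral' _ (MeasurableSet.univ_pi ht)]
  simp_rw [tilted_apply_eq_ofReal_integral' _ (ht _), integral_div, exp_sum]
  rw [← ENNReal.ofReal_prod_of_nonneg fun i _ => by positivity, Finset.prod_div_distrib,
    Measure.restrict_pi_pi, integral_fintype_prod_eq_prod (fun i x => exp (f i x)),
    integral_fintype_prod_eq_prod (fun i x => exp (f i x))]

lemma integrable_exp_mul_of_abs_le (hρ : ∀ᵐ x ∂ρ, |x| ≤ L) (s : ℝ) :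
    Integrable (fun x => exp (s * x)) ρ :=
  Integrable.of_bound (by fun_prop) (exp (|s| * L)) <| by
    filter_upwards [hρ] with x hx
    rw [norm_of_nonneg (exp_pos _).le, exp_le_exp]
    calc s * x ≤ |s * x| := le_abs_self _
      _ = |s| * |x| := abs_mul _ _
      _ ≤ |s| * L := by gcongr

lemma mem_interior_integrableExpSet (hρ : ∀ᵐ x ∂ρ, |x| ≤ L) (s : ℝ) :
    s ∈ interior (integrableExpSet id ρ) := by
  have : integrableExpSet id ρ = univ := eq_univ_of_forall (integrable_exp_mul_of_abs_le hρ)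
  simp [this]

omit [IsProbabilityMeasure ρ] in
lemma hfun_eq_sub_cgf : hfun ρ = fun s => s ^ 2 / 2 - cgf id ρ s := rfl

lemma analyticAt_hfun (hρ : ∀ᵐ x ∂ρ, |x| ≤ L) (s : ℝ) : AnalyticAt ℝ (hfun ρ) s := by
  have := analyticAt_cgf (mem_interior_integrableExpSet hρ s)
  rw [hfun_eq_sub_cgf]
  fun_prop

lemma contDiff_hfun (hρ : ∀ᵐ x ∂ρ, |x| ≤ L) {m : WithTop ℕ∞} : ContDiff ℝ m (hfun ρ) :=
  contDiff_iff_contDiffAt.mpr fun s => (analyticAt_hfun hρ s).contDiffAt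

lemma continuous_deriv_hfun (hρ : ∀ᵐ x ∂ρ, |x| ≤ L) : Continuous (deriv (hfun ρ)) :=
  (contDiff_hfun hρ (m := 1)).continuous_deriv_one

lemma hasDerivAt_hfun (hρ : ∀ᵐ x ∂ρ, |x| ≤ L) (s : ℝ) :
    HasDerivAt (hfun ρ) (deriv (hfun ρ) s) s :=
  (analyticAt_hfun hρ s).differentiableAt.hasDerivAt

lemma deriv_hfun (hρ : ∀ᵐ x ∂ρ, |x| ≤ L) (s : ℝ) :
    deriv (hfun ρ) s = s - ∫ x, x ∂(ρ.tilted (s * ·)) := by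
  have hmean := integral_tilted_mul_self (mem_interior_integrableExpSet hρ s)
  have hcgf := (analyticAt_cgf (mem_interior_integrableExpSet hρ s)).differentiableAt.hasDerivAt
  simp only [id_eq] at hmean
  rw [hmean, hfun_eq_sub_cgf]
  exact ((((hasDerivAt_pow 2 s).div_const 2).congr_deriv (by norm_num)).sub hcgf).deriv

lemma deriv_deriv_hfun (hρ : ∀ᵐ x ∂ρ, |x| ≤ L) (s : ℝ) :
    deriv (deriv (hfun ρ)) s = 1 - Var[id; ρ.tilted (s * ·)] := by
  have hvar := variance_tilted_mul (mem_interior_integrableExpSet hρ s)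
  have hcgf :=
    (analyticAt_cgf (mem_interior_integrableExpSet hρ s)).deriv.differentiableAt.hasDerivAt
  have hderiv : deriv (hfun ρ) = fun s => s - deriv (cgf id ρ) s := by
    ext t
    rw [deriv_hfun hρ, ← integral_tilted_mul_self (mem_interior_integrableExpSet hρ t)]
    rfl
  rw [iteratedDeriv_succ, iteratedDeriv_one] at hvar
  rw [hderiv]
  exact (((hasDerivAt_id' s).sub hcgf).deriv).trans (congrArg _ hvar.symm)

lemma isProbabilityMeasure_tilted_mul (hρ : ∀ᵐ x ∂ρ, |x| ≤ L) (s : ℝ) :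
    IsProbabilityMeasure (ρ.tilted (s * ·)) :=
  isProbabilityMeasure_tilted (integrable_exp_mul_of_abs_le hρ s)

omit [IsProbabilityMeasure ρ] in
lemma ae_tilted_mul (hρ : ∀ᵐ x ∂ρ, |x| ≤ L) (s : ℝ) : ∀ᵐ x ∂(ρ.tilted (s * ·)), |x| ≤ L :=
  (tilted_absolutelyContinuous ρ _).ae_le hρ

/-- The unnormalised Lebesgue density `e^{-n h(s)}` of the field `s` which decouples the spins
in the Hubbard–Stratonovich transformation. -/
noncomputable def fieldDensity (ρ : Measure ℝ) (n : ℕ) (s : ℝ) : ℝ := exp (-(n * hfun ρ s))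

lemma fieldDensity_pos (ρ : Measure ℝ) (n : ℕ) (s : ℝ) : 0 < fieldDensity ρ n s := exp_pos _

/-- The conditional law, given the field `s`, of the sum of the `n` spins: these are independent
of law `ρ` tilted by `e^{sx}`. -/
noncomputable def sumLawGiven (ρ : Measure ℝ) (n : ℕ) (s : ℝ) : Measure ℝ :=
  sumLaw (ρ.tilted (s * ·)) n

lemma isProbabilityMeasure_sumLawGiven (hρ : ∀ᵐ x ∂ρ, |x| ≤ L) (s : ℝ) :
    IsProbabilityMeasure (sumLawGiven ρ n s) :=
  have := isProbabilityMeasure_tilted_mul hρ s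
  isProbabilityMeasure_sumLaw

lemma integral_exp_mul_sum (hρ : ∀ᵐ x ∂ρ, |x| ≤ L) (s : ℝ) :
    ∫ x, exp (∑ i, s * x i) ∂(Measure.pi fun _ : Fin n => ρ) = exp (n * cgf id ρ s) := by
  simp_rw [exp_sum]
  rw [integral_fintype_prod_eq_prod (fun _ x => exp (s * x)), exp_nat_mul,
    exp_cgf (X := id) (integrable_exp_mul_of_abs_le hρ s)]
  simp [mgf]

lemma fieldDensity_mul_integral (hρ : ∀ᵐ x ∂ρ, |x| ≤ L) (s : ℝ) {g : ℝ → ℝ} (hg : Measurable g) :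
    fieldDensity ρ n s * ∫ t, g t ∂(sumLawGiven ρ n s)
      = ∫ t, exp (s * t - n * s ^ 2 / 2) * g t ∂(sumLaw ρ n) := by
  rw [sumLawGiven, integral_sumLaw hg, integral_sumLaw (by fun_prop), pi_tilted, integral_tilted,
    integral_exp_mul_sum hρ, ← integral_const_mul]
  congr with x
  rw [smul_eq_mul, ← exp_sub, ← mul_assoc, fieldDensity, ← exp_add, hfun_eq_sub_cgf,
    Finset.mul_sum]
  congr 2
  ring

lemma integral_sumLawGiven_sub (hρ : ∀ᵐ x ∂ρ, |x| ≤ L) (s : ℝ) :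
    ∫ t, (t - n * s) ∂(sumLawGiven ρ n s) = -(n * deriv (hfun ρ) s) := by
  have := isProbabilityMeasure_tilted_mul hρ s
  have int_eval := fun i : Fin n =>
    (memLp_eval (memLp_id_of_abs_le (ae_tilted_mul hρ s) 2) i).integrable one_le_two
  rw [sumLawGiven, integral_sumLaw (by fun_prop),
    integral_sub (integrable_finsetSum _ fun i _ => int_eval i) (integrable_const _),
    integral_finsetSum _ fun i _ => int_eval i, deriv_hfun hρ]
  simp [integral_comp_eval (μ := fun _ : Fin n => ρ.tilted (s * ·)) (f := fun x => x)
    aestronglyMeasurable_id]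
  ring

lemma fieldDensity_mul_integral_exp (hρ : ∀ᵐ x ∂ρ, |x| ≤ L) (s : ℝ) {l : ℝ}
    (hl : n * l ^ 2 = 1) :
    fieldDensity ρ n s * ∫ t, exp (l * (t - n * s)) ∂(sumLawGiven ρ n s)
      = exp (1 / 2) * fieldDensity ρ n (s + l) := by
  have := isProbabilityMeasure_sumLawGiven (n := n) hρ (s + l)
  have hmass := fieldDensity_mul_integral (n := n) hρ (s + l) (measurable_const (a := (1 : ℝ)))
  rw [integral_const, probReal_univ, one_smul, mul_one] at hmass
  rw [fieldDensity_mul_integral hρ s (by fun_prop), hmass, ← integral_const_mul]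
  congr with t
  rw [mul_one, ← exp_add, ← exp_add]
  congr 1
  linear_combination (1 / 2) * hl

lemma abs_stein_sumLawGiven_le (hρ : ∀ᵐ x ∂ρ, |x| ≤ L) (s c : ℝ) :
    |∫ t, (t - n * (s - deriv (hfun ρ) s)) * ramp c t ∂(sumLawGiven ρ n s)
      - n * (1 - deriv (deriv (hfun ρ)) s) * (sumLawGiven ρ n s).real (Iic c)|
      ≤ 2 * L ^ 2 * √n := by
  have := isProbabilityMeasure_tilted_mul hρ s
  rw [deriv_hfun hρ, deriv_deriv_hfun hρ, sub_sub_cancel, sub_sub_cancel]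
  exact abs_stein_sumLaw_le (ae_tilted_mul hρ s) c

end Tilting

section HubbardStratonovich

variable {ρ : Measure ℝ} [IsProbabilityMeasure ρ] {L : ℝ} {n : ℕ}

lemma ae_abs_le_sumLaw (hρ : ∀ᵐ x ∂ρ, |x| ≤ L) : ∀ᵐ t ∂(sumLaw ρ n), |t| ≤ n * L := by
  rw [sumLaw, ae_map_iff (by fun_prop) (measurableSet_le (by fun_prop) (by fun_prop))]
  have hcoord : ∀ᵐ x ∂(Measure.pi fun _ : Fin n => ρ), ∀ i, |x i| ≤ L :=
    ae_all_iff.mpr fun i => (Measure.tendsto_eval_ae_ae (μ := fun _ : Fin n => ρ)).eventually hρ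
  filter_upwards [hcoord] with x hx
  calc |∑ i, x i| ≤ ∑ i, |x i| := Finset.abs_sum_le_sum_abs _ _
    _ ≤ ∑ _ : Fin n, L := Finset.sum_le_sum fun i _ => hx i
    _ = n * L := by simp

lemma integrable_exp_mul_abs_sub_mul_sq (a : ℝ) {b : ℝ} (hb : 0 < b) :
    Integrable fun s : ℝ => exp (a * |s| - b * s ^ 2) := by
  refine ((integrable_exp_neg_mul_sq (half_pos hb)).const_mul (exp (a ^ 2 / (2 * b)))).mono'
    (by fun_prop) (ae_of_all _ fun s => ?_)
  rw [norm_of_nonneg (exp_pos _).le, ← exp_add, exp_le_exp, ← sub_nonneg]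
  have hsquare : a ^ 2 / (2 * b) + -(b / 2) * s ^ 2 - (a * |s| - b * s ^ 2)
      = (a - b * |s|) ^ 2 / (2 * b) := by
    rw [← sq_abs s]
    field_simp
    ring
  rw [hsquare]
  positivity

lemma one_add_abs_sq_le_two_mul_exp (s : ℝ) : (1 + |s|) ^ 2 ≤ 2 * exp |s| := by
  linarith [quadratic_le_exp_of_nonneg (abs_nonneg s), sq_nonneg |s|]

lemma one_le_one_add_abs_sq (s : ℝ) : 1 ≤ (1 + |s|) ^ 2 :=
  one_le_pow₀ (le_add_of_nonneg_right (abs_nonneg s))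

lemma integrable_exp_mul_sub_mul_prod (hρ : ∀ᵐ x ∂ρ, |x| ≤ L) (hn : 0 < n) {g : ℝ × ℝ → ℝ}
    (hg : Measurable g) {K : ℝ} (hg_le : ∀ s t, |t| ≤ n * L → |g (s, t)| ≤ K * (1 + |s|) ^ 2) :
    Integrable (fun z : ℝ × ℝ => exp (z.1 * z.2 - n * z.1 ^ 2 / 2) * g z)
      (volume.prod (sumLaw ρ n)) := by
  have hdom : Integrable (fun s : ℝ => |K| * 2 * exp ((n * L + 1) * |s| - n / 2 * s ^ 2)) :=
    (integrable_exp_mul_abs_sub_mul_sq _ (by positivity)).const_mul _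
  refine (hdom.comp_fst (sumLaw ρ n)).mono' (by fun_prop) ?_
  filter_upwards [Measure.quasiMeasurePreserving_snd.ae (ae_abs_le_sumLaw hρ)] with ⟨s, t⟩ ht
  have hexp : s * t - n * s ^ 2 / 2 ≤ n * L * |s| - n / 2 * s ^ 2 := by
    have : s * t ≤ |s| * (n * L) :=
      (le_abs_self _).trans ((abs_mul s t).trans_le (by gcongr))
    linarith
  calc ‖exp (s * t - n * s ^ 2 / 2) * g (s, t)‖
      = exp (s * t - n * s ^ 2 / 2) * |g (s, t)| := by
        rw [norm_mul, norm_of_nonneg (exp_pos _).le, norm_eq_abs]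
    _ ≤ exp (n * L * |s| - n / 2 * s ^ 2) * (|K| * (2 * exp |s|)) := by
        gcongr
        exact (hg_le s t ht).trans (mul_le_mul (le_abs_self K) (one_add_abs_sq_le_two_mul_exp s)
          (by positivity) (abs_nonneg K))
    _ = |K| * 2 * exp ((n * L + 1) * |s| - n / 2 * s ^ 2) := by
        rw [add_one_mul, add_sub_right_comm, exp_add]
        ring

lemma integrable_fieldDensity_mul_integral (hρ : ∀ᵐ x ∂ρ, |x| ≤ L) (hn : 0 < n) {g : ℝ × ℝ → ℝ}
    (hg : Measurable g) {K : ℝ} (hg_le : ∀ s t, |t| ≤ n * L → |g (s, t)| ≤ K * (1 + |s|) ^ 2) :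
    Integrable fun s => fieldDensity ρ n s * ∫ t, g (s, t) ∂(sumLawGiven ρ n s) := by
  refine (integrable_exp_mul_sub_mul_prod hρ hn hg hg_le).integral_prod_left.congr
    (ae_of_all _ fun s => ?_)
  exact (fieldDensity_mul_integral hρ s (g := fun t => g (s, t)) (by fun_prop)).symm

lemma integral_fieldDensity_mul_integral (hρ : ∀ᵐ x ∂ρ, |x| ≤ L) (hn : 0 < n) {g : ℝ × ℝ → ℝ}
    (hg : Measurable g) {K : ℝ} (hg_le : ∀ s t, |t| ≤ n * L → |g (s, t)| ≤ K * (1 + |s|) ^ 2) :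
    ∫ s, fieldDensity ρ n s * ∫ t, g (s, t) ∂(sumLawGiven ρ n s)
      = ∫ t, (∫ s, exp (s * t - n * s ^ 2 / 2) * g (s, t)) ∂(sumLaw ρ n) := by
  rw [← integral_integral_swap (f := fun s t => exp (s * t - n * s ^ 2 / 2) * g (s, t))
    (integrable_exp_mul_sub_mul_prod hρ hn hg hg_le)]
  congr with s
  exact fieldDensity_mul_integral hρ s (g := fun t => g (s, t)) (by fun_prop)

lemma integrable_fieldDensity_mul (hρ : ∀ᵐ x ∂ρ, |x| ≤ L) (hn : 0 < n) {f : ℝ → ℝ}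
    (hf : Measurable f) {K : ℝ} (hf_le : ∀ s, |f s| ≤ K * (1 + |s|) ^ 2) :
    Integrable fun s => fieldDensity ρ n s * f s := by
  refine (integrable_fieldDensity_mul_integral (g := fun z => f z.1) hρ hn (by fun_prop)
    fun s _ _ => hf_le s).congr (ae_of_all _ fun s => ?_)
  have := isProbabilityMeasure_sumLawGiven (n := n) hρ s
  simp

lemma integrable_fieldDensity (hρ : ∀ᵐ x ∂ρ, |x| ≤ L) (hn : 0 < n) :
    Integrable (fieldDensity ρ n) := by
  simpa using integrable_fieldDensity_mul (f := 1) (K := 1) hρ hn measurable_one fun s => by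
    simpa only [Pi.one_apply, abs_one, one_mul] using one_le_one_add_abs_sq s

lemma exp_mul_sub_eq (hn : 0 < n) (s t : ℝ) :
    exp (s * t - n * s ^ 2 / 2)
      = exp (t ^ 2 / (2 * n)) * exp (-(n / 2 : ℝ) * (s - t / n) ^ 2) := by
  rw [← exp_add]
  congr 1
  field_simp
  ring

lemma integral_exp_mul_sub (hn : 0 < n) (t : ℝ) :
    ∫ s : ℝ, exp (s * t - n * s ^ 2 / 2) = √(π / (n / 2)) * exp (t ^ 2 / (2 * n)) := by
  simp_rw [exp_mul_sub_eq hn]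
  rw [integral_const_mul, integral_sub_right_eq_self (fun s => exp (-(n / 2 : ℝ) * s ^ 2)),
    integral_gaussian, mul_comm]

lemma integral_exp_mul_sub_mul_sub (hn : 0 < n) (t : ℝ) :
    ∫ s : ℝ, exp (s * t - n * s ^ 2 / 2) * (t - n * s) = 0 := by
  have hpos : (0 : ℝ) < n / 2 := by positivity
  have hderiv : ∀ s : ℝ, HasDerivAt (fun s => exp (s * t - n * s ^ 2 / 2))
      (exp (s * t - n * s ^ 2 / 2) * (t - n * s)) s := fun s => by
    refine ((((hasDerivAt_id' s).mul_const t).sub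
      (((hasDerivAt_pow 2 s).const_mul (n : ℝ)).div_const 2)).exp).congr_deriv ?_
    norm_num
    ring
  have int_exp : Integrable fun s : ℝ => exp (s * t - n * s ^ 2 / 2) := by
    simp_rw [exp_mul_sub_eq hn]
    exact ((integrable_exp_neg_mul_sq hpos).comp_sub_right (t / n)).const_mul _
  have int_deriv : Integrable fun s : ℝ => exp (s * t - n * s ^ 2 / 2) * (t - n * s) := by
    refine (((integrable_mul_exp_neg_mul_sq hpos).comp_sub_right (t / n)).const_mul
      (-n * exp (t ^ 2 / (2 * n)))).congr (ae_of_all _ fun s => ?_)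
    dsimp only
    rw [exp_mul_sub_eq hn]
    field_simp
    ring
  exact integral_eq_zero_of_hasDerivAt_of_integrable hderiv int_deriv int_exp

lemma integral_fieldDensity_mul_integral_comp (hρ : ∀ᵐ x ∂ρ, |x| ≤ L) (hn : 0 < n) {g : ℝ → ℝ}
    (hg : Measurable g) (hg_le : ∀ t, |g t| ≤ 1) :
    ∫ s, fieldDensity ρ n s * ∫ t, g t ∂(sumLawGiven ρ n s)
      = √(π / (n / 2)) * ∫ t, exp (t ^ 2 / (2 * n)) * g t ∂(sumLaw ρ n) := by
  rw [integral_fieldDensity_mul_integral (g := fun z => g z.2) (K := 1) hρ hn (by fun_prop)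
    fun s t _ => (hg_le t).trans <| by simpa only [one_mul] using one_le_one_add_abs_sq s,
    ← integral_const_mul]
  congr with t
  simp only
  rw [integral_mul_const, integral_exp_mul_sub hn, mul_assoc]

lemma cwMeasure_eq_tilted :
    cwMeasure ρ n
      = (Measure.pi fun _ : Fin n => ρ).tilted fun x => (∑ i, x i) ^ 2 / (2 * n) := rfl

lemma integrable_exp_sq_sumLaw (hρ : ∀ᵐ x ∂ρ, |x| ≤ L) :
    Integrable (fun t => exp (t ^ 2 / (2 * n))) (sumLaw ρ n) :=
  Integrable.of_bound (by fun_prop) (exp ((n * L) ^ 2 / (2 * n))) <| by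
    filter_upwards [ae_abs_le_sumLaw hρ] with t ht
    rw [norm_of_nonneg (exp_pos _).le, ← sq_abs t]
    gcongr

lemma isProbabilityMeasure_cwMeasure (hρ : ∀ᵐ x ∂ρ, |x| ≤ L) :
    IsProbabilityMeasure (cwMeasure ρ n) := by
  rw [cwMeasure_eq_tilted]
  exact isProbabilityMeasure_tilted
    ((integrable_exp_sq_sumLaw (n := n) hρ).comp_measurable (by fun_prop))

lemma cwMeasure_real_mul_integral_fieldDensity (hρ : ∀ᵐ x ∂ρ, |x| ≤ L) (hn : 0 < n) (c : ℝ) :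
    (cwMeasure ρ n).real {x | ∑ i, x i ≤ c} * ∫ s, fieldDensity ρ n s
      = ∫ s, fieldDensity ρ n s * (sumLawGiven ρ n s).real (Iic c) := by
  have hmass : ∫ s, fieldDensity ρ n s
      = √(π / (n / 2)) * ∫ t, exp (t ^ 2 / (2 * n)) ∂(sumLaw ρ n) := by
    have := integral_fieldDensity_mul_integral_comp (g := 1) hρ hn measurable_one (by simp)
    have prob := isProbabilityMeasure_sumLawGiven (n := n) hρ
    simpa using this
  have hlaw := integral_fieldDensity_mul_integral_comp (n := n) hρ hn (measurable_indicator_Iic c)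
    (abs_indicator_Iic_le_one c)
  simp only [integral_indicator_one measurableSet_Iic] at hlaw
  have hcw : (cwMeasure ρ n).real {x | ∑ i, x i ≤ c}
      = (∫ t, exp (t ^ 2 / (2 * n)) * (Iic c).indicator 1 t ∂(sumLaw ρ n))
        / ∫ t, exp (t ^ 2 / (2 * n)) ∂(sumLaw ρ n) := by
    have hmeas : MeasurableSet {x : Fin n → ℝ | ∑ i, x i ≤ c} :=
      measurableSet_le (by fun_prop) measurable_const
    rw [integral_sumLaw (by fun_prop), integral_sumLaw (by fun_prop), measureReal_def,
      cwMeasure_eq_tilted, tilted_apply_eq_ofReal_integral' _ hmeas,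
      ENNReal.toReal_ofReal (by positivity), integral_div, ← integral_indicator hmeas]
    congr with x
    simp [indicator_apply]
  have hpos : 0 < ∫ t, exp (t ^ 2 / (2 * n)) ∂(sumLaw ρ n) :=
    integral_exp_pos (integrable_exp_sq_sumLaw hρ)
  rw [hlaw, hmass, hcw]
  field_simp

lemma integral_fieldDensity_mul_integral_sub_mul_ramp (hρ : ∀ᵐ x ∂ρ, |x| ≤ L) (hn : 0 < n)
    (c : ℝ) :
    Integrable (fun s => fieldDensity ρ n s * ∫ t, (t - n * s) * ramp c t ∂(sumLawGiven ρ n s))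
      ∧ ∫ s, fieldDensity ρ n s * ∫ t, (t - n * s) * ramp c t ∂(sumLawGiven ρ n s) = 0 := by
  have hbound : ∀ s t : ℝ, |t| ≤ n * L →
      |(t - n * s) * ramp c t| ≤ n * (1 + |L|) * (n * L + |c|) * (1 + |s|) ^ 2 := fun s t ht => by
    have hleft : |t - n * s| ≤ n * (1 + |L|) * (1 + |s|) ^ 2 :=
      calc |t - n * s| ≤ |t| + |n * s| := abs_sub t (n * s)
        _ ≤ n * |L| + n * |s| := by
          rw [abs_mul, Nat.abs_cast]
          gcongr
          exact ht.trans (by gcongr; exact le_abs_self L)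
        _ = n * (|L| + |s|) := by ring
        _ ≤ n * ((1 + |L|) * (1 + |s|) ^ 2) := by
          gcongr
          nlinarith [abs_nonneg L, abs_nonneg s, mul_nonneg (abs_nonneg L) (abs_nonneg s),
            mul_nonneg (abs_nonneg L) (sq_nonneg |s|), sq_nonneg |s|]
        _ = n * (1 + |L|) * (1 + |s|) ^ 2 := by ring
    have hright : |ramp c t| ≤ n * L + |c| := (abs_ramp_le c t).trans (by gcongr)
    rw [abs_mul, mul_right_comm]
    gcongr
  refine ⟨integrable_fieldDensity_mul_integral (g := fun z => (z.2 - n * z.1) * ramp c z.2)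
    hρ hn (by fun_prop) hbound, ?_⟩
  rw [integral_fieldDensity_mul_integral (g := fun z => (z.2 - n * z.1) * ramp c z.2)
    hρ hn (by fun_prop) hbound]
  simp only [← mul_assoc, integral_mul_const, integral_exp_mul_sub_mul_sub hn, zero_mul,
    integral_zero]

lemma integral_deriv_mul_ramp {p p' : ℝ → ℝ} {w : ℝ} (hp : ∀ s, HasDerivAt p (p' s) s)
    (hint : Integrable p) (hint_mul : Integrable fun s => p s * (s - w))
    (hint_deriv : Integrable fun s => p' s * (s - w)) :
    ∫ s, p' s * ramp w s = -∫ s in Iic w, p s := by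
  have hindicator : (fun s => p' s * ramp w s)
      = (Iic w).indicator fun s => p' s * (s - w) := by
    ext s
    rcases le_or_gt s w with hs | hs
    · simp [ramp, hs]
    · simp [ramp, hs.le, hs]
  have hderiv : ∀ s ∈ Iic w,
      HasDerivAt (fun s => p s * (s - w)) (p' s * (s - w) + p s) s := fun s _ => by
    exact ((hp s).mul ((hasDerivAt_id' s).sub_const w)).congr_deriv (by rw [mul_one])
  have hint_sum : IntegrableOn (fun s => p' s * (s - w) + p s) (Iic w) :=
    (hint_deriv.add hint).integrableOn
  have hparts := integral_Iic_of_hasDerivAt_of_tendsto' hderiv hint_sum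
    (tendsto_zero_of_hasDerivAt_of_integrableOn_Iic hderiv hint_sum hint_mul.integrableOn)
  rw [integral_add hint_deriv.integrableOn hint.integrableOn] at hparts
  rw [hindicator, integral_indicator measurableSet_Iic]
  linarith

lemma nonneg_of_ae_abs_le (hρ : ∀ᵐ x ∂ρ, |x| ≤ L) : 0 ≤ L :=
  let ⟨_, hx⟩ := hρ.exists
  (abs_nonneg _).trans hx

lemma abs_integral_tilted_le (hρ : ∀ᵐ x ∂ρ, |x| ≤ L) (s : ℝ) :
    |∫ x, x ∂(ρ.tilted (s * ·))| ≤ L := by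
  have := isProbabilityMeasure_tilted_mul hρ s
  simpa using norm_integral_le_of_norm_le_const (f := fun x : ℝ => x) (ae_tilted_mul hρ s)

lemma abs_deriv_hfun_le (hρ : ∀ᵐ x ∂ρ, |x| ≤ L) (s : ℝ) :
    |deriv (hfun ρ) s| ≤ (1 + L) * (1 + |s|) := by
  rw [deriv_hfun hρ]
  have hL := nonneg_of_ae_abs_le hρ
  nlinarith [abs_sub s (∫ x, x ∂(ρ.tilted (s * ·))), abs_integral_tilted_le hρ s,
    mul_nonneg hL (abs_nonneg s)]

lemma hasDerivAt_fieldDensity (hρ : ∀ᵐ x ∂ρ, |x| ≤ L) (s : ℝ) :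
    HasDerivAt (fieldDensity ρ n) (fieldDensity ρ n s * -(n * deriv (hfun ρ) s)) s :=
  ((hasDerivAt_hfun hρ s).const_mul (n : ℝ)).neg.exp

lemma abs_sub_le_one_add_mul (s w : ℝ) : |s - w| ≤ (1 + |w|) * (1 + |s|) := by
  nlinarith [abs_sub s w, mul_nonneg (abs_nonneg w) (abs_nonneg s)]

lemma integrable_fieldDensity_mul_deriv_mul (hρ : ∀ᵐ x ∂ρ, |x| ≤ L) (hn : 0 < n) {f : ℝ → ℝ}
    (hf : Measurable f) {w : ℝ} (hf_le : ∀ s, |f s| ≤ |s - w|) :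
    Integrable fun s => fieldDensity ρ n s * (deriv (hfun ρ) s * f s) := by
  have hL := nonneg_of_ae_abs_le hρ
  refine integrable_fieldDensity_mul (K := (1 + L) * (1 + |w|)) hρ hn
    ((continuous_deriv_hfun hρ).measurable.mul hf) fun s => ?_
  calc |deriv (hfun ρ) s * f s| = |deriv (hfun ρ) s| * |f s| := abs_mul _ _
    _ ≤ ((1 + L) * (1 + |s|)) * ((1 + |w|) * (1 + |s|)) := by
      gcongr
      exacts [abs_deriv_hfun_le hρ s, (hf_le s).trans (abs_sub_le_one_add_mul s w)]
    _ = (1 + L) * (1 + |w|) * (1 + |s|) ^ 2 := by ring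

lemma integral_fieldDensity_mul_deriv_mul_ramp (hρ : ∀ᵐ x ∂ρ, |x| ≤ L) (hn : 0 < n) (w : ℝ) :
    ∫ s, fieldDensity ρ n s * (n * deriv (hfun ρ) s * ramp (n * w) (n * s))
      = n * ∫ s in Iic w, fieldDensity ρ n s := by
  have int_sub : Integrable fun s => fieldDensity ρ n s * (s - w) :=
    integrable_fieldDensity_mul (K := 1 + |w|) hρ hn (by fun_prop) fun s =>
      (abs_sub_le_one_add_mul s w).trans (by gcongr; nlinarith [abs_nonneg s])
  have int_deriv : Integrable fun s => fieldDensity ρ n s * -(n * deriv (hfun ρ) s) * (s - w) :=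
    ((integrable_fieldDensity_mul_deriv_mul (w := w) hρ hn (by fun_prop)
      fun s => le_rfl).const_mul (-n : ℝ)).congr (ae_of_all _ fun s => by ring)
  rw [← neg_eq_iff_eq_neg.mpr (integral_deriv_mul_ramp (hasDerivAt_fieldDensity hρ)
    (integrable_fieldDensity hρ hn) int_sub int_deriv), ← integral_neg, ← integral_const_mul]
  simp only [ramp_mul_mul n.cast_nonneg]
  congr with s
  ring

/-- The error of the linear approximation of `ramp c` at `u` by its supergradient. -/
noncomputable def rampRemainder (c u t : ℝ) : ℝ :=
  ramp c t - ramp c u - (Iic c).indicator 1 u * (t - u)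

@[fun_prop]
lemma continuous_rampRemainder (c u : ℝ) : Continuous (rampRemainder c u) := by
  unfold rampRemainder; fun_prop

lemma abs_rampRemainder_mul_le (c u t l : ℝ) :
    |rampRemainder c u t| * (1 + (l * (u - c)) ^ 2) ≤ |t - u| * (1 + (l * (t - u)) ^ 2) := by
  have hle : |rampRemainder c u t| ≤ |t - u| := by
    simp only [rampRemainder, ramp, indicator_apply, mem_Iic, Pi.one_apply]
    grind
  rcases lt_or_ge |t - u| |u - c| with hnear | hfar
  · have : rampRemainder c u t = 0 := by
      simp only [rampRemainder, ramp, indicator_apply, mem_Iic, Pi.one_apply]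
      grind
    rw [this, abs_zero, zero_mul]
    positivity
  · have hsq : (u - c) ^ 2 ≤ (t - u) ^ 2 := sq_le_sq.mpr hfar
    simp only [mul_pow]
    gcongr

lemma abs_mul_one_add_sq_le_exp (x : ℝ) : |x| * (1 + x ^ 2) ≤ 7 * (exp x + exp (-x)) := by
  have hlin := pow_div_factorial_le_exp |x| (abs_nonneg x) 1
  have hcube := pow_div_factorial_le_exp |x| (abs_nonneg x) 3
  norm_num [Nat.factorial] at hlin hcube
  rw [← sq_abs x]
  nlinarith [exp_abs_le x]

lemma integrable_sumLawGiven_of_continuous (hρ : ∀ᵐ x ∂ρ, |x| ≤ L) (s : ℝ) {f : ℝ → ℝ}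
    (hf : Continuous f) : Integrable f (sumLawGiven ρ n s) := by
  have := isProbabilityMeasure_tilted_mul hρ s
  have := isProbabilityMeasure_sumLawGiven (n := n) hρ s
  obtain ⟨K, hK⟩ := isCompact_Icc.exists_bound_of_continuousOn (s := Icc (-(n * L)) (n * L))
    hf.continuousOn
  refine Integrable.of_bound hf.aestronglyMeasurable K ?_
  filter_upwards [ae_abs_le_sumLaw (n := n) (ae_tilted_mul hρ s)] with t ht
  exact hK t (abs_le.mp ht)

lemma fieldDensity_mul_integral_abs_rampRemainder_le (hρ : ∀ᵐ x ∂ρ, |x| ≤ L) (s w : ℝ) {l : ℝ}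
    (hl : 0 < l) (hnl : n * l ^ 2 = 1) :
    fieldDensity ρ n s * ∫ t, |rampRemainder (n * w) (n * s) t| ∂(sumLawGiven ρ n s)
      ≤ 7 * exp (1 / 2) * l⁻¹ * (1 + ((s - w) / l) ^ 2)⁻¹
        * (fieldDensity ρ n (s + l) + fieldDensity ρ n (s - l)) := by
  have int_exp : ∀ l : ℝ, Integrable (fun t => exp (l * (t - n * s))) (sumLawGiven ρ n s) :=
    fun l => integrable_sumLawGiven_of_continuous hρ s (by fun_prop)
  have hscale : l * (n * s - n * w) = (s - w) / l := by
    rw [eq_div_iff hl.ne']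
    linear_combination (s - w) * hnl
  have hpointwise : ∀ t, |rampRemainder (n * w) (n * s) t|
      ≤ 7 * l⁻¹ * (1 + ((s - w) / l) ^ 2)⁻¹
        * (exp (l * (t - n * s)) + exp (-l * (t - n * s))) := fun t => by
    have hrem := abs_rampRemainder_mul_le (n * w) (n * s) t l
    have hexp := abs_mul_one_add_sq_le_exp (l * (t - n * s))
    rw [hscale, ← le_div_iff₀ (by positivity)] at hrem
    rw [abs_mul, abs_of_pos hl, mul_assoc, ← le_div_iff₀' hl] at hexp
    refine hrem.trans ((div_le_div_of_nonneg_right hexp (by positivity)).trans_eq ?_)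
    rw [neg_mul]
    field_simp
  have hmono := integral_mono
    (integrable_sumLawGiven_of_continuous (n := n) hρ s (by fun_prop))
    (((int_exp l).add (int_exp (-l))).const_mul _) hpointwise
  rw [integral_const_mul, integral_add' (int_exp l) (int_exp (-l))] at hmono
  calc fieldDensity ρ n s * ∫ t, |rampRemainder (n * w) (n * s) t| ∂(sumLawGiven ρ n s)
      ≤ fieldDensity ρ n s * (7 * l⁻¹ * (1 + ((s - w) / l) ^ 2)⁻¹
        * (∫ t, exp (l * (t - n * s)) ∂(sumLawGiven ρ n s)
          + ∫ t, exp (-l * (t - n * s)) ∂(sumLawGiven ρ n s))) :=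
        mul_le_mul_of_nonneg_left hmono (exp_pos _).le
    _ = _ := by
      rw [mul_left_comm, mul_add, fieldDensity_mul_integral_exp hρ s hnl,
        fieldDensity_mul_integral_exp hρ s ((neg_sq l).symm ▸ hnl), ← sub_eq_add_neg]
      ring

/-- The integrand of `n (P(S ≤ n w) ∫ p - ∫_{s ≤ w} p)` against the field density `p`, where `S`
is the sum of the spins: the two subtracted terms are the integrations by parts in `s` of the
joint density of `(s, S)` and of `p`. -/
noncomputable def fieldDiscrepancy (ρ : Measure ℝ) (n : ℕ) (w s : ℝ) : ℝ :=
  n * (sumLawGiven ρ n s).real (Iic (n * w))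
    - ∫ t, (t - n * s) * ramp (n * w) t ∂(sumLawGiven ρ n s)
    - n * deriv (hfun ρ) s * ramp (n * w) (n * s)

lemma integral_fieldDensity_mul_fieldDiscrepancy (hρ : ∀ᵐ x ∂ρ, |x| ≤ L) (hn : 0 < n) (w : ℝ) :
    ∫ s, fieldDensity ρ n s * fieldDiscrepancy ρ n w s
      = n * ((cwMeasure ρ n).real {x | ∑ i, x i ≤ n * w} * (∫ s, fieldDensity ρ n s)
        - ∫ s in Iic w, fieldDensity ρ n s) := by
  obtain ⟨int_ramp, hramp⟩ := integral_fieldDensity_mul_integral_sub_mul_ramp hρ hn (n * w)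
  have int_prob : Integrable
      fun s => fieldDensity ρ n s * (sumLawGiven ρ n s).real (Iic (n * w)) := by
    simpa only [integral_indicator_one measurableSet_Iic] using
      integrable_fieldDensity_mul_integral (K := 1)
        (g := fun z => (Iic (n * w)).indicator 1 z.2) hρ hn (by fun_prop) fun s t _ =>
          (abs_indicator_Iic_le_one _ t).trans
            (by simpa only [one_mul] using one_le_one_add_abs_sq s)
  have int_deriv : Integrable
      fun s => fieldDensity ρ n s * (n * deriv (hfun ρ) s * ramp (n * w) (n * s)) :=
    ((integrable_fieldDensity_mul_deriv_mul hρ hn (by fun_prop)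
      (abs_ramp_le_abs_sub w)).const_mul (n ^ 2 : ℝ)).congr <| ae_of_all _ fun s => by
        simp only [ramp_mul_mul n.cast_nonneg]
        ring
  have hsplit : ∀ s, fieldDensity ρ n s * fieldDiscrepancy ρ n w s
      = n * (fieldDensity ρ n s * (sumLawGiven ρ n s).real (Iic (n * w)))
        - fieldDensity ρ n s * ∫ t, (t - n * s) * ramp (n * w) t ∂(sumLawGiven ρ n s)
        - fieldDensity ρ n s * (n * deriv (hfun ρ) s * ramp (n * w) (n * s)) := fun s => by
    rw [fieldDiscrepancy]
    ring
  simp only [hsplit]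
  rw [integral_sub (by exact (int_prob.const_mul _).sub int_ramp) int_deriv,
    integral_sub (int_prob.const_mul _) int_ramp, hramp, integral_const_mul,
    ← cwMeasure_real_mul_integral_fieldDensity hρ hn,
    integral_fieldDensity_mul_deriv_mul_ramp hρ hn]
  ring

lemma fieldDiscrepancy_eq (hρ : ∀ᵐ x ∂ρ, |x| ≤ L) (w s : ℝ) :
    fieldDiscrepancy ρ n w s
      = -(∫ t, (t - n * (s - deriv (hfun ρ) s)) * ramp (n * w) t ∂(sumLawGiven ρ n s)
          - n * (1 - deriv (deriv (hfun ρ)) s) * (sumLawGiven ρ n s).real (Iic (n * w)))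
        + n * deriv (hfun ρ) s
          * ∫ t, rampRemainder (n * w) (n * s) t ∂(sumLawGiven ρ n s)
        - (n * deriv (hfun ρ) s) ^ 2 * (Iic (n * w)).indicator 1 (n * s)
        + n * deriv (deriv (hfun ρ)) s * (sumLawGiven ρ n s).real (Iic (n * w)) := by
  have := isProbabilityMeasure_sumLawGiven (n := n) hρ s
  have integrable_of_continuous : ∀ {f : ℝ → ℝ}, Continuous f →
      Integrable f (sumLawGiven ρ n s) := integrable_sumLawGiven_of_continuous hρ s
  have hremainder : ∫ t, rampRemainder (n * w) (n * s) t ∂(sumLawGiven ρ n s)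
      = ∫ t, ramp (n * w) t ∂(sumLawGiven ρ n s) - ramp (n * w) (n * s)
        + n * deriv (hfun ρ) s * (Iic (n * w)).indicator 1 (n * s) := by
    simp only [rampRemainder]
    rw [integral_sub (integrable_of_continuous (by fun_prop))
        (integrable_of_continuous (by fun_prop)),
      integral_sub (integrable_of_continuous (by fun_prop)) (integrable_const _),
      integral_const_mul, integral_sumLawGiven_sub hρ, integral_const, probReal_univ, one_smul]
    ring
  have hcenter : ∫ t, (t - n * (s - deriv (hfun ρ) s)) * ramp (n * w) t ∂(sumLawGiven ρ n s)
      = ∫ t, (t - n * s) * ramp (n * w) t ∂(sumLawGiven ρ n s)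
        + n * deriv (hfun ρ) s * ∫ t, ramp (n * w) t ∂(sumLawGiven ρ n s) := by
    rw [← integral_const_mul, ← integral_add (integrable_of_continuous (by fun_prop))
      (integrable_of_continuous (by fun_prop))]
    congr with t
    ring
  rw [fieldDiscrepancy, hremainder, hcenter]
  ring

lemma abs_fieldDiscrepancy_le (hρ : ∀ᵐ x ∂ρ, |x| ≤ L) (w s : ℝ) :
    |fieldDiscrepancy ρ n w s|
      ≤ 2 * L ^ 2 * √n + (n * deriv (hfun ρ) s) ^ 2 + n * |deriv (deriv (hfun ρ)) s|
        + n * |deriv (hfun ρ) s|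
          * ∫ t, |rampRemainder (n * w) (n * s) t| ∂(sumLawGiven ρ n s) := by
  have := isProbabilityMeasure_sumLawGiven (n := n) hρ s
  have hremainder : |n * deriv (hfun ρ) s
      * ∫ t, rampRemainder (n * w) (n * s) t ∂(sumLawGiven ρ n s)|
      ≤ n * |deriv (hfun ρ) s|
        * ∫ t, |rampRemainder (n * w) (n * s) t| ∂(sumLawGiven ρ n s) := by
    rw [abs_mul, abs_mul, Nat.abs_cast]
    gcongr
    exact abs_integral_le_integral_abs
  have hmean : |(n * deriv (hfun ρ) s) ^ 2 * (Iic (n * w)).indicator 1 (n * s)|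
      ≤ (n * deriv (hfun ρ) s) ^ 2 := by
    rw [abs_mul, abs_of_nonneg (sq_nonneg _)]
    exact mul_le_of_le_one_right (sq_nonneg _) (abs_indicator_Iic_le_one _ _)
  have hvariance : |n * deriv (deriv (hfun ρ)) s * (sumLawGiven ρ n s).real (Iic (n * w))|
      ≤ n * |deriv (deriv (hfun ρ)) s| := by
    rw [abs_mul, abs_mul, Nat.abs_cast, abs_of_nonneg measureReal_nonneg]
    exact mul_le_of_le_one_right (by positivity) measureReal_le_one
  have hstein := abs_stein_sumLawGiven_le (n := n) hρ s (n * w)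
  rw [fieldDiscrepancy_eq hρ]
  rw [abs_le] at *
  constructor <;> linarith

lemma fieldDensity_mul_abs_fieldDiscrepancy_le (hρ : ∀ᵐ x ∂ρ, |x| ≤ L) (w s : ℝ) {l : ℝ}
    (hl : 0 < l) (hnl : n * l ^ 2 = 1) :
    fieldDensity ρ n s * |fieldDiscrepancy ρ n w s|
      ≤ n * (fieldDensity ρ n s
          * (2 * L ^ 2 * l + n * deriv (hfun ρ) s ^ 2 + |deriv (deriv (hfun ρ)) s|)
        + |deriv (hfun ρ) s| * (7 * exp (1 / 2) * l⁻¹ * (1 + ((s - w) / l) ^ 2)⁻¹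
          * (fieldDensity ρ n (s + l) + fieldDensity ρ n (s - l)))) := by
  have hsqrt : √n = n * l := by
    rw [Real.sqrt_eq_iff_eq_sq n.cast_nonneg (by positivity)]
    linear_combination (-n : ℝ) * hnl
  have hdensity : 0 ≤ fieldDensity ρ n s := (fieldDensity_pos ρ n s).le
  calc fieldDensity ρ n s * |fieldDiscrepancy ρ n w s|
      ≤ fieldDensity ρ n s * (2 * L ^ 2 * √n + (n * deriv (hfun ρ) s) ^ 2
        + n * |deriv (deriv (hfun ρ)) s| + n * |deriv (hfun ρ) s|
          * ∫ t, |rampRemainder (n * w) (n * s) t| ∂(sumLawGiven ρ n s)) := by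
        gcongr
        exact abs_fieldDiscrepancy_le hρ w s
    _ = n * (fieldDensity ρ n s
          * (2 * L ^ 2 * l + n * deriv (hfun ρ) s ^ 2 + |deriv (deriv (hfun ρ)) s|)
        + |deriv (hfun ρ) s| * (fieldDensity ρ n s
          * ∫ t, |rampRemainder (n * w) (n * s) t| ∂(sumLawGiven ρ n s))) := by
        rw [hsqrt]
        ring
    _ ≤ _ := by
        gcongr _ * (_ + _ * ?_)
        exact fieldDensity_mul_integral_abs_rampRemainder_le hρ s w hl hnl

end HubbardStratonovich

section FreeEnergy

open Asymptotics Bornology Nat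

lemma isBigO_top_of_isBigO_nhds {X E F : Type*} [TopologicalSpace X] [Norm E]
    [SeminormedAddCommGroup F] {f : X → E} {g : X → F} (hcocompact : f =O[cocompact X] g)
    (hnhds : ∀ x, f =O[𝓝 x] g) : f =O[⊤] g := by
  obtain ⟨C, hC⟩ := hcocompact.bound
  obtain ⟨K, hK, hKC⟩ := mem_cocompact.mp hC
  have hcompl : f =O[𝓟 Kᶜ] g := isBigO_principal.mpr ⟨C, fun x hx => hKC hx⟩
  have hcompact : f =O[𝓟 K] g := by
    refine hK.induction_on (p := fun s => f =O[𝓟 s] g) (by simp) (fun s t hst ht => ?_)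
      (fun s t hs ht => ?_) fun x _ => ?_
    · exact ht.mono (principal_mono.mpr hst)
    · rw [← sup_principal]
      exact hs.sup ht
    · obtain ⟨c, hc⟩ := (hnhds x).bound
      exact ⟨_, mem_nhdsWithin_of_mem_nhds hc, isBigO_principal.mpr ⟨c, fun y hy => hy⟩⟩
  simpa [sup_principal] using hcompact.sup hcompl

lemma isBigO_top_of_continuous {f g : ℝ → ℝ} (hf : Continuous f) (hg : Continuous g)
    (hg_ne : ∀ s ≠ 0, g s ≠ 0) (hzero : f =O[𝓝 0] g) (hcobounded : f =O[cobounded ℝ] g) :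
    f =O[⊤] g := by
  refine isBigO_top_of_isBigO_nhds (Metric.cobounded_eq_cocompact (α := ℝ) ▸ hcobounded)
    fun s => ?_
  obtain rfl | hs := eq_or_ne s 0
  · exact hzero
  · refine isBigO_of_div_tendsto_nhds ?_ _ (hf.continuousAt.div hg.continuousAt (hg_ne s hs))
    filter_upwards [hg.continuousAt.eventually_ne (hg_ne s hs)] with t ht h
    exact absurd h ht

lemma taylor_isBigO_pow {f : ℝ → ℝ} (hf : AnalyticAt ℝ f 0) {m : ℕ}
    (hderiv : ∀ i < m, iteratedDeriv i f 0 = 0) (j : ℕ) :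
    (fun s => f s - ∑ i ∈ Finset.range j, iteratedDeriv (m + i) f 0 / (m + i)! * s ^ (m + i))
      =O[𝓝 0] fun s => s ^ (m + j) := by
  obtain ⟨F, hF, hfF⟩ := hf.exists_eventuallyEq_sum_add_pow_mul (m + j)
  refine ((isBigO_refl (fun s : ℝ => s ^ (m + j)) (𝓝 0)).mul
    (hF.continuousAt.isBigO_one ℝ)).congr' ?_ (by simp)
  filter_upwards [hfF] with s hs
  rw [hs, Finset.sum_range_add,
    Finset.sum_eq_zero fun i hi => by rw [hderiv i (Finset.mem_range.mp hi), smul_zero],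
    zero_add, smul_eq_mul, add_sub_right_comm, right_eq_add, sub_eq_zero]
  exact Finset.sum_congr rfl fun i _ => by rw [smul_eq_mul, div_mul_comm]

lemma isBigO_pow_of_iteratedDeriv_eq_zero {f : ℝ → ℝ} (hf : AnalyticAt ℝ f 0) {m : ℕ}
    (hderiv : ∀ i < m, iteratedDeriv i f 0 = 0) : f =O[𝓝 0] fun s => s ^ m := by
  simpa using taylor_isBigO_pow hf hderiv 0

lemma pow_isBigO_of_iteratedDeriv_ne_zero {f : ℝ → ℝ} (hf : AnalyticAt ℝ f 0) {m : ℕ}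
    (hderiv : ∀ i < m, iteratedDeriv i f 0 = 0) (hm : iteratedDeriv m f 0 ≠ 0) :
    (fun s => s ^ m) =O[𝓝 0] f := by
  have hcoeff : iteratedDeriv m f 0 / m ! ≠ 0 := div_ne_zero hm (by positivity)
  have hremainder : (fun s => f s - iteratedDeriv m f 0 / m ! * s ^ m) =o[𝓝 0] fun s => s ^ m :=
    IsBigO.trans_isLittleO (by simpa using taylor_isBigO_pow hf hderiv 1)
      (isLittleO_pow_pow m.lt_succ_self)
  exact (isBigO_self_const_mul hcoeff _ _).trans <|
    (hremainder.const_mul_right hcoeff).right_isBigO_add.congr_right fun s => sub_add_cancel _ _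

variable {ρ : Measure ℝ} [IsProbabilityMeasure ρ] {L : ℝ} {k : ℕ}

lemma variance_tilted_le_sq (hρ : ∀ᵐ x ∂ρ, |x| ≤ L) (s : ℝ) :
    Var[id; ρ.tilted (s * ·)] ≤ L ^ 2 := by
  have := isProbabilityMeasure_tilted_mul hρ s
  have hrange : ∀ᵐ x ∂(ρ.tilted (s * ·)), id x ∈ Icc (-L) L :=
    (ae_tilted_mul hρ s).mono fun x hx => abs_le.mp hx
  exact (variance_le_sq_of_bounded hrange aemeasurable_id).trans_eq (by ring)

lemma abs_deriv_deriv_hfun_le (hρ : ∀ᵐ x ∂ρ, |x| ≤ L) (s : ℝ) :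
    |deriv (deriv (hfun ρ)) s| ≤ 1 + L ^ 2 := by
  rw [deriv_deriv_hfun hρ, abs_le]
  constructor <;> nlinarith [variance_tilted_le_sq hρ s, variance_nonneg id (ρ.tilted (s * ·))]

lemma hfun_zero : hfun ρ 0 = 0 := by simp [hfun]

lemma abs_hfun_sub_le (hρ : ∀ᵐ x ∂ρ, |x| ≤ L) (s : ℝ) : |hfun ρ s - s ^ 2 / 2| ≤ L * |s| := by
  have hderiv : ∀ t : ℝ, HasDerivAt (fun t => hfun ρ t - t ^ 2 / 2)
      (-∫ x, x ∂(ρ.tilted (t * ·))) t := fun t =>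
    ((hasDerivAt_hfun hρ t).sub ((hasDerivAt_pow 2 t).div_const 2)).congr_deriv
      (by rw [deriv_hfun hρ]; norm_num)
  simpa [hfun_zero] using convex_univ.norm_image_sub_le_of_norm_hasDerivWithin_le
    (fun t _ => (hderiv t).hasDerivWithinAt) (fun t _ => by simpa using abs_integral_tilted_le hρ t)
    (mem_univ 0) (mem_univ s)

lemma hfun_isEquivalent (hρ : ∀ᵐ x ∂ρ, |x| ≤ L) :
    hfun ρ ~[cobounded ℝ] fun s => 2⁻¹ * s ^ 2 := by
  have hsub : (fun s => hfun ρ s - 2⁻¹ * s ^ 2) =O[cobounded ℝ] fun s => s ^ 1 :=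
    .of_bound L <| Eventually.of_forall fun s => by
      simpa [div_eq_inv_mul] using abs_hfun_sub_le hρ s
  exact (hsub.trans_isLittleO (isLittleO_pow_pow_cobounded_of_lt one_lt_two)).const_mul_right
    (by norm_num)

lemma hfun_isTheta_sq (hρ : ∀ᵐ x ∂ρ, |x| ≤ L) : hfun ρ =Θ[cobounded ℝ] fun s => s ^ 2 :=
  (hfun_isEquivalent hρ).isTheta.trans <|
    (isTheta_const_mul_left (by norm_num)).mpr (isTheta_refl _ _)

lemma tendsto_hfun_cobounded_atTop (hρ : ∀ᵐ x ∂ρ, |x| ≤ L) :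
    Tendsto (hfun ρ) (cobounded ℝ) atTop := by
  refine (hfun_isEquivalent hρ).symm.tendsto_atTop (.const_mul_atTop (by norm_num) ?_)
  exact ((tendsto_pow_atTop two_ne_zero).comp tendsto_norm_cobounded_atTop).congr sq_abs

lemma hfun_pos (hρ : ∀ᵐ x ∂ρ, |x| ≤ L) (hroot : ∀ s, deriv (hfun ρ) s = 0 → s = 0) {s : ℝ}
    (hs : s ≠ 0) : 0 < hfun ρ s := by
  have hzero_of_min : ∀ t, (∀ u, hfun ρ t ≤ hfun ρ u) → t = 0 := fun t ht =>
    hroot t (IsLocalMin.deriv_eq_zero (Eventually.of_forall ht))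
  obtain ⟨t, ht⟩ := (contDiff_hfun hρ (m := 0)).continuous.exists_forall_le
    (Metric.cobounded_eq_cocompact (α := ℝ) ▸ tendsto_hfun_cobounded_atTop hρ)
  obtain rfl := hzero_of_min t ht
  rw [hfun_zero] at ht
  refine (ht s).lt_of_ne' fun hs_zero => hs (hzero_of_min s ?_)
  simpa [hs_zero] using ht

omit [IsProbabilityMeasure ρ] in
lemma iteratedDeriv_hfun_zero_of_odd (hsymm : ρ.map (fun x => -x) = ρ) {m : ℕ} (hm : Odd m) :
    iteratedDeriv m (hfun ρ) 0 = 0 := by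
  have hneg : (fun s => hfun ρ (-s)) = hfun ρ := by
    ext s
    have hmgf : ∫ x, exp (s * x) ∂ρ = ∫ x, exp (s * -x) ∂ρ := by
      conv_lhs => rw [← hsymm]
      exact integral_map (by fun_prop) (by fun_prop)
    simp [hfun, hmgf]
  have hderiv := iteratedDeriv_comp_neg m (hfun ρ) 0
  rw [hneg, hm.neg_one_pow, neg_zero, neg_one_smul] at hderiv
  exact self_eq_neg.mp hderiv

lemma exists_abs_le_mul_pow {f : ℝ → ℝ} {m : ℕ} (hf : Continuous f)
    (hzero : f =O[𝓝 0] fun s => s ^ m) (hcobounded : f =O[cobounded ℝ] fun s => s ^ m) :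
    ∃ C ≥ 0, ∀ s, |f s| ≤ C * |s| ^ m := by
  simpa [isBigOWith_top] using (isBigO_top_of_continuous hf (continuous_pow m)
    (fun s hs => pow_ne_zero m hs) hzero hcobounded).exists_nonneg

lemma exists_abs_deriv_hfun_le (hρ : ∀ᵐ x ∂ρ, |x| ≤ L) {m : ℕ} (hm : 1 ≤ m)
    (hderiv : ∀ i ≤ m, iteratedDeriv i (hfun ρ) 0 = 0) :
    ∃ C ≥ 0, ∀ s, |deriv (hfun ρ) s| ≤ C * |s| ^ m := by
  refine exists_abs_le_mul_pow (continuous_deriv_hfun hρ)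
    (isBigO_pow_of_iteratedDeriv_eq_zero (analyticAt_hfun hρ 0).deriv fun i hi => ?_) ?_
  · rw [← iteratedDeriv_succ']
    exact hderiv _ hi
  · have hmean : (fun s => ∫ x, x ∂(ρ.tilted (s * ·))) =O[cobounded ℝ] fun s => s ^ 0 :=
      .of_bound L <| Eventually.of_forall fun s => by simpa using abs_integral_tilted_le hρ s
    exact ((isBigO_pow_pow_cobounded_of_le hm).sub
      (hmean.trans (isBigO_pow_pow_cobounded_of_le m.zero_le))).congr_left fun s => by
        rw [pow_one, deriv_hfun hρ]

lemma exists_abs_deriv_deriv_hfun_le (hρ : ∀ᵐ x ∂ρ, |x| ≤ L) {m : ℕ}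
    (hderiv : ∀ i ≤ m + 1, iteratedDeriv i (hfun ρ) 0 = 0) :
    ∃ C ≥ 0, ∀ s, |deriv (deriv (hfun ρ)) s| ≤ C * |s| ^ m := by
  refine exists_abs_le_mul_pow
    (continuous_iff_continuousAt.mpr fun s => (analyticAt_hfun hρ s).deriv.deriv.continuousAt)
    (isBigO_pow_of_iteratedDeriv_eq_zero (analyticAt_hfun hρ 0).deriv.deriv fun i hi => ?_) ?_
  · rw [← iteratedDeriv_succ', ← iteratedDeriv_succ']
    exact hderiv _ (by lia)
  · have hbounded : deriv (deriv (hfun ρ)) =O[cobounded ℝ] fun s => s ^ 0 :=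
      .of_bound (1 + L ^ 2) <| Eventually.of_forall fun s => by
        simpa using abs_deriv_deriv_hfun_le hρ s
    exact hbounded.trans (isBigO_pow_pow_cobounded_of_le m.zero_le)

lemma exists_abs_hfun_sub_pow_le (hρ : ∀ᵐ x ∂ρ, |x| ≤ L) {m : ℕ}
    (hderiv : ∀ i < m, iteratedDeriv i (hfun ρ) 0 = 0)
    (hderiv_succ : iteratedDeriv (m + 1) (hfun ρ) 0 = 0) :
    ∃ C ≥ 0, ∀ s, |hfun ρ s - iteratedDeriv m (hfun ρ) 0 / m ! * s ^ m| ≤ C * |s| ^ (m + 2) := by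
  refine exists_abs_le_mul_pow (by have := contDiff_hfun hρ (m := 0); fun_prop)
    (by simpa [Finset.sum_range_succ, hderiv_succ] using
      taylor_isBigO_pow (analyticAt_hfun hρ 0) hderiv 2)
    (((hfun_isTheta_sq hρ).isBigO.trans ?_).sub (IsBigO.const_mul_left ?_ _)) <;>
  exact isBigO_pow_pow_cobounded_of_le (by lia)

lemma exists_mul_min_pow_le_hfun (hρ : ∀ᵐ x ∂ρ, |x| ≤ L)
    (hderiv : ∀ i < 2 * k, iteratedDeriv i (hfun ρ) 0 = 0)
    (hderiv_ne : iteratedDeriv (2 * k) (hfun ρ) 0 ≠ 0) (hpos : ∀ s ≠ 0, 0 < hfun ρ s) :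
    ∃ c > 0, ∀ s, c * min (s ^ 2) (s ^ (2 * k)) ≤ hfun ρ s := by
  have hmin_nonneg : ∀ s : ℝ, 0 ≤ min (s ^ 2) (s ^ (2 * k)) := fun s =>
    le_min (sq_nonneg s) ((even_two_mul k).pow_nonneg s)
  have hmin : (fun s : ℝ => min (s ^ 2) (s ^ (2 * k))) =O[⊤] hfun ρ := by
    refine isBigO_top_of_continuous (by fun_prop) (contDiff_hfun hρ (m := 0)).continuous
      (fun s hs => (hpos s hs).ne')
      (.trans (.of_bound 1 (Eventually.of_forall fun s => ?_))
        (pow_isBigO_of_iteratedDeriv_ne_zero (analyticAt_hfun hρ 0) hderiv hderiv_ne))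
      (.trans (.of_bound 1 (Eventually.of_forall fun s => ?_)) (hfun_isTheta_sq hρ).isBigO_symm)
    all_goals
      rw [norm_of_nonneg (hmin_nonneg s), one_mul]
    exacts [(min_le_right _ _).trans (le_abs_self _), (min_le_left _ _).trans (le_abs_self _)]
  obtain ⟨C, hC, hbound⟩ := hmin.exists_pos
  refine ⟨C⁻¹, inv_pos.mpr hC, fun s => ?_⟩
  have hfun_nonneg : 0 ≤ hfun ρ s := by
    obtain rfl | hs := eq_or_ne s 0
    exacts [hfun_zero.ge, (hpos s hs).le]
  rw [inv_mul_le_iff₀ hC, ← norm_of_nonneg (hmin_nonneg s), ← norm_of_nonneg hfun_nonneg]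
  exact isBigOWith_top.mp hbound s

end FreeEnergy

section Fluctuations

open scoped Nat Pointwise

/-- The order of magnitude `n^{-1/(2k)}` of the magnetization, at which `n s^{2k}` is of order
one. -/
noncomputable def fluctuationScale (k n : ℕ) : ℝ := (n : ℝ) ^ (-(1 / (2 * k : ℝ)))

variable {k n : ℕ}

lemma fluctuationScale_pos (hn : 0 < n) : 0 < fluctuationScale k n :=
  rpow_pos_of_pos (by exact_mod_cast hn) _

lemma fluctuationScale_le_one (hn : 0 < n) : fluctuationScale k n ≤ 1 :=
  rpow_le_one_of_one_le_of_nonpos (by exact_mod_cast hn) (neg_nonpos.mpr (by positivity))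

lemma fluctuationScale_pow_le_pow (hn : 0 < n) {i j : ℕ} (hij : i ≤ j) :
    fluctuationScale k n ^ j ≤ fluctuationScale k n ^ i :=
  pow_le_pow_of_le_one (fluctuationScale_pos hn).le (fluctuationScale_le_one hn) hij

lemma natCast_mul_fluctuationScale_pow (hk : k ≠ 0) (hn : 0 < n) :
    n * fluctuationScale k n ^ (2 * k) = 1 := by
  rw [fluctuationScale, ← rpow_mul_natCast n.cast_nonneg]
  push_cast
  rw [neg_mul, one_div, inv_mul_cancel₀ (by positivity), rpow_neg_one,
    mul_inv_cancel₀ (by positivity)]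

lemma fluctuationScale_sq : fluctuationScale k n ^ 2 = (n : ℝ) ^ (-1 / k : ℝ) := by
  rw [fluctuationScale, ← rpow_mul_natCast n.cast_nonneg]
  congr 1
  push_cast
  field

lemma fluctuationScale_mul_one_add_abs_div (hn : 0 < n) (s : ℝ) :
    fluctuationScale k n * (1 + |s / fluctuationScale k n|) = fluctuationScale k n + |s| := by
  have hb := fluctuationScale_pos (k := k) hn
  rw [abs_div, abs_of_pos hb]
  field

lemma sq_sub_one_le_natCast_mul_min (hk : k ≠ 0) (hn : 0 < n) (s : ℝ) :
    (s / fluctuationScale k n) ^ 2 - 1 ≤ n * min (s ^ 2) (s ^ (2 * k)) := by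
  have hb := fluctuationScale_pos (k := k) hn
  have hnb := natCast_mul_fluctuationScale_pow hk hn
  have hnb_sq : 1 ≤ n * fluctuationScale k n ^ 2 :=
    hnb.ge.trans (by gcongr ?_ * ?_; exact fluctuationScale_pow_le_pow hn (by lia))
  obtain ⟨y, rfl⟩ : ∃ y, s = fluctuationScale k n * y :=
    ⟨s / fluctuationScale k n, by field⟩
  have hy_pow : y ^ 2 - 1 ≤ y ^ (2 * k) := by
    rw [pow_mul]
    obtain hy | hy := le_total (y ^ 2) 1
    · linarith [pow_nonneg (sq_nonneg y) k]
    · linarith [le_self_pow₀ hy hk]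
  rw [mul_div_cancel_left₀ _ hb.ne', mul_min_of_nonneg _ _ n.cast_nonneg, mul_pow, mul_pow,
    ← mul_assoc, ← mul_assoc, hnb, one_mul]
  exact le_min (by nlinarith [sq_nonneg y]) hy_pow

/-- Concentration of `f` at scale `b`: every weight `(b + |s|) ^ j` with `j ≤ J` costs a factor
`b ^ j` against a Gaussian envelope of width `b`. -/
def HasGaussianBound (b c K : ℝ) (J : ℕ) (f : ℝ → ℝ) : Prop :=
  ∀ j ≤ J, ∀ s, (b + |s|) ^ j * f s ≤ K * b ^ j * exp (-(c * (s / b) ^ 2))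

lemma HasGaussianBound.mono {b c K : ℝ} {I J : ℕ} {f : ℝ → ℝ} (hf : HasGaussianBound b c K J f)
    (hIJ : I ≤ J) : HasGaussianBound b c K I f :=
  fun j hj => hf j (hj.trans hIJ)

lemma HasGaussianBound.mul_le {b c K C x s : ℝ} {J j : ℕ} {f : ℝ → ℝ}
    (hf : HasGaussianBound b c K J f) (hj : j ≤ J) (hf_nonneg : 0 ≤ f s) (hC : 0 ≤ C)
    (hx : x ≤ C * (b + |s|) ^ j) : x * f s ≤ C * K * b ^ j * exp (-(c * (s / b) ^ 2)) :=
  calc x * f s ≤ C * ((b + |s|) ^ j * f s) := by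
        rw [← mul_assoc]
        gcongr
    _ ≤ C * (K * b ^ j * exp (-(c * (s / b) ^ 2))) := mul_le_mul_of_nonneg_left (hf j hj s) hC
    _ = _ := by ring

lemma one_add_abs_pow_mul_exp_neg_sq_le {c : ℝ} (hc : 0 < c) {j J : ℕ} (hj : j ≤ J) (y : ℝ) :
    (1 + |y|) ^ j * exp (-(c * y ^ 2)) ≤ J ! * exp (1 + 1 / (2 * c)) * exp (-(c / 2 * y ^ 2)) := by
  have hpow : (1 + |y|) ^ j ≤ J ! * exp (1 + |y|) := by
    have := pow_div_factorial_le_exp (1 + |y|) (by positivity) J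
    rw [div_le_iff₀' (by positivity)] at this
    exact (pow_le_pow_right₀ (by simp) hj).trans this
  have hlinear : |y| ≤ 1 / (2 * c) + c / 2 * y ^ 2 := by
    have hsquare : 1 / (2 * c) + c / 2 * y ^ 2 - |y| = (c * |y| - 1) ^ 2 / (2 * c) := by
      rw [← sq_abs y]
      field
    rw [← sub_nonneg, hsquare]
    positivity
  calc (1 + |y|) ^ j * exp (-(c * y ^ 2)) ≤ J ! * exp (1 + |y|) * exp (-(c * y ^ 2)) := by gcongr
    _ = J ! * exp (1 + |y| + -(c * y ^ 2)) := by rw [mul_assoc, ← exp_add]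
    _ ≤ J ! * exp (1 + 1 / (2 * c) + -(c / 2 * y ^ 2)) := by
        gcongr _ * exp ?_
        linarith
    _ = _ := by rw [exp_add (1 + 1 / (2 * c)), mul_assoc]

lemma exists_hasGaussianBound_exp_neg (hk : k ≠ 0) {c : ℝ} (hc : 0 < c) (J : ℕ) :
    ∃ K ≥ 0, ∀ f : ℝ → ℝ, (∀ s, c * min (s ^ 2) (s ^ (2 * k)) ≤ f s) → ∀ n > 0,
      HasGaussianBound (fluctuationScale k n) (c / 2) K J fun s => exp (-(n * f s)) := by
  refine ⟨exp c * (J ! * exp (1 + 1 / (2 * c))), by positivity, fun f hf n hn j hj s => ?_⟩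
  have hb := fluctuationScale_pos (k := k) hn
  have hexp : exp (-(n * f s)) ≤ exp c * exp (-(c * (s / fluctuationScale k n) ^ 2)) := by
    rw [← exp_add, exp_le_exp]
    nlinarith [mul_le_mul_of_nonneg_left (hf s) n.cast_nonneg,
      mul_le_mul_of_nonneg_left (sq_sub_one_le_natCast_mul_min hk hn s) hc.le]
  rw [← fluctuationScale_mul_one_add_abs_div hn, mul_pow]
  calc _ ≤ fluctuationScale k n ^ j * (1 + |s / fluctuationScale k n|) ^ j
          * (exp c * exp (-(c * (s / fluctuationScale k n) ^ 2))) := by gcongr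
    _ = exp c * fluctuationScale k n ^ j * ((1 + |s / fluctuationScale k n|) ^ j
          * exp (-(c * (s / fluctuationScale k n) ^ 2))) := by ring
    _ ≤ exp c * fluctuationScale k n ^ j * (J ! * exp (1 + 1 / (2 * c))
          * exp (-(c / 2 * (s / fluctuationScale k n) ^ 2))) := by
        gcongr _ * ?_
        exact one_add_abs_pow_mul_exp_neg_sq_le hc hj _
    _ = _ := by ring

lemma integral_exp_neg_mul_div_sq {b : ℝ} (hb : 0 < b) (c : ℝ) :
    ∫ s : ℝ, exp (-(c * (s / b) ^ 2)) = b * √(π / c) := by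
  rw [Measure.integral_comp_div (fun s => exp (-(c * s ^ 2))), smul_eq_mul, abs_of_pos hb]
  simp_rw [← neg_mul, integral_gaussian]

lemma integrable_exp_neg_mul_div_sq {b c : ℝ} (hb : b ≠ 0) (hc : 0 < c) :
    Integrable fun s : ℝ => exp (-(c * (s / b) ^ 2)) := by
  simpa only [← neg_mul] using (integrable_exp_neg_mul_sq hc).comp_div hb

lemma integrable_inv_mul_inv_one_add_sq_div {l : ℝ} (hl : l ≠ 0) (w : ℝ) :
    Integrable fun s => l⁻¹ * (1 + ((s - w) / l) ^ 2)⁻¹ :=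
  ((integrable_inv_one_add_sq.comp_div hl).comp_sub_right w).const_mul _

lemma integral_inv_mul_inv_one_add_sq_div {l : ℝ} (hl : 0 < l) (w : ℝ) :
    ∫ s, l⁻¹ * (1 + ((s - w) / l) ^ 2)⁻¹ = π := by
  rw [integral_const_mul, integral_sub_right_eq_self fun s => (1 + (s / l) ^ 2)⁻¹,
    Measure.integral_comp_div fun s => (1 + s ^ 2)⁻¹, integral_univ_inv_one_add_sq,
    smul_eq_mul, abs_of_pos hl, inv_mul_cancel_left₀ hl.ne']

variable {ρ : Measure ℝ} {L c K C₁ C₂ : ℝ}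

lemma fieldDensity_mul_sq_deriv_add_le (hk : 2 ≤ k) (hn : 0 < n)
    (hK : HasGaussianBound (fluctuationScale k n) c K (2 * (k + 1)) (fieldDensity ρ n))
    (hC₂_nonneg : 0 ≤ C₂) (hC₁ : ∀ s, |deriv (hfun ρ) s| ≤ C₁ * |s| ^ (k + 1))
    (hC₂ : ∀ s, |deriv (deriv (hfun ρ)) s| ≤ C₂ * |s| ^ 2) (s : ℝ) :
    fieldDensity ρ n s * (2 * L ^ 2 * fluctuationScale k n ^ k + n * deriv (hfun ρ) s ^ 2
        + |deriv (deriv (hfun ρ)) s|)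
      ≤ K * (2 * L ^ 2 + C₁ ^ 2 + C₂) * fluctuationScale k n ^ 2
        * exp (-(c * (s / fluctuationScale k n) ^ 2)) := by
  have hnb := natCast_mul_fluctuationScale_pow (show k ≠ 0 by lia) hn
  have hlb := fluctuationScale_pow_le_pow (k := k) hn hk
  have hp : 0 ≤ fieldDensity ρ n s := (fieldDensity_pos ρ n s).le
  have hb := fluctuationScale_pos (k := k) hn
  set b := fluctuationScale k n
  set G := exp (-(c * (s / b) ^ 2))
  have hs : |s| ≤ b + |s| := by linarith
  have hvar : 2 * L ^ 2 * b ^ k * fieldDensity ρ n s ≤ 2 * L ^ 2 * b ^ 2 * K * b ^ 0 * G :=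
    hK.mul_le (by lia) hp (by positivity)
      (by rw [pow_zero, mul_one]; gcongr)
  have hderiv_sq : n * deriv (hfun ρ) s ^ 2 * fieldDensity ρ n s
      ≤ n * C₁ ^ 2 * K * b ^ (2 * (k + 1)) * G := by
    refine hK.mul_le le_rfl hp (by positivity) ?_
    calc n * deriv (hfun ρ) s ^ 2 = n * |deriv (hfun ρ) s| ^ 2 := by rw [sq_abs]
      _ ≤ n * (C₁ * |s| ^ (k + 1)) ^ 2 := by gcongr; exact hC₁ s
      _ = n * C₁ ^ 2 * |s| ^ (2 * (k + 1)) := by ring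
      _ ≤ n * C₁ ^ 2 * (b + |s|) ^ (2 * (k + 1)) := by gcongr
  have hderiv_deriv : |deriv (deriv (hfun ρ)) s| * fieldDensity ρ n s ≤ C₂ * K * b ^ 2 * G :=
    hK.mul_le (by lia) hp hC₂_nonneg ((hC₂ s).trans (by gcongr))
  calc _ = 2 * L ^ 2 * b ^ k * fieldDensity ρ n s + n * deriv (hfun ρ) s ^ 2 * fieldDensity ρ n s
          + |deriv (deriv (hfun ρ)) s| * fieldDensity ρ n s := by ring
    _ ≤ 2 * L ^ 2 * b ^ 2 * K * b ^ 0 * G + n * C₁ ^ 2 * K * b ^ (2 * (k + 1)) * G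
          + C₂ * K * b ^ 2 * G := by gcongr
    _ = K * (2 * L ^ 2 + n * b ^ (2 * k) * C₁ ^ 2 + C₂) * b ^ 2 * G := by ring
    _ = _ := by rw [hnb, one_mul]

lemma abs_deriv_hfun_mul_fieldDensity_add_le (hk : 2 ≤ k) (hn : 0 < n) (hc : 0 ≤ c) (hK₀ : 0 ≤ K)
    (hK : HasGaussianBound (fluctuationScale k n) c K (k + 1) (fieldDensity ρ n))
    (hC₁_nonneg : 0 ≤ C₁) (hC₁ : ∀ s, |deriv (hfun ρ) s| ≤ C₁ * |s| ^ (k + 1)) {l : ℝ}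
    (hl : |l| ≤ fluctuationScale k n) (s : ℝ) :
    |deriv (hfun ρ) s| * fieldDensity ρ n (s + l) ≤ C₁ * K * fluctuationScale k n ^ 3 := by
  have hpow := fluctuationScale_pow_le_pow (k := k) hn (show 3 ≤ k + 1 by lia)
  have hb := fluctuationScale_pos (k := k) hn
  set b := fluctuationScale k n
  have hs : |s| ≤ b + |s + l| := by
    linarith [(congrArg abs (add_sub_cancel_right s l)).ge.trans (abs_sub (s + l) l)]
  calc |deriv (hfun ρ) s| * fieldDensity ρ n (s + l)
      ≤ C₁ * K * b ^ (k + 1) * exp (-(c * ((s + l) / b) ^ 2)) :=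
        hK.mul_le le_rfl (fieldDensity_pos ρ n _).le hC₁_nonneg ((hC₁ s).trans (by gcongr))
    _ ≤ C₁ * K * b ^ 3 * 1 := by
        gcongr
        exact exp_le_one_iff.mpr (neg_nonpos.mpr (by positivity))
    _ = C₁ * K * b ^ 3 := mul_one _

variable [IsProbabilityMeasure ρ]

lemma fieldDensity_mul_abs_fieldDiscrepancy_le_of_pow_bounds (hρ : ∀ᵐ x ∂ρ, |x| ≤ L) (hk : 2 ≤ k)
    (hn : 0 < n) (hc : 0 ≤ c) (hK₀ : 0 ≤ K)
    (hK : HasGaussianBound (fluctuationScale k n) c K (2 * (k + 1)) (fieldDensity ρ n))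
    (hC₁_nonneg : 0 ≤ C₁) (hC₁ : ∀ s, |deriv (hfun ρ) s| ≤ C₁ * |s| ^ (k + 1))
    (hC₂_nonneg : 0 ≤ C₂) (hC₂ : ∀ s, |deriv (deriv (hfun ρ)) s| ≤ C₂ * |s| ^ 2) (w s : ℝ) :
    fieldDensity ρ n s * |fieldDiscrepancy ρ n w s|
      ≤ n * (K * (2 * L ^ 2 + C₁ ^ 2 + C₂) * fluctuationScale k n ^ 2
          * exp (-(c * (s / fluctuationScale k n) ^ 2))
        + 14 * exp (1 / 2) * C₁ * K * fluctuationScale k n ^ 3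
          * ((fluctuationScale k n ^ k)⁻¹ * (1 + ((s - w) / fluctuationScale k n ^ k) ^ 2)⁻¹)) := by
  have hb := fluctuationScale_pos (k := k) hn
  have hl : 0 < fluctuationScale k n ^ k := pow_pos hb k
  have hlb : fluctuationScale k n ^ k ≤ fluctuationScale k n :=
    pow_le_of_le_one hb.le (fluctuationScale_le_one hn) (by lia)
  have hnl : n * (fluctuationScale k n ^ k) ^ 2 = 1 := by
    rw [← pow_mul, mul_comm k, natCast_mul_fluctuationScale_pow (by lia) hn]
  have hlocal := fieldDensity_mul_sq_deriv_add_le (L := L) hk hn hK hC₂_nonneg hC₁ hC₂ s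
  have hshift := abs_deriv_hfun_mul_fieldDensity_add_le hk hn hc hK₀ (hK.mono (by lia))
    hC₁_nonneg hC₁ (l := fluctuationScale k n ^ k) (by rwa [abs_of_pos hl]) s
  have hshift_neg := abs_deriv_hfun_mul_fieldDensity_add_le hk hn hc hK₀ (hK.mono (by lia))
    hC₁_nonneg hC₁ (l := -fluctuationScale k n ^ k) (by rwa [abs_neg, abs_of_pos hl]) s
  rw [← sub_eq_add_neg] at hshift_neg
  refine (fieldDensity_mul_abs_fieldDiscrepancy_le hρ w s hl hnl).trans ?_
  set l := fluctuationScale k n ^ k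
  refine mul_le_mul_of_nonneg_left (add_le_add hlocal ?_) n.cast_nonneg
  calc _ = 7 * exp (1 / 2) * (l⁻¹ * (1 + ((s - w) / l) ^ 2)⁻¹)
          * (|deriv (hfun ρ) s| * fieldDensity ρ n (s + l)
            + |deriv (hfun ρ) s| * fieldDensity ρ n (s - l)) := by ring
      _ ≤ 7 * exp (1 / 2) * (l⁻¹ * (1 + ((s - w) / l) ^ 2)⁻¹)
          * (C₁ * K * fluctuationScale k n ^ 3 + C₁ * K * fluctuationScale k n ^ 3) := by gcongr
      _ = _ := by ring

lemma abs_cwMeasure_real_mul_integral_sub_le_of_pow_bounds (hρ : ∀ᵐ x ∂ρ, |x| ≤ L) (hk : 2 ≤ k)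
    (hn : 0 < n) (hc : 0 < c) (hK₀ : 0 ≤ K)
    (hK : HasGaussianBound (fluctuationScale k n) c K (2 * (k + 1)) (fieldDensity ρ n))
    (hC₁_nonneg : 0 ≤ C₁) (hC₁ : ∀ s, |deriv (hfun ρ) s| ≤ C₁ * |s| ^ (k + 1))
    (hC₂_nonneg : 0 ≤ C₂) (hC₂ : ∀ s, |deriv (deriv (hfun ρ)) s| ≤ C₂ * |s| ^ 2) (w : ℝ) :
    |(cwMeasure ρ n).real {x | ∑ i, x i ≤ n * w} * (∫ s, fieldDensity ρ n s)
        - ∫ s in Iic w, fieldDensity ρ n s|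
      ≤ K * ((2 * L ^ 2 + C₁ ^ 2 + C₂) * √(π / c) + 14 * exp (1 / 2) * C₁ * π)
        * fluctuationScale k n ^ 3 := by
  have hn' : (0 : ℝ) < n := by exact_mod_cast hn
  have hb := fluctuationScale_pos (k := k) hn
  have hl := pow_pos hb k
  have hgauss := (integrable_exp_neg_mul_div_sq hb.ne' hc).const_mul
    (K * (2 * L ^ 2 + C₁ ^ 2 + C₂) * fluctuationScale k n ^ 2)
  have hcauchy := (integrable_inv_mul_inv_one_add_sq_div hl.ne' w).const_mul
    (14 * exp (1 / 2) * C₁ * K * fluctuationScale k n ^ 3)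
  have hbound := norm_integral_le_of_norm_le ((hgauss.add hcauchy).const_mul n)
    (f := fun s => fieldDensity ρ n s * fieldDiscrepancy ρ n w s) (.of_forall fun s => by
      rw [norm_mul, norm_of_nonneg (fieldDensity_pos ρ n s).le]
      exact fieldDensity_mul_abs_fieldDiscrepancy_le_of_pow_bounds hρ hk hn hc.le hK₀ hK hC₁_nonneg
        hC₁ hC₂_nonneg hC₂ w s)
  rw [integral_fieldDensity_mul_fieldDiscrepancy hρ hn, integral_const_mul, norm_mul,
    norm_of_nonneg hn'.le, mul_le_mul_iff_right₀ hn'] at hbound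
  refine hbound.trans_eq ?_
  simp only [Pi.add_apply]
  rw [integral_add hgauss hcauchy, integral_const_mul, integral_const_mul,
    integral_exp_neg_mul_div_sq hb, integral_inv_mul_inv_one_add_sq_div hl]
  ring

lemma HasGaussianBound.integrable {b c K : ℝ} {J : ℕ} {f : ℝ → ℝ} (hf : HasGaussianBound b c K J f)
    (hb : b ≠ 0) (hc : 0 < c) (hf_nonneg : ∀ s, 0 ≤ f s) (hf_meas : AEStronglyMeasurable f) :
    Integrable f :=
  ((integrable_exp_neg_mul_div_sq hb hc).const_mul K).mono' hf_meas <| .of_forall fun s => by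
    simpa [abs_of_nonneg (hf_nonneg s)] using hf 0 J.zero_le s

lemma abs_exp_neg_sub_exp_neg_le (u v : ℝ) :
    |exp (-u) - exp (-v)| ≤ |u - v| * (exp (-u) + exp (-v)) := by
  wlog huv : u ≤ v generalizing u v
  · rw [abs_sub_comm, abs_sub_comm u, add_comm]
    exact this v u (le_of_not_ge huv)
  have hexp : exp (-u) * (u - v + 1) ≤ exp (-v) := by
    rw [show -v = -u + (u - v) by ring, exp_add]
    gcongr
    exact add_one_le_exp _
  rw [abs_of_nonneg (by simpa using huv), abs_of_nonpos (by linarith)]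
  nlinarith [exp_pos (-v)]

omit [IsProbabilityMeasure ρ] in
lemma abs_exp_neg_mul_sub_exp_neg_mul_le (hk : k ≠ 0) (hn : 0 < n) {f g : ℝ → ℝ}
    (hf : HasGaussianBound (fluctuationScale k n) c K (2 * (k + 1)) fun s => exp (-(n * f s)))
    (hg : HasGaussianBound (fluctuationScale k n) c K (2 * (k + 1)) fun s => exp (-(n * g s)))
    {C : ℝ} (hC : 0 ≤ C) (hfg : ∀ s, |f s - g s| ≤ C * |s| ^ (2 * (k + 1))) (s : ℝ) :
    |exp (-(n * f s)) - exp (-(n * g s))|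
      ≤ 2 * C * K * fluctuationScale k n ^ 2
        * exp (-(c * (s / fluctuationScale k n) ^ 2)) := by
  have hnb := natCast_mul_fluctuationScale_pow hk hn
  have hb := fluctuationScale_pos (k := k) hn
  set b := fluctuationScale k n
  have hweight : n * |f s - g s| ≤ n * C * (b + |s|) ^ (2 * (k + 1)) := by
    rw [mul_assoc]
    gcongr
    exact (hfg s).trans (by gcongr; linarith)
  calc _ ≤ |n * f s - n * g s| * (exp (-(n * f s)) + exp (-(n * g s))) :=
        abs_exp_neg_sub_exp_neg_le _ _
    _ = n * |f s - g s| * exp (-(n * f s)) + n * |f s - g s| * exp (-(n * g s)) := by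
        rw [← mul_sub, abs_mul, Nat.abs_cast, mul_add]
    _ ≤ n * C * K * b ^ (2 * (k + 1)) * exp (-(c * (s / b) ^ 2))
          + n * C * K * b ^ (2 * (k + 1)) * exp (-(c * (s / b) ^ 2)) :=
        add_le_add (hf.mul_le le_rfl (exp_pos _).le (by positivity) hweight)
          (hg.mul_le le_rfl (exp_pos _).le (by positivity) hweight)
    _ = 2 * C * K * (n * b ^ (2 * k)) * b ^ 2 * exp (-(c * (s / b) ^ 2)) := by ring
    _ = _ := by rw [hnb, mul_one]

omit [IsProbabilityMeasure ρ] in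
lemma abs_setIntegral_exp_neg_mul_sub_le (hk : k ≠ 0) (hn : 0 < n) (hc : 0 < c) {f g : ℝ → ℝ}
    (hf_cont : Continuous f) (hg_cont : Continuous g)
    (hf : HasGaussianBound (fluctuationScale k n) c K (2 * (k + 1)) fun s => exp (-(n * f s)))
    (hg : HasGaussianBound (fluctuationScale k n) c K (2 * (k + 1)) fun s => exp (-(n * g s)))
    {C : ℝ} (hC : 0 ≤ C) (hfg : ∀ s, |f s - g s| ≤ C * |s| ^ (2 * (k + 1))) (T : Set ℝ) :
    |(∫ s in T, exp (-(n * f s))) - ∫ s in T, exp (-(n * g s))|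
      ≤ 2 * C * K * √(π / c) * fluctuationScale k n ^ 3 := by
  have hb := fluctuationScale_pos (k := k) hn
  have hf_int := hf.integrable hb.ne' hc (fun _ => (exp_pos _).le)
    (by fun_prop : Continuous _).aestronglyMeasurable
  have hg_int := hg.integrable hb.ne' hc (fun _ => (exp_pos _).le)
    (by fun_prop : Continuous _).aestronglyMeasurable
  have hbound := abs_exp_neg_mul_sub_exp_neg_mul_le hk hn hf hg hC hfg
  rw [← integral_sub hf_int.integrableOn hg_int.integrableOn]
  calc |∫ s in T, exp (-(n * f s)) - exp (-(n * g s))|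
      ≤ ∫ s in T, |exp (-(n * f s)) - exp (-(n * g s))| := abs_integral_le_integral_abs
    _ ≤ ∫ s, |exp (-(n * f s)) - exp (-(n * g s))| :=
        setIntegral_le_integral (hf_int.sub hg_int).abs (.of_forall fun _ => abs_nonneg _)
    _ ≤ ∫ s, 2 * C * K * fluctuationScale k n ^ 2
          * exp (-(c * (s / fluctuationScale k n) ^ 2)) :=
        integral_mono (hf_int.sub hg_int).abs
          ((integrable_exp_neg_mul_div_sq hb.ne' hc).const_mul _) hbound
    _ = _ := by
        rw [integral_const_mul, integral_exp_neg_mul_div_sq hb]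
        ring

lemma setIntegral_smul_exp_neg_natCast_mul (hk : k ≠ 0) (hn : 0 < n) (a : ℝ) (T : Set ℝ) :
    ∫ s in fluctuationScale k n • T, exp (-(n * (a * s ^ (2 * k))))
      = fluctuationScale k n * ∫ y in T, exp (-(a * y ^ (2 * k))) := by
  have hnb := natCast_mul_fluctuationScale_pow hk hn
  have hb := fluctuationScale_pos (k := k) hn
  have hscale := Measure.setIntegral_comp_smul_of_pos volume
    (fun s : ℝ => exp (-(n * (a * s ^ (2 * k))))) T hb
  rw [Module.finrank_self, pow_one, smul_eq_mul, eq_inv_mul_iff_mul_eq₀ hb.ne'] at hscale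
  rw [← hscale]
  congr! 5 with y
  rw [smul_eq_mul, mul_pow, mul_left_comm, ← mul_assoc (n : ℝ), hnb, one_mul]

lemma exists_abs_setIntegral_fieldDensity_sub_le (hρ : ∀ᵐ x ∂ρ, |x| ≤ L) (hk : k ≠ 0)
    {a c C : ℝ} (ha : 0 < a) (hc : 0 < c) (hC : 0 ≤ C)
    (hcoercive : ∀ s, c * min (s ^ 2) (s ^ (2 * k)) ≤ hfun ρ s)
    (htaylor : ∀ s, |hfun ρ s - a * s ^ (2 * k)| ≤ C * |s| ^ (2 * (k + 1))) :
    ∃ D, ∀ n > 0, ∀ T : Set ℝ,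
      |(∫ s in fluctuationScale k n • T, fieldDensity ρ n s)
          - fluctuationScale k n * ∫ y in T, exp (-(a * y ^ (2 * k)))|
        ≤ D * fluctuationScale k n ^ 3 := by
  have hmin : ∀ s : ℝ, 0 ≤ min (s ^ 2) (s ^ (2 * k)) := fun s =>
    le_min (sq_nonneg s) (by rw [pow_mul]; positivity)
  have hc' : 0 < min c a := lt_min hc ha
  obtain ⟨K, -, hK⟩ := exists_hasGaussianBound_exp_neg hk hc' (2 * (k + 1))
  refine ⟨2 * C * K * √(π / (min c a / 2)), fun n hn T => ?_⟩
  have hK_field := hK (hfun ρ) (fun s =>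
    (mul_le_mul_of_nonneg_right (min_le_left c a) (hmin s)).trans (hcoercive s)) n hn
  have hK_limit := hK (fun s => a * s ^ (2 * k)) (fun s =>
    mul_le_mul (min_le_right c a) (min_le_right _ _) (hmin s) ha.le) n hn
  rw [← setIntegral_smul_exp_neg_natCast_mul hk hn]
  exact abs_setIntegral_exp_neg_mul_sub_le hk hn (half_pos hc')
    (contDiff_hfun hρ (m := 0)).continuous (by fun_prop) hK_field hK_limit hC htaylor _

lemma exists_abs_cwMeasure_real_mul_integral_sub_le (hρ : ∀ᵐ x ∂ρ, |x| ≤ L) (hk : 2 ≤ k)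
    (hderiv : ∀ i < 2 * k, iteratedDeriv i (hfun ρ) 0 = 0) (hc : 0 < c)
    (hcoercive : ∀ s, c * min (s ^ 2) (s ^ (2 * k)) ≤ hfun ρ s) :
    ∃ D, ∀ n > 0, ∀ w,
      |(cwMeasure ρ n).real {x | ∑ i, x i ≤ n * w} * (∫ s, fieldDensity ρ n s)
          - ∫ s in Iic w, fieldDensity ρ n s| ≤ D * fluctuationScale k n ^ 3 := by
  obtain ⟨C₁, hC₁_nonneg, hC₁⟩ := exists_abs_deriv_hfun_le (m := k + 1) hρ (by lia)
    fun i hi => hderiv i (by lia)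
  obtain ⟨C₂, hC₂_nonneg, hC₂⟩ := exists_abs_deriv_deriv_hfun_le (m := 2) hρ
    fun i hi => hderiv i (by lia)
  obtain ⟨K, hK₀, hK⟩ := exists_hasGaussianBound_exp_neg (k := k) (by lia) hc (2 * (k + 1))
  exact ⟨_, fun n hn => abs_cwMeasure_real_mul_integral_sub_le_of_pow_bounds hρ hk hn (half_pos hc)
    hK₀ (hK _ hcoercive n hn) hC₁_nonneg hC₁ hC₂_nonneg hC₂⟩

/-- Writing `P - c₁ V = (c₁ / b) (P (b W - Z) + (P Z - A) + (A - b V))` avoids dividing by `Z`. -/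
lemma abs_sub_mul_le_of_approx {P Z A V W b c₁ D₁ D₂ : ℝ} (hb : 0 < b) (hP : |P| ≤ 1)
    (hW : c₁ * W = 1) (hPZ : |P * Z - A| ≤ D₁ * b ^ 3) (hA : |A - b * V| ≤ D₂ * b ^ 3)
    (hZ : |Z - b * W| ≤ D₂ * b ^ 3) : |P - c₁ * V| ≤ |c₁| * (D₁ + 2 * D₂) * b ^ 2 := by
  rw [abs_sub_comm] at hZ
  have hPZ_limit : |P * (b * W - Z)| ≤ D₂ * b ^ 3 := by
    rw [abs_mul]
    exact (mul_le_of_le_one_left (abs_nonneg _) hP).trans hZ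
  refine le_of_mul_le_mul_left ?_ hb
  calc b * |P - c₁ * V| = |b * (P * (c₁ * W) - c₁ * V)| := by
        rw [hW, mul_one, abs_mul, abs_of_pos hb]
    _ = |c₁ * (P * (b * W - Z) + (P * Z - A) + (A - b * V))| := by ring_nf
    _ ≤ |c₁| * (D₂ * b ^ 3 + D₁ * b ^ 3 + D₂ * b ^ 3) := by
        rw [abs_mul]
        gcongr
        exact (abs_add_three _ _ _).trans (by gcongr)
    _ = _ := by ring

lemma ae_abs_le_of_measure_Icc_eq_one (hL : ρ (Icc (-L) L) = 1) :
    ∀ᵐ x ∂ρ, |x| ≤ L := by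
  filter_upwards [(prob_compl_eq_zero_iff measurableSet_Icc).mpr hL] with x hx using abs_le.mpr hx

lemma setOf_rpow_mul_sum_div_le_eq (hn : 0 < n) (z : ℝ) :
    {x : Fin n → ℝ | (n : ℝ) ^ (1 / (2 * k : ℝ)) * ((∑ i, x i) / n) ≤ z}
      = {x | ∑ i, x i ≤ n * (fluctuationScale k n * z)} := by
  have hscale : (n : ℝ) ^ (1 / (2 * k : ℝ)) = (fluctuationScale k n)⁻¹ := by
    rw [fluctuationScale, rpow_neg n.cast_nonneg, inv_inv]
  ext x
  simp only [mem_ofPred_eq]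
  rw [hscale, inv_mul_le_iff₀ (fluctuationScale_pos hn), div_le_iff₀' (by exact_mod_cast hn)]

lemma exists_abs_cwMeasure_real_sub_le (hρ : ∀ᵐ x ∂ρ, |x| ≤ L) (hk : 2 ≤ k)
    (hderiv : ∀ i < 2 * k, iteratedDeriv i (hfun ρ) 0 = 0)
    (hderiv_succ : iteratedDeriv (2 * k + 1) (hfun ρ) 0 = 0)
    (hderiv_pos : 0 < iteratedDeriv (2 * k) (hfun ρ) 0) (hpos : ∀ s ≠ 0, 0 < hfun ρ s) {a c₁ : ℝ}
    (ha : a = iteratedDeriv (2 * k) (hfun ρ) 0 / (2 * k)!)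
    (hc₁ : c₁ * ∫ y, exp (-(a * y ^ (2 * k))) = 1) :
    ∃ D, ∀ n > 0, ∀ z, |(cwMeasure ρ n).real {x | ∑ i, x i ≤ n * (fluctuationScale k n * z)}
        - c₁ * ∫ y in Iic z, exp (-(a * y ^ (2 * k)))| ≤ D * fluctuationScale k n ^ 2 := by
  have hk₀ : k ≠ 0 := by lia
  have ha_pos : 0 < a := ha ▸ by positivity
  obtain ⟨c, hc, hcoercive⟩ := exists_mul_min_pow_le_hfun hρ hderiv hderiv_pos.ne' hpos
  obtain ⟨C, hC, htaylor⟩ := exists_abs_hfun_sub_pow_le hρ hderiv hderiv_succ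
  obtain ⟨D₁, hD₁⟩ := exists_abs_cwMeasure_real_mul_integral_sub_le hρ hk hderiv hc hcoercive
  obtain ⟨D₂, hD₂⟩ := exists_abs_setIntegral_fieldDensity_sub_le hρ hk₀ ha_pos hc hC hcoercive
    (ha ▸ htaylor)
  refine ⟨|c₁| * (D₁ + 2 * D₂), fun n hn z => ?_⟩
  have hb := fluctuationScale_pos (k := k) hn
  have := isProbabilityMeasure_cwMeasure hρ (n := n)
  have hcdf := hD₂ n hn (Iic z)
  have htotal := hD₂ n hn univ
  rw [LinearOrderedField.smul_Iic hb] at hcdf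
  rw [smul_set_univ₀ hb.ne', setIntegral_univ, setIntegral_univ] at htotal
  exact abs_sub_mul_le_of_approx hb
    ((abs_of_nonneg measureReal_nonneg).trans_le measureReal_le_one) hc₁ (hD₁ n hn _) hcdf htotal

end Fluctuations

end CurieWeiss

open CurieWeiss in
theorem stmt_5_general (ρ : Measure ℝ) [IsProbabilityMeasure ρ] (L : ℝ) (k : ℕ) (c₁ : ℝ)
    (hL : ρ (Set.Icc (-L) L) = 1) (hpos : ∀ s ≠ 0, 0 < hfun ρ s) (hk : 2 ≤ k)
    (hderiv : ∀ i < 2 * k, iteratedDeriv i (hfun ρ) 0 = 0)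
    (hderiv_pos : 0 < iteratedDeriv (2 * k) (hfun ρ) 0)
    (hderiv_succ : iteratedDeriv (2 * k + 1) (hfun ρ) 0 = 0)
    (hc₁ : (∫ y : ℝ, c₁ * exp (-(iteratedDeriv (2 * k) (hfun ρ) 0 * y ^ (2 * k)
        / (Nat.factorial (2 * k))))) = 1) :
    ∃ C : ℝ, 0 < C ∧ ∀ n : ℕ, 1 ≤ n → ∀ z : ℝ,
      |(cwMeasure ρ n {x | (n : ℝ) ^ ((1 : ℝ) / (2 * (k : ℝ))) * ((∑ i, x i) / n) ≤ z}).toReal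
          - (∫ y in Set.Iic z, c₁ * exp (-(iteratedDeriv (2 * k) (hfun ρ) 0 * y ^ (2 * k)
              / (Nat.factorial (2 * k)))))|
        ≤ C * (n : ℝ) ^ (-(1 : ℝ) / (k : ℝ)) := by
  simp_rw [← div_mul_eq_mul_div, integral_const_mul] at hc₁ ⊢
  obtain ⟨D, hD⟩ := exists_abs_cwMeasure_real_sub_le (ae_abs_le_of_measure_Icc_eq_one hL) hk hderiv
    hderiv_succ hderiv_pos hpos rfl hc₁
  refine ⟨max D 1, by positivity, fun n hn z => ?_⟩
  rw [setOf_rpow_mul_sum_div_le_eq hn, ← fluctuationScale_sq]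
  exact (hD n hn z).trans (by gcongr; exact le_max_left _ _)

theorem stmt_5 (ρ : Measure ℝ) [IsProbabilityMeasure ρ] (L : ℝ) (k : ℕ) (c₁ : ℝ)
    -- `ρ` is symmetric
    (hsym : ρ.map (fun x => -x) = ρ)
    -- `∫ x² dρ = 1`
    (hvar : (∫ x, x ^ 2 ∂ρ) = 1)
    -- compact support: `ρ([-L, L]) = 1`
    (hL : ρ (Set.Icc (-L) L) = 1)
    -- `h'(s) = 0` has the unique root `s = 0`
    (hroot : ∀ s : ℝ, deriv (hfun ρ) s = 0 ↔ s = 0)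
    (hk : 2 ≤ k)
    (hder : ∀ i : ℕ, i ≤ 2 * k - 1 → iteratedDeriv i (hfun ρ) 0 = 0)
    (hpos : 0 < iteratedDeriv (2 * k) (hfun ρ) 0)
    -- `c₁` is the normalizing constant of the density of `Y`
    (hc₁ : (∫ y : ℝ, c₁ * Real.exp (-(iteratedDeriv (2 * k) (hfun ρ) 0 * y ^ (2 * k)
        / (Nat.factorial (2 * k))))) = 1) :
    ∃ C : ℝ, 0 < C ∧ ∀ n : ℕ, 1 ≤ n → ∀ z : ℝ,
      |(cwMeasure ρ n {x | (n : ℝ) ^ ((1 : ℝ) / (2 * (k : ℝ))) * ((∑ i, x i) / n) ≤ z}).toReal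
          - (∫ y in Set.Iic z, c₁ * Real.exp (-(iteratedDeriv (2 * k) (hfun ρ) 0 * y ^ (2 * k)
              / (Nat.factorial (2 * k)))))|
        ≤ C * (n : ℝ) ^ (-(1 : ℝ) / (k : ℝ)) :=
  stmt_5_general ρ L k c₁ hL
    (fun _ => CurieWeiss.hfun_pos (CurieWeiss.ae_abs_le_of_measure_Icc_eq_one hL)
      fun s => (hroot s).mp) hk
    (fun i hi => hder i (by lia)) hpos (CurieWeiss.iteratedDeriv_hfun_zero_of_odd hsym ⟨k, rfl⟩) hc₁
end
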